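/- arXiv:1811.03591 — 4 statements merged into one kernel-verified Lean document; each statement's English description precedes it below -/
import Mathlib

section
/- There exist a constant C > 0 and ε₀ ∈ (0,1) such that for every ε ∈ (0, ε₀) the following holds. Let X ⊆ ℝ be an arbitrary set and f : X → ℝ a map such that (1 − ε)|x₁ − x₂| ≤ |f(x₁) − f(x₂)| ≤ (1 + ε)|x₁ − x₂| for all x₁, x₂ ∈ X. Then there exists a map h : ℝ → ℝ² such that h(x) = (f(x), 0) for every x ∈ X, and (1 − C/log²(1/ε))·|u − v| ≤ ‖h(u) − h(v)‖ ≤ (1 + C/log²(1/ε))·|u − v| for all u, v ∈ ℝ. -/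
/-- near-isometry on a set -/
def NearIso (ε : ℝ) (X : Set ℝ) (f : ℝ → ℝ) : Prop :=
  ∀ x₁ ∈ X, ∀ x₂ ∈ X,
    (1 - ε) * |x₁ - x₂| ≤ |f x₁ - f x₂| ∧ |f x₁ - f x₂| ≤ (1 + ε) * |x₁ - x₂|

lemma triple_sign {ε : ℝ} {X : Set ℝ} {f : ℝ → ℝ} (h0 : 0 < ε) (h1 : ε < 1 / 400)
    (hf : NearIso ε X f) {p q t : ℝ} (hp : p ∈ X) (hq : q ∈ X) (ht : t ∈ X)
    (h2 : 0 < (f p - f q) * (p - q)) (h3 : (f p - f t) * (p - t) < 0) :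
    |p - q| ≤ 2 * ε * |p - t| ∨ |p - t| ≤ 2 * ε * |p - q| := by
  obtain ⟨a1, a2⟩ := hf p hp q hq
  obtain ⟨b1, b2⟩ := hf p hp t ht
  obtain ⟨c1, c2⟩ := hf q hq t ht
  by_contra hcon
  push Not at hcon
  obtain ⟨d1, d2⟩ := hcon
  rcases pos_and_pos_or_neg_and_neg_of_mul_pos h2 with ⟨e1, e2⟩ | ⟨e1, e2⟩ <;>
  rcases mul_neg_iff.1 h3 with ⟨g1, g2⟩ | ⟨g1, g2⟩
  all_goals
    first
    | rw [abs_of_pos e2] at *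
    | rw [abs_of_neg e2] at *
    first
    | rw [abs_of_pos g2] at *
    | rw [abs_of_neg g2] at *
    first
    | rw [abs_of_pos e1] at *
    | rw [abs_of_neg e1] at *
    first
    | rw [abs_of_pos g1] at *
    | rw [abs_of_neg g1] at *
    rcases abs_cases (f q - f t) with ⟨k1, k2⟩ | ⟨k1, k2⟩ <;>
    rcases abs_cases (q - t) with ⟨l1, l2⟩ | ⟨l1, l2⟩ <;>
    rw [k1, l1] at c1 c2 <;> nlinarith

lemma nearIso_ne {ε : ℝ} {X : Set ℝ} {f : ℝ → ℝ} (h1 : ε < 1 / 400)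
    (hf : NearIso ε X f) {p q : ℝ} (hp : p ∈ X) (hq : q ∈ X) (hpq : p ≠ q) :
    (f p - f q) * (p - q) ≠ 0 := by
  have h := (hf p hp q hq).1
  have h2 : 0 < |p - q| := abs_pos.2 (sub_ne_zero.2 hpq)
  have h3 : 0 < |f p - f q| := by nlinarith
  exact mul_ne_zero (abs_pos.1 h3) (sub_ne_zero.2 hpq)

lemma pair_sep {ε : ℝ} {X : Set ℝ} {f : ℝ → ℝ} (h0 : 0 < ε) (h1 : ε < 1 / 400)
    (hf : NearIso ε X f) {x y x' y' : ℝ} (hx : x ∈ X) (hy : y ∈ X) (hx' : x' ∈ X) (hy' : y' ∈ X)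
    (h2 : 0 < (f x - f y) * (x - y)) (h3 : (f x' - f y') * (x' - y') < 0) :
    |x - y| ≤ 2 * ε * (|x - x'| + |x' - y'|) ∨ |x' - y'| ≤ 4 * ε * |x - y| ∨
      |x' - y'| ≤ 2 * ε * (|x - x'| + |x' - y'|) := by
  have hne : x' ≠ y' := by rintro rfl; simp at h3
  have hl : 0 < |x' - y'| := abs_pos.2 (sub_ne_zero.2 hne)
  -- the common vertex argument
  have key : ∀ w ∈ X, ∀ z ∈ X, |w - z| = |x' - y'| → (f w - f z) * (w - z) < 0 →
      |x - w| ≤ |x - x'| + |x' - y'| → |x' - y'| / 2 ≤ |x - w| →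
      |x - y| ≤ 2 * ε * (|x - x'| + |x' - y'|) ∨ |x' - y'| ≤ 4 * ε * |x - y| ∨
      |x' - y'| ≤ 2 * ε * (|x - x'| + |x' - y'|) := by
    intro w hw z hz hwz hs hle hge
    have hxw : x ≠ w := by
      rintro rfl
      simp at hge; linarith
    rcases lt_or_gt_of_ne (nearIso_ne h1 hf hx hw hxw) with h | h
    · rcases triple_sign h0 h1 hf hx hy hw h2 h with h' | h'
      · left; nlinarith
      · right; left; nlinarith
    · have h4 : 0 < (f w - f x) * (w - x) := by nlinarith
      rcases triple_sign h0 h1 hf hw hx hz h4 hs with h' | h'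
      · rw [hwz, abs_sub_comm] at h'; nlinarith
      · rw [hwz, abs_sub_comm w x] at h'
        right; right; nlinarith
  by_cases hc : |x' - y'| / 2 ≤ |x - x'|
  · exact key x' hx' y' hy' rfl h3 (by linarith) hc
  · have e1 : |x - y'| ≤ |x - x'| + |x' - y'| := abs_sub_le _ _ _
    have e2 : |x' - y'| ≤ |x' - x| + |x - y'| := abs_sub_le _ _ _
    rw [abs_sub_comm x' x] at e2
    exact key y' hy' x' hx' (abs_sub_comm _ _) (by nlinarith) e1 (by linarith)

open UpperHalfPlane in
/-- points of the half plane that see a pair of points of `X` with sign `σ` -/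
def Sset (X : Set ℝ) (f : ℝ → ℝ) (σ : ℝ) : Set ℍ :=
  {z | ∃ x ∈ X, ∃ y ∈ X, 0 < σ * ((f x - f y) * (x - y)) ∧ |z.re - x| ≤ |x - y| ∧
    |x - y| / 4 ≤ z.im ∧ z.im ≤ |x - y|}

open UpperHalfPlane in
lemma Sset_sep {ε : ℝ} {X : Set ℝ} {f : ℝ → ℝ} (h0 : 0 < ε) (h1 : ε < 1 / 400)
    (hf : NearIso ε X f) {z w : ℍ} (hz : z ∈ Sset X f 1) (hw : w ∈ Sset X f (-1)) :
    Real.log (1 / ε) / 2 ≤ dist z w := by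
  obtain ⟨x, hx, y, hy, hs, a1, a2, a3⟩ := hz
  obtain ⟨x', hx', y', hy', hs', b1, b2, b3⟩ := hw
  have hS := pair_sep h0 h1 hf hx hy hx' hy' (by linarith) (by linarith)
  have c1 := im_le_im_mul_exp_dist z w
  have c2 := im_le_im_mul_exp_dist w z
  have c3 := dist_coe_le z w
  have c4 := dist_coe_le w z
  rw [dist_comm w z] at c4 c2
  rw [dist_comm (w : ℂ) z] at c4
  have hre : |z.re - w.re| ≤ dist (z : ℂ) w := by
    rw [Complex.dist_eq]
    simpa using Complex.abs_re_le_norm ((z : ℂ) - w)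
  have hD := Real.add_one_le_exp (dist z w)
  have hD0 : 0 ≤ dist z w := dist_nonneg
  set D := dist z w
  have hE : 1 ≤ Real.exp D := by linarith
  set E := Real.exp D with hEdef
  have hzp := z.im_pos
  have hwp := w.im_pos
  have hxx : |x - x'| ≤ |x - z.re| + |z.re - w.re| + |w.re - x'| := by
    have := abs_sub_le x z.re x'
    have := abs_sub_le z.re w.re x'
    linarith
  rw [abs_sub_comm x z.re] at hxx
  generalize |x - y| = l at *
  generalize |x' - y'| = l' at *
  generalize |x - x'| = m at *
  generalize z.im = r at *
  generalize w.im = r' at *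
  have m1 : m + l' ≤ 9 * (l * E) := by
    have : r * E ≤ l * E := by gcongr
    nlinarith
  have m2 : m + l' ≤ 9 * (l' * E) := by
    have : r' * E ≤ l' * E := by gcongr
    nlinarith
  have hl : 0 < l := by linarith
  have hl' : 0 < l' := by linarith
  have hfin : 1 ≤ 18 * ε * E := by
    rcases hS with h | h | h
    · have : l * 1 ≤ l * (18 * ε * E) := by nlinarith
      exact le_of_mul_le_mul_left this hl
    · have : l ≤ 4 * (l' * E) := by nlinarith
      have : l' * 1 ≤ l' * (18 * ε * E) := by nlinarith [mul_pos h0 (mul_pos hl' (by linarith : 0 < E))]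
      exact le_of_mul_le_mul_left this hl'
    · have : l' * 1 ≤ l' * (18 * ε * E) := by nlinarith
      exact le_of_mul_le_mul_left this hl'
  have hsq : 1 / ε ≤ E ^ 2 := by
    rw [div_le_iff₀ h0]
    have : 1 ≤ (18 * ε * E) ^ 2 := one_le_pow₀ hfin
    nlinarith [mul_pos h0 (pow_pos (by linarith : 0 < E) 2)]
  have := Real.log_le_log (by positivity) hsq
  rw [Real.log_pow, hEdef, Real.log_exp] at this
  push_cast at this
  linarith

open UpperHalfPlane in
lemma exists_theta {ε : ℝ} {X : Set ℝ} {f : ℝ → ℝ} (h0 : 0 < ε) (h1 : ε < 1 / 400)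
    (hf : NearIso ε X f) {K : ℝ} (hK : K = 2 * Real.pi / Real.log (1 / ε)) :
    ∃ Θ : ℝ → ℝ → ℝ,
      (∀ x r s, 0 < r → 0 < s → |Θ x r - Θ x s| ≤ K * |Real.log r - Real.log s|) ∧
      (∀ x y r, 0 < r → |Θ x r - Θ y r| ≤ K * (|x - y| / r)) ∧
      (∀ x ∈ X, ∀ y ∈ X, x ≠ y → ∀ u r, |u - x| ≤ |x - y| → |x - y| / 4 ≤ r → r ≤ |x - y| →
        Real.sin (Θ u r) = 0 ∧
        f x - f y = |f x - f y| / |x - y| * (x - y) * Real.cos (Θ u r)) := by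
  classical
  have hlog : 0 < Real.log (1 / ε) := Real.log_pos (by rw [lt_div_iff₀ h0]; linarith)
  have hKpos : 0 < K := by rw [hK]; positivity
  set g : ℍ → ℝ := fun z => if z ∈ Sset X f 1 then 0 else Real.pi with hg
  have hpi : Real.pi = K * (Real.log (1 / ε) / 2) := by rw [hK]; field_simp
  have hdisj : ∀ z ∈ Sset X f (-1), z ∉ Sset X f 1 := by
    intro z hz hz'
    have := Sset_sep h0 h1 hf hz' hz
    rw [dist_self] at this; linarith
  have hlip : LipschitzOnWith (⟨K, hKpos.le⟩ : NNReal) g (Sset X f 1 ∪ Sset X f (-1)) := by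
    apply LipschitzOnWith.of_dist_le_mul
    intro z hz w hw
    change dist (g z) (g w) ≤ K * dist z w
    have hnn : 0 ≤ K * dist z w := by positivity
    rcases hz with hz | hz <;> rcases hw with hw | hw
    · simp [hg, hz, hw, hnn]
    · have := Sset_sep h0 h1 hf hz hw
      simp only [hg, hz, hdisj w hw, if_true, if_false, Real.dist_eq]
      rw [zero_sub, abs_neg, abs_of_pos Real.pi_pos]
      nlinarith
    · have := Sset_sep h0 h1 hf hw hz
      rw [dist_comm] at this
      simp only [hg, hw, hdisj z hz, if_true, if_false, Real.dist_eq]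
      rw [sub_zero, abs_of_pos Real.pi_pos]
      nlinarith
    · simp [hg, hdisj z hz, hdisj w hw, hnn]
  obtain ⟨G, hG, hGe⟩ := hlip.extend_real
  have hG' : ∀ z w, |G z - G w| ≤ K * dist z w := fun z w => by
    have := hG.dist_le_mul z w
    rwa [Real.dist_eq] at this
  refine ⟨fun u r => if hr : 0 < r then G ⟨⟨u, r⟩, hr⟩ else 0, ?_, ?_, ?_⟩
  · intro x r s hr hs
    simp only [hr, hs, dif_pos]
    refine (hG' _ _).trans (le_of_eq ?_)
    rw [UpperHalfPlane.dist_of_re_eq (by rfl), Real.dist_eq]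
    rfl
  · intro x y r hr
    simp only [hr, dif_pos]
    refine (hG' _ _).trans ?_
    gcongr
    refine (dist_le_dist_coe_div_sqrt _ _).trans (le_of_eq ?_)
    have e1 : (UpperHalfPlane.mk ⟨x, r⟩ hr).im = r := rfl
    have e2 : (UpperHalfPlane.mk ⟨y, r⟩ hr).im = r := rfl
    rw [e1, e2, Real.sqrt_mul_self hr.le]
    congr 1
    rw [Complex.dist_of_im_eq (by rfl), Real.dist_eq]
  · intro x hx y hy hxy u r k1 k2 k3
    have hl : 0 < |x - y| := abs_pos.2 (sub_ne_zero.2 hxy)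
    have hr : 0 < r := by linarith
    simp only [hr, dif_pos]
    have hp : |f x - f y| * |x - y| = |(f x - f y) * (x - y)| := (abs_mul _ _).symm
    have hq : |x - y| * |x - y| = (x - y) * (x - y) := abs_mul_abs_self _
    have hxy' : x - y ≠ 0 := sub_ne_zero.2 hxy
    have hform : |f x - f y| / |x - y| * (x - y) = |(f x - f y) * (x - y)| / (x - y) := by
      rw [← hp]
      field_simp
      rw [sq_abs]
    rw [hform]
    rcases lt_or_gt_of_ne (nearIso_ne h1 hf hx hy hxy) with h | h
    · have hm : (UpperHalfPlane.mk ⟨u, r⟩ hr) ∈ Sset X f (-1) :=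
        ⟨x, hx, y, hy, by linarith, k1, k2, k3⟩
      rw [← hGe (Or.inr hm)]
      simp only [hg, hdisj _ hm, if_false, Real.sin_pi, Real.cos_pi, true_and]
      rw [abs_of_neg h]; field_simp
    · have hm : (UpperHalfPlane.mk ⟨u, r⟩ hr) ∈ Sset X f 1 :=
        ⟨x, hx, y, hy, by linarith, k1, k2, k3⟩
      rw [← hGe (Or.inl hm)]
      simp only [hg, hm, if_true, Real.sin_zero, Real.cos_zero, true_and]
      rw [abs_of_pos h]; field_simp

lemma rot_aux {A B κ T τ s1 s2 s3 θ1 θ2 θ3 θ0 : ℝ} (hA : 0 ≤ A) (hB : 0 ≤ B) (hκ : 0 ≤ κ)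
    (hT : |τ| = T) (hsum : |s1 + s2 + s3 - τ| ≤ B * κ ^ 2 * T)
    (a1 : |s1| * |θ1 - θ0| ≤ A * κ * T) (b1 : |s1| * (θ1 - θ0) ^ 2 ≤ A * κ ^ 2 * T)
    (a2 : |s2| * |θ2 - θ0| ≤ A * κ * T) (b2 : |s2| * (θ2 - θ0) ^ 2 ≤ A * κ ^ 2 * T)
    (a3 : |s3| * |θ3 - θ0| ≤ A * κ * T) (b3 : |s3| * (θ3 - θ0) ^ 2 ≤ A * κ ^ 2 * T) :
    |√((s1 * Real.cos θ1 + s2 * Real.cos θ2 + s3 * Real.cos θ3) ^ 2 +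
      (s1 * Real.sin θ1 + s2 * Real.sin θ2 + s3 * Real.sin θ3) ^ 2) - T|
      ≤ (B + 3 * A / 2 + 9 * A ^ 2 / 2) * κ ^ 2 * T := by
  have hT0 : 0 ≤ T := hT ▸ abs_nonneg _
  have hc : ∀ s φ : ℝ, |s| * φ ^ 2 ≤ A * κ ^ 2 * T → |s * Real.cos φ - s| ≤ A / 2 * κ ^ 2 * T := by
    intro s φ h
    have e : |s * Real.cos φ - s| = |s| * (1 - Real.cos φ) := by
      rw [show s * Real.cos φ - s = -(s * (1 - Real.cos φ)) by ring, abs_neg, abs_mul,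
        abs_of_nonneg (sub_nonneg.2 (Real.cos_le_one _))]
    rw [e]
    have := Real.one_sub_sq_div_two_le_cos (x := φ)
    have : |s| * (1 - Real.cos φ) ≤ |s| * (φ ^ 2 / 2) := by gcongr; linarith
    linarith
  have hs : ∀ s φ : ℝ, |s| * |φ| ≤ A * κ * T → |s * Real.sin φ| ≤ A * κ * T := by
    intro s φ h
    rw [abs_mul]
    refine le_trans ?_ h
    exact mul_le_mul_of_nonneg_left Real.abs_sin_le_abs (abs_nonneg _)
  have c1 := hc _ _ b1
  have c2 := hc _ _ b2
  have c3 := hc _ _ b3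
  have d1 := hs _ _ a1
  have d2 := hs _ _ a2
  have d3 := hs _ _ a3
  have hrot : (s1 * Real.cos θ1 + s2 * Real.cos θ2 + s3 * Real.cos θ3) ^ 2 +
      (s1 * Real.sin θ1 + s2 * Real.sin θ2 + s3 * Real.sin θ3) ^ 2 =
      (s1 * Real.cos (θ1 - θ0) + s2 * Real.cos (θ2 - θ0) + s3 * Real.cos (θ3 - θ0)) ^ 2 +
      (s1 * Real.sin (θ1 - θ0) + s2 * Real.sin (θ2 - θ0) + s3 * Real.sin (θ3 - θ0)) ^ 2 := by
    simp only [Real.cos_sub, Real.sin_sub]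
    have := Real.sin_sq_add_cos_sq θ0
    generalize Real.cos θ0 = c at *
    generalize Real.sin θ0 = s at *
    linear_combination (-((s1 * Real.cos θ1 + s2 * Real.cos θ2 + s3 * Real.cos θ3) ^ 2 +
      (s1 * Real.sin θ1 + s2 * Real.sin θ2 + s3 * Real.sin θ3) ^ 2)) * this
  rw [hrot]
  set P := s1 * Real.cos (θ1 - θ0) + s2 * Real.cos (θ2 - θ0) + s3 * Real.cos (θ3 - θ0) with hP
  set Q := s1 * Real.sin (θ1 - θ0) + s2 * Real.sin (θ2 - θ0) + s3 * Real.sin (θ3 - θ0) with hQ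
  have hPτ : |P - τ| ≤ (B + 3 * A / 2) * κ ^ 2 * T := by
    have e : P - τ = (s1 * Real.cos (θ1 - θ0) - s1) + (s2 * Real.cos (θ2 - θ0) - s2) +
        (s3 * Real.cos (θ3 - θ0) - s3) + (s1 + s2 + s3 - τ) := by rw [hP]; ring
    rw [e]
    have t1 := abs_add_le ((s1 * Real.cos (θ1 - θ0) - s1) + (s2 * Real.cos (θ2 - θ0) - s2) +
        (s3 * Real.cos (θ3 - θ0) - s3)) (s1 + s2 + s3 - τ)
    have t2 := abs_add_three (s1 * Real.cos (θ1 - θ0) - s1) (s2 * Real.cos (θ2 - θ0) - s2)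
        (s3 * Real.cos (θ3 - θ0) - s3)
    linarith
  have hQ' : |Q| ≤ 3 * A * κ * T := by
    have t2 := abs_add_three (s1 * Real.sin (θ1 - θ0)) (s2 * Real.sin (θ2 - θ0))
        (s3 * Real.sin (θ3 - θ0))
    linarith
  have hlow : |P| ≤ √(P ^ 2 + Q ^ 2) := Real.abs_le_sqrt (by nlinarith)
  have hPT : |(|P| - T)| ≤ (B + 3 * A / 2) * κ ^ 2 * T := by
    rw [← hT]; exact (abs_abs_sub_abs_le _ _).trans (hT ▸ hPτ)
  rw [abs_le] at hPT
  have hx : 0 ≤ 9 * A ^ 2 / 2 * κ ^ 2 * T := by positivity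
  rw [abs_le]
  refine ⟨by linarith, ?_⟩
  rw [sub_le_iff_le_add]
  apply Real.sqrt_le_iff.2
  refine ⟨by positivity, ?_⟩
  have h1 : P ^ 2 ≤ (T + (B + 3 * A / 2) * κ ^ 2 * T) ^ 2 := by
    rw [← sq_abs P]; gcongr; linarith
  have h2 : Q ^ 2 ≤ (3 * A * κ * T) ^ 2 := by
    rw [← sq_abs Q]; gcongr
  have hy : 0 ≤ (B + 3 * A / 2) * κ ^ 2 * T := by positivity
  have e1 : (3 * A * κ * T) ^ 2 = 2 * (9 * A ^ 2 / 2 * κ ^ 2 * T) * T := by ring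
  have e2 : (B + 3 * A / 2 + 9 * A ^ 2 / 2) * κ ^ 2 * T + T =
    T + (B + 3 * A / 2) * κ ^ 2 * T + 9 * A ^ 2 / 2 * κ ^ 2 * T := by ring
  rw [e2]
  rw [e1] at h2
  generalize 9 * A ^ 2 / 2 * κ ^ 2 * T = b at *
  generalize (B + 3 * A / 2) * κ ^ 2 * T = a at *
  have z1 := mul_nonneg hx hy
  have z2 := mul_nonneg hx hx
  linear_combination h1 + h2 + 2 * z1 + z2

lemma log_bound {x : ℝ} (hx : 0 < x) (hx' : x ≤ 17) :
    x * (|Real.log x| + 8) ^ 2 ≤ 30000 ∧ x * (|Real.log x| + 8) ≤ 30000 := by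
  have h1 : |Real.log x| ≤ 2 / √x + 17 := by
    have hs : 0 < √x := Real.sqrt_pos.2 hx
    have hl : Real.log x = 2 * Real.log (√x) := by
      rw [Real.log_sqrt hx.le]; ring
    rw [abs_le]
    constructor
    · have := Real.one_sub_inv_le_log_of_pos hs
      have e : 2 / √x = 2 * (√x)⁻¹ := div_eq_mul_inv _ _
      linarith
    · have := Real.log_le_sub_one_of_pos hx
      have : 0 ≤ 2 / √x := by positivity
      linarith
  have hs : 0 < √x := Real.sqrt_pos.2 hx
  have hsq : √x ^ 2 = x := Real.sq_sqrt hx.le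
  have h2 : √x * (|Real.log x| + 8) ≤ 2 + 25 * √x := by
    have : √x * (|Real.log x| + 8) ≤ √x * (2 / √x + 17 + 8) := by gcongr
    refine this.trans (le_of_eq ?_)
    field_simp; ring
  have h5 : √x ≤ 5 := by rw [Real.sqrt_le_left (by norm_num)]; linarith
  have h0 : 0 ≤ √x * (|Real.log x| + 8) := by positivity
  have h3 : x * (|Real.log x| + 8) ^ 2 = (√x * (|Real.log x| + 8)) ^ 2 := by
    rw [mul_pow, hsq]
  have h4 : x * (|Real.log x| + 8) = √x * (√x * (|Real.log x| + 8)) := by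
    rw [← mul_assoc, ← sq, hsq]
  have h6 : √x * (|Real.log x| + 8) ≤ 127 := by linarith
  constructor
  · rw [h3]; nlinarith
  · rw [h4]; nlinarith

lemma term_bound {K T t s φ : ℝ} (hK : 0 ≤ K) (hT : 0 < T) (ht : |t| ≤ 17 * T)
    (hs : |s| ≤ 2 * |t|) (hφ : t ≠ 0 → |φ| ≤ K * (|Real.log |t| - Real.log T| + 8)) :
    |s| * |φ| ≤ 60000 * K * T ∧ |s| * φ ^ 2 ≤ 60000 * K ^ 2 * T := by
  by_cases h : t = 0
  · have : s = 0 := by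
      rw [h, abs_zero, mul_zero] at hs
      exact abs_nonpos_iff.1 hs
    rw [this]; simp; constructor <;> positivity
  have htp : 0 < |t| := abs_pos.2 h
  have hφ := hφ h
  rw [← Real.log_div htp.ne' hT.ne'] at hφ
  obtain ⟨b1, b2⟩ := log_bound (x := |t| / T) (by positivity) (by rwa [div_le_iff₀ hT])
  set Y := |Real.log (|t| / T)| + 8 with hY
  have hY0 : 0 ≤ Y := by positivity
  rw [div_mul_eq_mul_div, div_le_iff₀ hT] at b1 b2
  constructor
  · calc |s| * |φ| ≤ (2 * |t|) * (K * Y) := by gcongr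
      _ = 2 * K * (|t| * Y) := by ring
      _ ≤ 2 * K * (30000 * T) := by gcongr
      _ = _ := by ring
  · rw [← sq_abs φ]
    calc |s| * |φ| ^ 2 ≤ (2 * |t|) * (K * Y) ^ 2 := by gcongr
      _ = 2 * K ^ 2 * (|t| * Y ^ 2) := by ring
      _ ≤ 2 * K ^ 2 * (30000 * T) := by gcongr
      _ = _ := by ring

lemma exists_nearest {ε : ℝ} (X : Set ℝ) (f : ℝ → ℝ) (hε : 0 ≤ ε) (hX : IsClosed X)
    (hne : X.Nonempty) (hf : ∀ x₁ ∈ X, ∀ x₂ ∈ X,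
    (1 - ε) * |x₁ - x₂| ≤ |f x₁ - f x₂| ∧ |f x₁ - f x₂| ≤ (1 + ε) * |x₁ - x₂|) :
    ∃ n l : ℝ → ℝ, (∀ u, n u ∈ X) ∧ (∀ u, ∀ x ∈ X, |u - n u| ≤ |u - x|) ∧
      (∀ u, |l u - 1| ≤ ε) ∧
      ∀ u v, u < v → (∀ x ∈ X, ¬ (u ≤ x ∧ x ≤ v)) → l u = l v ∧
        (n u = n v ∨ (n u < u ∧ v < n v ∧ l u = |f (n u) - f (n v)| / |n u - n v|)) := by
  classical
  have hn : ∀ u, ∃ a ∈ X, ∀ x ∈ X, |u - a| ≤ |u - x| := by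
    intro u
    obtain ⟨a, ha, h⟩ := hX.exists_infDist_eq_dist hne u
    refine ⟨a, ha, fun x hx => ?_⟩
    rw [← Real.dist_eq, ← Real.dist_eq, ← h]
    exact Metric.infDist_le_dist_of_mem hx
  choose n hnX hnn using hn
  set q : ℝ → ℝ := fun u => |f (sSup (X ∩ Set.Iic u)) - f (sInf (X ∩ Set.Ici u))| /
    |sSup (X ∩ Set.Iic u) - sInf (X ∩ Set.Ici u)| with hq
  refine ⟨n, fun u => if |q u - 1| ≤ ε then q u else 1, hnX, hnn, ?_, ?_⟩
  · intro u
    dsimp only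
    split_ifs with h
    · exact h
    · simpa using hε
  · intro u v huv hno
    have e1 : X ∩ Set.Iic u = X ∩ Set.Iic v := by
      ext x
      simp only [Set.mem_inter_iff, Set.mem_Iic]
      refine ⟨fun h => ⟨h.1, by linarith [h.2]⟩, fun h => ⟨h.1, ?_⟩⟩
      by_contra h'
      exact hno x h.1 ⟨by linarith, h.2⟩
    have e2 : X ∩ Set.Ici u = X ∩ Set.Ici v := by
      ext x
      simp only [Set.mem_inter_iff, Set.mem_Ici]
      refine ⟨fun h => ⟨h.1, ?_⟩, fun h => ⟨h.1, by linarith [h.2]⟩⟩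
      by_contra h'
      exact hno x h.1 ⟨h.2, by linarith⟩
    have hqq : q u = q v := by simp only [hq, e1, e2]
    refine ⟨by simp only [hqq], ?_⟩
    by_cases hEq : n u = n v
    · exact Or.inl hEq
    right
    have hu1 : n u < u ∨ v < n u := by
      by_contra! h
      exact hno _ (hnX u) h
    have hv1 : n v < u ∨ v < n v := by
      by_contra! h
      exact hno _ (hnX v) h
    have k1 := hnn u (n v) (hnX v)
    have k2 := hnn v (n u) (hnX u)
    have hmain : n u < u ∧ v < n v := by
      rcases hu1 with h | h <;> rcases hv1 with h' | h'
      · exfalso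
        rw [abs_of_pos (by linarith), abs_of_pos (by linarith)] at k1 k2
        exact hEq (by linarith)
      · exact ⟨h, h'⟩
      · exfalso
        rw [abs_of_neg (by linarith), abs_of_pos (by linarith)] at k1
        rw [abs_of_pos (by linarith), abs_of_neg (by linarith)] at k2
        linarith
      · exfalso
        rw [abs_of_neg (by linarith), abs_of_neg (by linarith)] at k1 k2
        exact hEq (by linarith)
    obtain ⟨hu, hv⟩ := hmain
    have g1 : sSup (X ∩ Set.Iic u) = n u := by
      apply IsGreatest.csSup_eq
      refine ⟨⟨hnX u, hu.le⟩, fun x hx => ?_⟩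
      have := hnn u x hx.1
      rw [abs_of_pos (by linarith), abs_of_nonneg (by linarith [hx.2.out])] at this
      linarith
    have g2 : sInf (X ∩ Set.Ici u) = n v := by
      rw [e2]
      apply IsLeast.csInf_eq
      refine ⟨⟨hnX v, hv.le⟩, fun x hx => ?_⟩
      have := hnn v x hx.1
      rw [abs_of_neg (by linarith), abs_of_nonpos (by linarith [hx.2.out])] at this
      linarith
    have hqu : q u = |f (n u) - f (n v)| / |n u - n v| := by simp only [hq, g1, g2]
    have hp : 0 < |n u - n v| := abs_pos.2 (sub_ne_zero.2 hEq)
    obtain ⟨m1, m2⟩ := hf _ (hnX u) _ (hnX v)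
    have hb : |q u - 1| ≤ ε := by
      rw [hqu, abs_le]
      constructor
      · rw [neg_le_sub_iff_le_add, ← sub_le_iff_le_add, le_div_iff₀ hp]; linarith
      · rw [sub_le_iff_le_add, div_le_iff₀ hp]; linarith
    refine ⟨hu, hv, ?_⟩
    dsimp only
    rw [if_pos hb, hqu]

lemma abs_log_sub_le {m r : ℝ} (hm : 0 < m) (hr : 0 < r) (h : |m - r| ≤ m / 2) :
    |Real.log m - Real.log r| ≤ 2 * |m - r| / m := by
  rw [← Real.log_div hm.ne' hr.ne']
  have h2 := Real.one_sub_inv_le_log_of_pos (x := m / r) (by positivity)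
  have h1 := Real.log_le_sub_one_of_pos (x := m / r) (by positivity)
  rw [inv_div] at h2
  have e1 : m / r - 1 = (m - r) / r := by field_simp
  have e2 : 1 - r / m = (m - r) / m := by field_simp
  rw [e1] at h1
  rw [e2] at h2
  have hr2 : m / 2 ≤ r := by linarith [(abs_le.1 h).2]
  have k1 : (m - r) / r ≤ 2 * |m - r| / m := by
    rw [div_le_div_iff₀ hr hm]
    have := le_abs_self (m - r)
    have := abs_nonneg (m - r)
    nlinarith
  have k2 : -(2 * |m - r| / m) ≤ (m - r) / m := by
    rw [← neg_div, div_le_div_iff_of_pos_right hm]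
    have := neg_abs_le (m - r)
    have := abs_nonneg (m - r)
    linarith
  rw [abs_le]
  constructor <;> linarith

set_option maxHeartbeats 2000000 in
lemma closed_case {ε : ℝ} {X : Set ℝ} {f : ℝ → ℝ} (h0 : 0 < ε) (h1 : ε < 1 / 400)
    (hX : IsClosed X) (hne : X.Nonempty) (hf : NearIso ε X f) {K : ℝ}
    (hK : K = 2 * Real.pi / Real.log (1 / ε)) (hεK : ε ≤ K ^ 2) :
    ∃ p q : ℝ → ℝ, (∀ x ∈ X, p x = f x ∧ q x = 0) ∧
      ∀ u v, u < v → |√((p u - p v) ^ 2 + (q u - q v) ^ 2) - (|u - v|)| ≤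
        (33 + 3 * 60000 / 2 + 9 * 60000 ^ 2 / 2) * K ^ 2 * |u - v| := by
  have hlog : 0 < Real.log (1 / ε) := Real.log_pos (by rw [lt_div_iff₀ h0]; linarith)
  have hKpos : 0 < K := by rw [hK]; positivity
  obtain ⟨Θ, hΘ1, hΘ2, hΘ3⟩ := exists_theta h0 h1 hf hK
  obtain ⟨n, l, hnX, hnn, hl, hgap⟩ := exists_nearest X f h0.le hX hne hf
  refine ⟨fun u => f (n u) + l u * (u - n u) * Real.cos (Θ u |u - n u|),
    fun u => l u * (u - n u) * Real.sin (Θ u |u - n u|), ?_, ?_⟩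
  · intro x hx
    have := hnn x x hx
    have hxn : x = n x := by
      rw [sub_self, abs_zero] at this
      exact sub_eq_zero.1 (abs_nonpos_iff.1 this)
    dsimp only
    rw [← hxn]; simp
  intro u v huv
  dsimp only
  have hT : 0 < |u - v| := abs_pos.2 (by linarith)
  have hlu := hl u
  have hlv := hl v
  have hl2 : ∀ w, |l w| ≤ 2 := fun w => by
    have := abs_le.1 (hl w)
    rw [abs_le]; constructor <;> linarith
  have hlt : ∀ w t : ℝ, |l w * t| ≤ 2 * |t| := fun w t => by
    rw [abs_mul]; exact mul_le_mul_of_nonneg_right (hl2 w) (abs_nonneg _)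
  by_cases hG : |u - n u| ≤ 8 * |u - v| ∧ |v - n v| ≤ 8 * |u - v|
  · -- global case
    obtain ⟨hGu, hGv⟩ := hG
    have haX := hnX u
    have hcX := hnX v
    set a := n u
    set c := n v
    set T := |u - v| with hTdef
    have hac : |a - c| ≤ 17 * T := by
      have t1 := abs_sub_le a u c
      have t2 := abs_sub_le u v c
      rw [abs_sub_comm a u] at t1
      linarith
    obtain ⟨m1, m2⟩ := hf a haX c hcX
    set s2 := |f a - f c| / |a - c| * (a - c) with hs2
    have hs2cos : f a - f c = s2 * Real.cos (Θ a |a - c|) ∧ s2 * Real.sin (Θ a |a - c|) = 0 := by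
      by_cases hEq : a = c
      · rw [hs2, hEq]; simp
      · obtain ⟨k1, k2⟩ := hΘ3 a haX c hcX hEq a |a - c| (by simp)
          (by linarith [abs_nonneg (a - c)]) le_rfl
        exact ⟨k2, by rw [k1, mul_zero]⟩
    have hs2d : |s2 - (a - c)| ≤ ε * |a - c| := by
      by_cases hEq : a = c
      · rw [hs2, hEq]; simp
      · have hp : 0 < |a - c| := abs_pos.2 (sub_ne_zero.2 hEq)
        have e : s2 - (a - c) = (|f a - f c| / |a - c| - 1) * (a - c) := by rw [hs2]; ring
        rw [e, abs_mul]
        apply mul_le_mul_of_nonneg_right _ hp.le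
        rw [abs_le]
        constructor
        · rw [neg_le_sub_iff_le_add, ← sub_le_iff_le_add, le_div_iff₀ hp]; linarith
        · rw [sub_le_iff_le_add, div_le_iff₀ hp]; linarith
    have hs2b : |s2| ≤ 2 * |a - c| := by
      have := abs_sub_abs_le_abs_sub s2 (a - c)
      have := abs_nonneg (a - c)
      nlinarith
    have b1 := term_bound (K := K) (T := T) (t := u - a) (s := l u * (u - a))
      (φ := Θ u |u - a| - Θ u T) hKpos.le hT (by linarith) (hlt u _) (by
        intro ht
        refine (hΘ1 u _ _ (abs_pos.2 ht) hT).trans ?_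
        gcongr; linarith)
    have b2 := term_bound (K := K) (T := T) (t := a - c) (s := s2)
      (φ := Θ a |a - c| - Θ u T) hKpos.le hT hac hs2b (by
        intro ht
        have k1 := hΘ1 a _ _ (abs_pos.2 ht) hT
        have k2 := hΘ2 a u T hT
        have k3 : |a - u| / T ≤ 8 := by rw [div_le_iff₀ hT, abs_sub_comm]; exact hGu
        have k4 := abs_sub_le (Θ a |a - c|) (Θ a T) (Θ u T)
        have k5 : K * (|a - u| / T) ≤ K * 8 := by gcongr
        linarith)
    have b3 := term_bound (K := K) (T := T) (t := c - v) (s := l v * (c - v))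
      (φ := Θ v |v - c| - Θ u T) hKpos.le hT (by rw [abs_sub_comm]; linarith) (hlt v _) (by
        intro ht
        rw [abs_sub_comm c v]
        have k1 := hΘ1 v |v - c| _ (by rw [abs_sub_comm]; exact abs_pos.2 ht) hT
        have k2 := hΘ2 v u T hT
        have k3 : |v - u| / T ≤ 8 := by
          rw [div_le_iff₀ hT, abs_sub_comm]; linarith
        have k4 := abs_sub_le (Θ v |v - c|) (Θ v T) (Θ u T)
        have k5 : K * (|v - u| / T) ≤ K * 8 := by gcongr
        linarith)
    have hsum : |l u * (u - a) + s2 + l v * (c - v) - (u - v)| ≤ 33 * K ^ 2 * T := by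
      have e : l u * (u - a) + s2 + l v * (c - v) - (u - v) =
        (l u - 1) * (u - a) + (s2 - (a - c)) + (l v - 1) * (c - v) := by ring
      rw [e]
      refine (abs_add_three _ _ _).trans ?_
      rw [abs_mul, abs_mul, abs_sub_comm c v]
      have q1 : |l u - 1| * |u - a| ≤ ε * (8 * T) := by gcongr
      have q2 : |l v - 1| * |v - c| ≤ ε * (8 * T) := by gcongr
      have q3 : ε * |a - c| ≤ ε * (17 * T) := by gcongr
      have q4 : ε * T ≤ K ^ 2 * T := by gcongr
      linarith
    have hfin := rot_aux (by norm_num) (by norm_num) hKpos.le hTdef.symm hsum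
      b1.1 b1.2 b2.1 b2.2 b3.1 b3.2
    have eP : f a + l u * (u - a) * Real.cos (Θ u |u - a|) -
        (f c + l v * (v - c) * Real.cos (Θ v |v - c|)) =
        l u * (u - a) * Real.cos (Θ u |u - a|) + s2 * Real.cos (Θ a |a - c|) +
          l v * (c - v) * Real.cos (Θ v |v - c|) := by
      rw [← hs2cos.1]; ring
    have eQ : l u * (u - a) * Real.sin (Θ u |u - a|) - l v * (v - c) * Real.sin (Θ v |v - c|) =
        l u * (u - a) * Real.sin (Θ u |u - a|) + s2 * Real.sin (Θ a |a - c|) +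
          l v * (c - v) * Real.sin (Θ v |v - c|) := by
      rw [hs2cos.2]; ring
    rw [eP, eQ]
    exact hfin
  -- same gap
  have hno : ∀ x ∈ X, ¬ (u ≤ x ∧ x ≤ v) := by
    intro x hx hxx
    apply hG
    have k1 := hnn u x hx
    have k2 := hnn v x hx
    rw [abs_of_nonpos (by linarith : u - x ≤ 0)] at k1
    rw [abs_of_nonneg (by linarith : 0 ≤ v - x)] at k2
    rw [abs_of_neg (by linarith : u - v < 0)]
    constructor <;> linarith
  obtain ⟨hll, hcase⟩ := hgap u v huv hno
  rcases hcase with hEq | ⟨hu, hv, hlq⟩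
  · -- same nearest point
    rw [← hEq, ← hll]
    rw [← hEq] at hG
    set a := n u
    set T := |u - v| with hTdef
    have hTvu : T = v - u := by rw [hTdef, abs_of_neg (by linarith)]; ring
    have hside : |(|v - a| - |u - a|)| = T := by
      rcases lt_or_ge a u with h | h
      · rw [abs_of_pos (by linarith : 0 < v - a), abs_of_pos (by linarith : 0 < u - a),
          abs_of_pos (by linarith)]; linarith
      · have : v < a := by
          by_contra h'
          exact hno a (hnX u) ⟨h, by linarith⟩
        rw [abs_of_neg (by linarith : v - a < 0), abs_of_neg (by linarith : u - a < 0),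
          abs_of_neg (by linarith)]; linarith
    have hbig : 7 * T ≤ |u - a| ∧ 7 * T ≤ |v - a| := by
      have := abs_le.1 hside.le
      rw [not_and_or, not_le, not_le] at hG
      rcases hG with h | h <;> constructor <;> linarith
    obtain ⟨hbu, hbv⟩ := hbig
    have hm : 0 < |v - a| := by linarith
    have hr : 0 < |u - a| := by linarith
    have k1 := hΘ1 v |v - a| |u - a| hm hr
    have k2 := hΘ2 v u |u - a| hr
    have k3 := abs_log_sub_le hm hr (by rw [hside]; linarith)
    rw [hside] at k3
    have k4 : |v - u| / |u - a| ≤ 2 * T / |v - a| := by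
      rw [abs_sub_comm v u, div_le_div_iff₀ hr hm]
      have := abs_le.1 hside.le
      nlinarith
    have k5 := abs_sub_le (Θ v |v - a|) (Θ v |u - a|) (Θ u |u - a|)
    have k6 : |Θ v (|v - a|) - Θ u (|u - a|)| ≤ 4 * K * T / |v - a| := by
      have q1 : K * |Real.log (|v - a|) - Real.log (|u - a|)| ≤ K * (2 * T / |v - a|) := by gcongr
      have q2 : K * (|v - u| / |u - a|) ≤ K * (2 * T / |v - a|) := by gcongr
      have q3 : 4 * K * T / |v - a| = K * (2 * T / |v - a|) + K * (2 * T / |v - a|) := by ring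
      linarith
    set φ := Θ v |v - a| - Θ u |u - a| with hφ
    have k7 : |v - a| * |φ| ≤ 4 * K * T := by
      rw [le_div_iff₀ hm] at k6; linarith
    have hs3 : |l u * (a - v)| ≤ 2 * |v - a| := by rw [abs_sub_comm v a]; exact hlt u _
    have b3 : |l u * (a - v)| * |φ| ≤ 60000 * K * T := by
      have : |l u * (a - v)| * |φ| ≤ 2 * |v - a| * |φ| := by gcongr
      have : 0 < K * T := by positivity
      linarith
    have b4 : |l u * (a - v)| * φ ^ 2 ≤ 60000 * K ^ 2 * T := by
      have q1 : |l u * (a - v)| * φ ^ 2 ≤ 2 * |v - a| * φ ^ 2 := by gcongr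
      have q2 : |φ| ≤ K := by
        refine k6.trans ?_
        rw [div_le_iff₀ hm]
        have : K * (7 * T) ≤ K * |v - a| := by gcongr
        have : 0 < K * T := by positivity
        linarith
      have q3 : |v - a| * φ ^ 2 = (|v - a| * |φ|) * |φ| := by rw [← sq_abs φ]; ring
      have q4 : (|v - a| * |φ|) * |φ| ≤ 4 * K * T * K := by gcongr
      have : 0 < K ^ 2 * T := by positivity
      linarith
    have hsum : |l u * (u - a) + 0 + l u * (a - v) - (u - v)| ≤ 33 * K ^ 2 * T := by
      have e : l u * (u - a) + 0 + l u * (a - v) - (u - v) = (l u - 1) * (u - v) := by ring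
      rw [e, abs_mul]
      have q1 : |l u - 1| * |u - v| ≤ K ^ 2 * T := by gcongr; linarith
      have : 0 < K ^ 2 * T := by positivity
      linarith
    have hz1 : 0 ≤ 60000 * K * T := by positivity
    have hz2 : 0 ≤ 60000 * K ^ 2 * T := by positivity
    have hfin := rot_aux (θ1 := Θ u |u - a|) (θ2 := Θ u |u - a|) (θ3 := Θ v |v - a|)
      (θ0 := Θ u |u - a|) (by norm_num) (by norm_num) hKpos.le hTdef.symm hsum
      (by simpa using hz1) (by simpa using hz2) (by simpa using hz1) (by simpa using hz2) b3 b4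
    have eP : f a + l u * (u - a) * Real.cos (Θ u |u - a|) -
        (f a + l u * (v - a) * Real.cos (Θ v |v - a|)) =
        l u * (u - a) * Real.cos (Θ u |u - a|) + 0 * Real.cos (Θ u |u - a|) +
          l u * (a - v) * Real.cos (Θ v |v - a|) := by ring
    have eQ : l u * (u - a) * Real.sin (Θ u |u - a|) - l u * (v - a) * Real.sin (Θ v |v - a|) =
        l u * (u - a) * Real.sin (Θ u |u - a|) + 0 * Real.sin (Θ u |u - a|) +
          l u * (a - v) * Real.sin (Θ v |v - a|) := by ring
    rw [eP, eQ]
    exact hfin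
  · -- middle of a gap
    have haX := hnX u
    have hbX := hnX v
    have n1 := hnn u (n v) hbX
    have n2 := hnn v (n u) haX
    rw [← hll]
    set a := n u
    set b := n v
    have hab : |a - b| = b - a := by rw [abs_of_neg (by linarith)]; ring
    have hua : |u - a| = u - a := abs_of_pos (by linarith)
    have hvb : |v - b| = b - v := by rw [abs_of_neg (by linarith)]; ring
    have hTe : |u - v| = v - u := by rw [abs_of_neg (by linarith)]; ring
    rw [hua, abs_of_neg (by linarith)] at n1
    rw [hvb, abs_of_pos (by linarith)] at n2
    rw [not_and_or, not_le, not_le, hua, hvb, hTe] at hG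
    have hsmall : 16 * (v - u) ≤ b - a := by rcases hG with h | h <;> linarith
    obtain ⟨c1, c2⟩ := hΘ3 a haX b hbX (by linarith) u |u - a|
      (by linarith) (by linarith) (by linarith)
    obtain ⟨d1, d2⟩ := hΘ3 b hbX a haX (by linarith) v |v - b|
      (by rw [abs_sub_comm b a]; linarith) (by rw [abs_sub_comm b a]; linarith)
      (by rw [abs_sub_comm b a]; linarith)
    rw [abs_sub_comm b a, abs_sub_comm (f b) (f a), ← hlq] at d2
    rw [← hlq] at c2
    rw [c1, d1]
    set σ := Real.cos (Θ u |u - a|) with hσ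
    set σ' := Real.cos (Θ v |v - b|)
    have hlpos : 0 < l u := by linarith [(abs_le.1 hlu).1]
    have hσσ : σ' = σ := by
      have e : l u * (b - a) * σ' = l u * (b - a) * σ := by linarith
      have hp : 0 < l u * (b - a) := mul_pos hlpos (by linarith)
      exact mul_left_cancel₀ hp.ne' e
    have hσ1 : σ ^ 2 = 1 := by
      have := Real.sin_sq_add_cos_sq (Θ u |u - a|)
      rw [c1] at this
      rw [hσ]; linarith
    rw [hσσ]
    have e1 : (f a + l u * (u - a) * σ - (f b + l u * (v - b) * σ)) ^ 2 +
        (l u * (u - a) * 0 - l u * (v - b) * 0) ^ 2 = (l u * (v - u)) ^ 2 := by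
      have : f a + l u * (u - a) * σ - (f b + l u * (v - b) * σ) = l u * (u - v) * σ := by
        linear_combination c2
      rw [this]
      linear_combination (l u * (u - v)) ^ 2 * hσ1
    rw [e1, Real.sqrt_sq (mul_pos hlpos (by linarith)).le, hTe]
    have e2 : l u * (v - u) - (v - u) = (l u - 1) * (v - u) := by ring
    rw [e2, abs_mul, abs_of_pos (by linarith : 0 < v - u)]
    apply mul_le_mul_of_nonneg_right _ (by linarith)
    have : 0 ≤ K ^ 2 := by positivity
    linarith

/-- extension to the closure -/
lemma closure_ext {ε : ℝ} {X : Set ℝ} {f : ℝ → ℝ} (h0 : 0 < ε) (hf : NearIso ε X f) :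
    ∃ g : ℝ → ℝ, (∀ x ∈ X, g x = f x) ∧ NearIso ε (closure X) g := by
  have hlip : LipschitzOnWith (⟨1 + ε, by linarith⟩ : NNReal) f X := by
    apply LipschitzOnWith.of_dist_le_mul
    intro x hx y hy
    rw [Real.dist_eq, Real.dist_eq]
    exact (hf x hx y hy).2
  obtain ⟨g, hg, hge⟩ := hlip.extend_real
  have hc := hg.continuous
  refine ⟨g, fun x hx => (hge hx).symm, ?_⟩
  have hsub : closure (X ×ˢ X) ⊆ {z : ℝ × ℝ | (1 - ε) * |z.1 - z.2| ≤ |g z.1 - g z.2| ∧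
      |g z.1 - g z.2| ≤ (1 + ε) * |z.1 - z.2|} := by
    apply closure_minimal
    · rintro ⟨x, y⟩ ⟨hx, hy⟩
      have := hf x hx y hy
      rw [hge hx, hge hy] at this
      exact this
    · apply IsClosed.and
      · exact isClosed_le (by fun_prop) (by fun_prop)
      · exact isClosed_le (by fun_prop) (by fun_prop)
  intro x hx y hy
  have : (x, y) ∈ closure (X ×ˢ X) := by
    rw [closure_prod_eq]; exact ⟨hx, hy⟩
  exact hsub this

lemma eps_le {ε : ℝ} (h0 : 0 < ε) (h1 : ε < 1 / 400) :
    ε ≤ (2 * Real.pi / Real.log (1 / ε)) ^ 2 := by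
  have hlog : 0 < Real.log (1 / ε) := Real.log_pos (by rw [lt_div_iff₀ h0]; linarith)
  have hx : 0 < 1 / ε := by positivity
  have hs : 0 < √(1 / ε) := Real.sqrt_pos.2 hx
  have hl : Real.log (1 / ε) ≤ 2 * √(1 / ε) := by
    have e : Real.log (1 / ε) = 2 * Real.log (√(1 / ε)) := by
      rw [Real.log_sqrt hx.le]; ring
    have := Real.log_le_sub_one_of_pos hs
    linarith
  have hsq : √(1 / ε) ^ 2 = 1 / ε := Real.sq_sqrt hx.le
  have h2 : Real.log (1 / ε) ^ 2 ≤ 4 * (1 / ε) := by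
    have : Real.log (1 / ε) ^ 2 ≤ (2 * √(1 / ε)) ^ 2 := by gcongr
    rw [mul_pow, hsq] at this
    linarith
  rw [div_pow, le_div_iff₀ (by positivity)]
  have h3 : ε * Real.log (1 / ε) ^ 2 ≤ ε * (4 * (1 / ε)) := by gcongr
  have h4 : ε * (4 * (1 / ε)) = 4 := by field_simp
  have := Real.pi_gt_three
  nlinarith

/-- **Outer extension of near-isometric maps of the line.** There are `C > 0` and
`ε₀ ∈ (0,1)` such that for every `ε ∈ (0, ε₀)`, every set `X ⊆ ℝ` and every map `f : X → ℝ`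
with `(1 - ε)|x₁ - x₂| ≤ |f x₁ - f x₂| ≤ (1 + ε)|x₁ - x₂|` on `X` admits an extension
`h : ℝ → ℝ²` with `h x = (f x, 0)` on `X` and
`(1 - C/log²(1/ε))|u - v| ≤ ‖h u - h v‖ ≤ (1 + C/log²(1/ε))|u - v|` for all `u, v ∈ ℝ`. -/
theorem line_outer_extension :
    ∃ C > (0 : ℝ), ∃ ε₀ : ℝ, 0 < ε₀ ∧ ε₀ < 1 ∧ ∀ ε : ℝ, 0 < ε → ε < ε₀ →
      ∀ (X : Set ℝ) (f : ℝ → ℝ),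
        (∀ x₁ ∈ X, ∀ x₂ ∈ X,
          (1 - ε) * |x₁ - x₂| ≤ |f x₁ - f x₂| ∧ |f x₁ - f x₂| ≤ (1 + ε) * |x₁ - x₂|) →
        ∃ h : ℝ → EuclideanSpace ℝ (Fin 2),
          (∀ x ∈ X, h x 0 = f x ∧ h x 1 = 0) ∧
          ∀ u v : ℝ,
            (1 - C / (Real.log (1 / ε)) ^ 2) * |u - v| ≤ ‖h u - h v‖ ∧
            ‖h u - h v‖ ≤ (1 + C / (Real.log (1 / ε)) ^ 2) * |u - v| := by
  refine ⟨(33 + 3 * 60000 / 2 + 9 * 60000 ^ 2 / 2) * (2 * Real.pi) ^ 2, by positivity, 1 / 400,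
    by norm_num, by norm_num, ?_⟩
  intro ε h0 h1 X f hf
  have hCK : (33 + 3 * 60000 / 2 + 9 * 60000 ^ 2 / 2) * (2 * Real.pi) ^ 2 / Real.log (1 / ε) ^ 2 =
    (33 + 3 * 60000 / 2 + 9 * 60000 ^ 2 / 2) * (2 * Real.pi / Real.log (1 / ε)) ^ 2 := by
    rw [div_pow, mul_div_assoc]
  rw [hCK]
  have hpq : ∃ p q : ℝ → ℝ, (∀ x ∈ X, p x = f x ∧ q x = 0) ∧
      ∀ u v, u < v → |√((p u - p v) ^ 2 + (q u - q v) ^ 2) - (|u - v|)| ≤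
        (33 + 3 * 60000 / 2 + 9 * 60000 ^ 2 / 2) * (2 * Real.pi / Real.log (1 / ε)) ^ 2 *
          |u - v| := by
    rcases X.eq_empty_or_nonempty with hX | hX
    · refine ⟨fun u => u, fun _ => 0, by simp [hX], ?_⟩
      intro u v _
      simp only [sub_self, ne_eq, OfNat.ofNat_ne_zero, not_false_eq_true, zero_pow, add_zero,
        Real.sqrt_sq_eq_abs, abs_zero]
      positivity
    · obtain ⟨g, hgf, hg⟩ := closure_ext h0 hf
      obtain ⟨p, q, hp, hb⟩ := closed_case h0 h1 isClosed_closure hX.closure hg rfl (eps_le h0 h1)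
      refine ⟨p, q, fun x hx => ?_, hb⟩
      rw [← hgf x hx]
      exact hp x (subset_closure hx)
  obtain ⟨p, q, hp, hb⟩ := hpq
  generalize (33 + 3 * 60000 / 2 + 9 * 60000 ^ 2 / 2) * (2 * Real.pi / Real.log (1 / ε)) ^ 2 = M
    at *
  refine ⟨fun u => !₂[p u, q u], fun x hx => by simpa using hp x hx, ?_⟩
  have hnorm : ∀ u v, ‖(!₂[p u, q u] : EuclideanSpace ℝ (Fin 2)) - !₂[p v, q v]‖ =
      √((p u - p v) ^ 2 + (q u - q v) ^ 2) := by
    intro u v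
    simp [EuclideanSpace.norm_eq, Fin.sum_univ_two]
  have hlt : ∀ u v, u < v →
      (1 - M) * |u - v| ≤ ‖(!₂[p u, q u] : EuclideanSpace ℝ (Fin 2)) - !₂[p v, q v]‖ ∧
      ‖(!₂[p u, q u] : EuclideanSpace ℝ (Fin 2)) - !₂[p v, q v]‖ ≤ (1 + M) * |u - v| := by
    intro u v huv
    rw [hnorm]
    have := abs_le.1 (hb u v huv)
    constructor <;> linarith
  intro u v
  rcases lt_trichotomy u v with h | h | h
  · exact hlt u v h
  · subst h; simp
  · have := hlt v u h
    rwa [abs_sub_comm, norm_sub_rev] at this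
end

section
/- For every ε ∈ (0,1) there exist constants c₂, c₃ > 0 (depending only on ε) such that the following holds. For every d ≥ 1, every finite set X ⊂ ℝ^d with |X| = N, and every bijection π : {1,…,N} → X (a priority ranking), there exist d' ≤ c₃·log₂ N and an injective map f : X → ℝ^{d'} such that for every j with 4 ≤ j ≤ N: (i) the restriction of f to {π(1), …, π(j)} has distortion at most (3 + ε)·log₂ log₂ j; and (ii) all but the first ⌈c₂·(log₂ j)^{3+ε}⌉ coordinates of f(π(j)) equal 0. -/
/-- `f` restricted to `A` has distortion at most `D`. -/
def HasDistortionAtMost {n m : ℕ} (A : Set (EuclideanSpace ℝ (Fin n)))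
    (f : EuclideanSpace ℝ (Fin n) → EuclideanSpace ℝ (Fin m)) (D : ℝ) : Prop :=
  ∃ lam > (0 : ℝ), ∀ x ∈ A, ∀ y ∈ A,
    lam * ‖x - y‖ ≤ ‖f x - f y‖ ∧ ‖f x - f y‖ ≤ lam * D * ‖x - y‖

open Finset

theorem pdr_var_identity {κ E : Type*} [Fintype κ] [NormedAddCommGroup E] [InnerProductSpace ℝ E]
    (c : κ → ℝ) (hc : ∑ i, c i = 1) (v : κ → E) :
    ∑ i, ∑ j, c i * c j * ‖v i - v j‖ ^ 2
      = 2 * ∑ i, c i * ‖v i‖ ^ 2 - 2 * ‖∑ i, c i • v i‖ ^ 2 := by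
  have h1 : ‖∑ i, c i • v i‖ ^ 2 = ∑ i, ∑ j, c i * c j * inner ℝ (v i) (v j) := by
    rw [← real_inner_self_eq_norm_sq, sum_inner]
    refine Finset.sum_congr rfl fun i _ => ?_
    rw [inner_sum]
    refine Finset.sum_congr rfl fun j _ => ?_
    rw [inner_smul_left, inner_smul_right]; simp; ring
  have h2 : ∑ i, ∑ j, c i * c j * ‖v i‖ ^ 2 = ∑ i, c i * ‖v i‖ ^ 2 := by
    refine Finset.sum_congr rfl fun i _ => ?_
    rw [← Finset.sum_mul, ← Finset.mul_sum, hc, mul_one]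
  have h3 : ∑ i, ∑ j, c i * c j * ‖v j‖ ^ 2 = ∑ i, c i * ‖v i‖ ^ 2 := by
    rw [Finset.sum_comm, ← h2]
    refine Finset.sum_congr rfl fun i _ => Finset.sum_congr rfl fun j _ => by ring
  have h4 : ∑ i, ∑ j, c i * c j * ‖v i - v j‖ ^ 2
      = ∑ i, ∑ j, c i * c j * ‖v i‖ ^ 2 + ∑ i, ∑ j, c i * c j * ‖v j‖ ^ 2
        - 2 * ∑ i, ∑ j, c i * c j * inner ℝ (v i) (v j) := by
    simp only [Finset.mul_sum, ← Finset.sum_add_distrib, ← Finset.sum_sub_distrib]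
    refine Finset.sum_congr rfl fun i _ => Finset.sum_congr rfl fun j _ => ?_
    rw [norm_sub_sq_real]; ring
  rw [h4, h2, h3, h1]; ring

theorem pdr_kirszbraun_point {κ E F : Type*} [Fintype κ] [NormedAddCommGroup E]
    [InnerProductSpace ℝ E] [NormedAddCommGroup F] [InnerProductSpace ℝ F]
    (x : κ → E) (y : κ → F) (h : ∀ i j, ‖y i - y j‖ ≤ ‖x i - x j‖) (p : E) :
    ∃ q : F, ∀ i, ‖q - y i‖ ≤ ‖p - x i‖ := by
  classical
  rcases isEmpty_or_nonempty κ with he | hne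
  · exact ⟨0, fun i => he.elim i⟩
  let φ : (κ → ℝ) → ℝ := fun c => ∑ i, c i * (‖y i‖ ^ 2 - ‖x i - p‖ ^ 2) - ‖∑ i, c i • y i‖ ^ 2
  have hφ : Continuous φ := by fun_prop
  obtain ⟨i0⟩ := hne
  obtain ⟨c, hcS, hmax⟩ := (isCompact_stdSimplex ℝ κ).exists_isMaxOn
    ⟨_, single_mem_stdSimplex ℝ i0⟩ hφ.continuousOn
  have hneg : φ c ≤ 0 := by
    have e1 := pdr_var_identity c hcS.2 y
    have e2 := pdr_var_identity c hcS.2 (fun i => x i - p)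
    have e3 : ∑ i, ∑ j, c i * c j * ‖y i - y j‖ ^ 2
        ≤ ∑ i, ∑ j, c i * c j * ‖(x i - p) - (x j - p)‖ ^ 2 := by
      refine Finset.sum_le_sum fun i _ => Finset.sum_le_sum fun j _ => ?_
      have := h i j
      have h1 := hcS.1 i
      have h2 := hcS.1 j
      rw [sub_sub_sub_cancel_right]
      gcongr
    have e4 : φ c = ∑ i, c i * ‖y i‖ ^ 2 - ∑ i, c i * ‖x i - p‖ ^ 2 - ‖∑ i, c i • y i‖ ^ 2 := by
      simp only [φ, mul_sub, Finset.sum_sub_distrib]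
    have := sq_nonneg ‖∑ i, c i • (x i - p)‖
    linarith
  refine ⟨∑ i, c i • y i, fun i => ?_⟩
  set q := ∑ i, c i • y i with hq
  set A := ∑ i, c i * (‖y i‖ ^ 2 - ‖x i - p‖ ^ 2) with hA
  have key : ∀ t : ℝ, 0 < t → t ≤ 1 →
      (‖y i‖ ^ 2 - ‖x i - p‖ ^ 2) - A - 2 * inner ℝ q (y i - q) ≤ t * ‖y i - q‖ ^ 2 := by
    intro t ht ht1
    let c' : κ → ℝ := (1 - t) • c + t • (Pi.single i 1)
    have hc' : c' ∈ stdSimplex ℝ κ :=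
      convex_stdSimplex ℝ κ hcS (single_mem_stdSimplex ℝ i) (by linarith) ht.le (by ring)
    have hm : φ c' ≤ φ c := hmax hc'
    have e1 : ∑ k, c' k * (‖y k‖ ^ 2 - ‖x k - p‖ ^ 2)
        = (1 - t) * A + t * (‖y i‖ ^ 2 - ‖x i - p‖ ^ 2) := by
      simp [c', add_mul, Finset.sum_add_distrib, mul_assoc, ← Finset.mul_sum, hA, Pi.single_apply]
    have e2 : ∑ k, c' k • y k = q + t • (y i - q) := by
      have : ∑ k, c' k • y k = (1 - t) • q + t • y i := by
        simp [c', add_smul, Finset.sum_add_distrib, mul_smul, ← Finset.smul_sum, hq,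
          Pi.single_apply]
      rw [this, sub_smul, smul_sub, one_smul]; abel
    have e3 : φ c' = (1 - t) * A + t * (‖y i‖ ^ 2 - ‖x i - p‖ ^ 2) - ‖q + t • (y i - q)‖ ^ 2 := by
      simp only [φ]; rw [e1, e2]
    have e4 : φ c = A - ‖q‖ ^ 2 := rfl
    rw [e3, e4, norm_add_sq_real, inner_smul_right, norm_smul, Real.norm_eq_abs, mul_pow,
      sq_abs] at hm
    have : t * ((‖y i‖ ^ 2 - ‖x i - p‖ ^ 2) - A - 2 * inner ℝ q (y i - q))
        ≤ t * (t * ‖y i - q‖ ^ 2) := by nlinarith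
    exact le_of_mul_le_mul_left this ht
  have key2 : (‖y i‖ ^ 2 - ‖x i - p‖ ^ 2) - A - 2 * inner ℝ q (y i - q) ≤ 0 := by
    by_contra hcon
    push Not at hcon
    set B := (‖y i‖ ^ 2 - ‖x i - p‖ ^ 2) - A - 2 * inner ℝ q (y i - q)
    set C := ‖y i - q‖ ^ 2 with hC
    have hC0 : 0 ≤ C := sq_nonneg _
    have h1 := key 1 one_pos le_rfl
    have hC1 : 0 < C := by linarith
    have h2 := key (B / (2 * C)) (by positivity) (by rw [div_le_one (by positivity)]; linarith)
    have : B / (2 * C) * C = B / 2 := by field_simp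
    linarith
  have e5 : ‖q - y i‖ ^ 2 ≤ ‖p - x i‖ ^ 2 := by
    rw [norm_sub_rev p (x i), norm_sub_sq_real]
    rw [inner_sub_right, real_inner_self_eq_norm_sq] at key2
    have e4 : φ c = A - ‖q‖ ^ 2 := rfl
    linarith
  exact le_of_sq_le_sq e5 (norm_nonneg _)

theorem pdr_kirszbraun {ι E F : Type*} [Fintype ι] [NormedAddCommGroup E]
    [InnerProductSpace ℝ E] [NormedAddCommGroup F] [InnerProductSpace ℝ F]
    (x : ι → E) (y : ι → F) (s : Finset ι)
    (h : ∀ i ∈ s, ∀ j ∈ s, ‖y i - y j‖ ≤ ‖x i - x j‖) :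
    ∃ z : ι → F, (∀ i ∈ s, z i = y i) ∧ ∀ i j, ‖z i - z j‖ ≤ ‖x i - x j‖ := by
  classical
  suffices H : ∀ t : Finset ι, ∃ z : ι → F, (∀ i ∈ s, z i = y i) ∧
      ∀ i ∈ s ∪ t, ∀ j ∈ s ∪ t, ‖z i - z j‖ ≤ ‖x i - x j‖ by
    obtain ⟨z, hz, hz2⟩ := H Finset.univ
    exact ⟨z, hz, fun i j => hz2 i (by simp) j (by simp)⟩
  intro t
  induction t using Finset.induction_on with
  | empty => exact ⟨y, fun _ _ => rfl, by simpa using h⟩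
  | insert a t ha ih =>
    obtain ⟨z, hz, hz2⟩ := ih
    by_cases has : a ∈ s
    · refine ⟨z, hz, ?_⟩
      have : s ∪ insert a t = s ∪ t := by
        ext b; simp only [Finset.mem_union, Finset.mem_insert]
        constructor
        · rintro (h | rfl | h) <;> simp [*]
        · rintro (h | h) <;> simp [*]
      rw [this]; exact hz2
    obtain ⟨q, hq⟩ := pdr_kirszbraun_point (κ := ↥(s ∪ t)) (fun i => x i) (fun i => z i)
      (fun i j => hz2 i i.2 j j.2) (x a)
    have hat : a ∉ s ∪ t := by simp [has, ha]
    refine ⟨Function.update z a q, fun i hi => ?_, ?_⟩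
    · rw [Function.update_of_ne (fun h : i = a => has (h ▸ hi)), hz i hi]
    · intro i hi j hj
      have hi' : i = a ∨ i ∈ s ∪ t := by
        simp only [Finset.mem_union, Finset.mem_insert] at hi ⊢; tauto
      have hj' : j = a ∨ j ∈ s ∪ t := by
        simp only [Finset.mem_union, Finset.mem_insert] at hj ⊢; tauto
      rcases hi' with rfl | hi' <;> rcases hj' with rfl | hj'
      · simp
      · rw [Function.update_self, Function.update_of_ne (by rintro rfl; exact hat hj')]
        exact hq ⟨j, hj'⟩
      · rw [Function.update_self, Function.update_of_ne (by rintro rfl; exact hat hi'),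
          norm_sub_rev, norm_sub_rev (x i)]
        exact hq ⟨i, hi'⟩
      · rw [Function.update_of_ne (by rintro rfl; exact hat hi'),
          Function.update_of_ne (by rintro rfl; exact hat hj')]
        exact hz2 i hi' j hj'

/-- Rademacher sign of a Boolean. -/
def pdrSign (b : Bool) : ℝ := if b then 1 else -1

/-- Moment bound for squares of Rademacher sums. -/
theorem pdr_mgf (n : ℕ) (t : ℝ) (ht : |t| ≤ 1 / 10) :
    ∀ (a : Fin n → ℝ) (c : ℝ), ∑ i, a i ^ 2 ≤ 1 →
      ∑ σ : Fin n → Bool, Real.exp (t * (c + ∑ i, pdrSign (σ i) * a i) ^ 2)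
        ≤ 2 ^ n * Real.exp ((t + 4 * t ^ 2 * ∑ i, a i ^ 2) * (c ^ 2 + ∑ i, a i ^ 2)) := by
  induction n with
  | zero => intro a c _; simp
  | succ n ih =>
    intro a c hs
    have hsum : ∑ σ : Fin (n + 1) → Bool,
        Real.exp (t * (c + ∑ i, pdrSign (σ i) * a i) ^ 2)
        = ∑ b : Bool, ∑ σ : Fin n → Bool,
          Real.exp (t * ((c + pdrSign b * a 0) + ∑ i, pdrSign (σ i) * a i.succ) ^ 2) := by
      rw [← Fintype.sum_prod_type', ← (Fin.consEquiv (fun _ => Bool)).sum_comp]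
      refine Finset.sum_congr rfl fun p _ => ?_
      simp [Fin.sum_univ_succ, Fin.consEquiv, add_assoc]
    rw [hsum]
    rw [Fin.sum_univ_succ] at hs
    rw [Fin.sum_univ_succ (fun i => a i ^ 2)]
    set s := ∑ i : Fin n, a i.succ ^ 2 with hsdef
    have hs0 : 0 ≤ s := Finset.sum_nonneg fun i _ => sq_nonneg _
    set α := a 0 with hα
    have hs1 : s ≤ 1 := by nlinarith [sq_nonneg α]
    have hb : ∀ b : Bool, ∑ σ : Fin n → Bool,
          Real.exp (t * ((c + pdrSign b * α) + ∑ i, pdrSign (σ i) * a i.succ) ^ 2)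
          ≤ 2 ^ n * Real.exp ((t + 4 * t ^ 2 * s) * ((c + pdrSign b * α) ^ 2 + s)) :=
      fun b => ih (fun i => a i.succ) _ hs1
    refine (Finset.sum_le_sum fun b _ => hb b).trans ?_
    rw [Fintype.sum_bool]
    simp only [pdrSign]
    set τ := t + 4 * t ^ 2 * s with hτ
    have hcosh : Real.cosh (2 * τ * c * α) ≤ Real.exp ((2 * τ * c * α) ^ 2 / 2) :=
      Real.cosh_le_exp_half_sq _
    have e1 : Real.exp (τ * ((c + 1 * α) ^ 2 + s)) + Real.exp (τ * ((c + -1 * α) ^ 2 + s))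
        = 2 * (Real.exp (τ * (c ^ 2 + α ^ 2 + s)) * Real.cosh (2 * τ * c * α)) := by
      rw [Real.cosh_eq, show τ * ((c + 1 * α) ^ 2 + s) = τ * (c ^ 2 + α ^ 2 + s) + 2 * τ * c * α by ring,
        show τ * ((c + -1 * α) ^ 2 + s) = τ * (c ^ 2 + α ^ 2 + s) + -(2 * τ * c * α) by ring,
        Real.exp_add, Real.exp_add]
      ring
    have hτ2 : τ ^ 2 ≤ 2 * t ^ 2 := by
      obtain ⟨h1, h2⟩ := abs_le.mp ht
      have : τ = t * (1 + 4 * t * s) := by rw [hτ]; ring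
      rw [this, mul_pow]
      have h3 : (1 + 4 * t * s) ^ 2 ≤ 2 := by
        have h5 : -(1/10) ≤ t * s := by nlinarith
        have h4 : t * s ≤ 1 / 10 := by nlinarith
        nlinarith
      nlinarith [sq_nonneg t]
    have e2 : Real.exp (τ * (c ^ 2 + α ^ 2 + s)) * Real.cosh (2 * τ * c * α)
        ≤ Real.exp ((t + 4 * t ^ 2 * (α ^ 2 + s)) * (c ^ 2 + (α ^ 2 + s))) := by
      refine (mul_le_mul_of_nonneg_left hcosh (Real.exp_pos _).le).trans ?_
      rw [← Real.exp_add]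
      apply Real.exp_le_exp.mpr
      have h6 : 2 * τ ^ 2 * (c ^ 2 * α ^ 2) ≤ 2 * (2 * t ^ 2) * (c ^ 2 * α ^ 2) := by
        gcongr
      have h7 : 0 ≤ 4 * t ^ 2 * α ^ 2 * (α ^ 2 + s) := by positivity
      rw [hτ] at h6 ⊢
      nlinarith
    calc _ = 2 ^ n * (Real.exp (τ * ((c + 1 * α) ^ 2 + s)) + Real.exp (τ * ((c + -1 * α) ^ 2 + s))) := by
          simp; ring
      _ ≤ _ := by
          rw [e1, pow_succ (2 : ℝ) n]
          have := mul_le_mul_of_nonneg_left e2 (show (0 : ℝ) ≤ 2 ^ n * 2 by positivity)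
          linarith

/-- Johnson–Lindenstrauss with distortion two. -/
theorem pdr_jl {ι : Type*} (d D : ℕ) (x : ι → EuclideanSpace ℝ (Fin d)) (S : Finset ι)
    (hD0 : 0 < D) (hD : 2 * (S.card : ℝ) ^ 2 * Real.exp (-(D : ℝ) / 64) < 1) :
    ∃ g : ι → EuclideanSpace ℝ (Fin D), ∀ i ∈ S, ∀ j ∈ S,
      ‖x i - x j‖ ≤ 2 * ‖g i - g j‖ ∧ ‖g i - g j‖ ≤ ‖x i - x j‖ := by
  classical
  -- coordinates of the normalised difference
  let w : ι × ι → Fin d → ℝ := fun p k => (x p.1 k - x p.2 k) / ‖x p.1 - x p.2‖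
  let Q : (Fin d → Bool) → ι × ι → ℝ := fun σ p => ∑ k, pdrSign (σ k) * w p k
  let P : Finset (ι × ι) := (S ×ˢ S).filter fun p => x p.1 ≠ x p.2
  have hPcard : (P.card : ℝ) ≤ (S.card : ℝ) ^ 2 := by
    have : P.card ≤ (S ×ˢ S).card := Finset.card_filter_le _ _
    rw [Finset.card_product] at this
    rw [sq]; exact_mod_cast this
  have hw : ∀ p ∈ P, ∑ k, w p k ^ 2 = 1 := by
    intro p hp
    have hne : ‖x p.1 - x p.2‖ ≠ 0 := by
      simpa [sub_eq_zero] using (Finset.mem_filter.mp hp).2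
    simp only [w, div_pow]
    rw [← Finset.sum_div, div_eq_one_iff_eq (by positivity), EuclideanSpace.norm_sq_eq]
    simp
  have hmgf : ∀ p ∈ P, ∀ t : ℝ, |t| ≤ 1 / 10 →
      ∑ M : Fin D → Fin d → Bool, Real.exp (t * ∑ r, Q (M r) p ^ 2)
        ≤ (2 ^ d) ^ D * Real.exp ((D : ℝ) * (t + 4 * t ^ 2)) := by
    intro p hp t ht
    have h1 := pdr_mgf d t ht (w p) 0 (hw p hp).le
    rw [hw p hp] at h1
    simp only [zero_add, ne_eq, OfNat.ofNat_ne_zero, not_false_eq_true, zero_pow, mul_one] at h1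
    have h2 : ∑ M : Fin D → Fin d → Bool, Real.exp (t * ∑ r, Q (M r) p ^ 2)
        = (∑ σ, Real.exp (t * Q σ p ^ 2)) ^ D := by
      rw [Fintype.sum_pow]
      refine Finset.sum_congr rfl fun M _ => ?_
      rw [Finset.mul_sum, Real.exp_sum]
    rw [h2, Real.exp_nat_mul, ← mul_pow]
    exact pow_le_pow_left₀ (Finset.sum_nonneg fun _ _ => (Real.exp_pos _).le) h1 D
  -- total
  let bad : (Fin D → Fin d → Bool) → ι × ι → ℝ := fun M p =>
    Real.exp ((1/16) * ∑ r, Q (M r) p ^ 2) * Real.exp (-((D : ℝ) / 8))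
    + Real.exp ((-(1/16)) * ∑ r, Q (M r) p ^ 2) * Real.exp ((D : ℝ) / 32)
  have hbadpos : ∀ M p, 0 ≤ bad M p := fun M p => by positivity
  have hbadsum : ∀ p ∈ P, ∑ M, bad M p ≤ (2 ^ d) ^ D * (2 * Real.exp (-(D : ℝ) / 64)) := by
    intro p hp
    simp only [bad]
    rw [Finset.sum_add_distrib, ← Finset.sum_mul, ← Finset.sum_mul]
    have h1 := hmgf p hp (1/16) (by rw [abs_of_pos] <;> norm_num)
    have h2 := hmgf p hp (-(1/16)) (by rw [abs_of_neg] <;> norm_num)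
    have h3 := mul_le_mul_of_nonneg_right h1 (Real.exp_pos (-((D : ℝ) / 8))).le
    have h4 := mul_le_mul_of_nonneg_right h2 (Real.exp_pos ((D : ℝ) / 32)).le
    rw [mul_assoc, ← Real.exp_add] at h3 h4
    have hDp : (0:ℝ) ≤ D := Nat.cast_nonneg D
    have h5 : Real.exp ((D : ℝ) * (1/16 + 4 * (1/16)^2) + -((D : ℝ) / 8)) ≤ Real.exp (-(D : ℝ) / 64) :=
      Real.exp_le_exp.mpr (by nlinarith)
    have h6 : Real.exp ((D : ℝ) * (-(1/16) + 4 * (-(1/16))^2) + ((D : ℝ) / 32)) ≤ Real.exp (-(D : ℝ) / 64) :=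
      Real.exp_le_exp.mpr (by nlinarith)
    have hp : (0:ℝ) < (2 ^ d) ^ D := by positivity
    nlinarith [mul_le_mul_of_nonneg_left h5 hp.le, mul_le_mul_of_nonneg_left h6 hp.le]
  have hex : ∃ M, ∑ p ∈ P, bad M p < 1 := by
    by_contra hcon
    push Not at hcon
    have h1 : ((2:ℝ) ^ d) ^ D ≤ ∑ M, ∑ p ∈ P, bad M p := by
      have := Finset.sum_le_sum fun M (_ : M ∈ Finset.univ) => hcon M
      simpa using this
    rw [Finset.sum_comm] at h1
    have h2 := Finset.sum_le_sum hbadsum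
    rw [Finset.sum_const, nsmul_eq_mul] at h2
    have hp : (0:ℝ) < (2 ^ d) ^ D := by positivity
    have h3 := mul_le_mul_of_nonneg_right hPcard (Real.exp_pos (-(D : ℝ) / 64)).le
    have h4 : ((2:ℝ) ^ d) ^ D * (2 * (S.card : ℝ) ^ 2 * Real.exp (-(D : ℝ) / 64)) < (2 ^ d) ^ D * 1 :=
      mul_lt_mul_of_pos_left hD hp
    nlinarith [mul_le_mul_of_nonneg_left h3 hp.le]
  obtain ⟨M, hM⟩ := hex
  have hgood : ∀ p ∈ P, (D : ℝ) / 2 ≤ ∑ r, Q (M r) p ^ 2 ∧ ∑ r, Q (M r) p ^ 2 ≤ 2 * D := by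
    intro p hp
    have h1 : bad M p < 1 :=
      (Finset.single_le_sum (f := fun p => bad M p) (fun q _ => hbadpos M q) hp).trans_lt hM
    simp only [bad, ← Real.exp_add] at h1
    have h2 := Real.exp_pos ((1/16) * ∑ r, Q (M r) p ^ 2 + -((D : ℝ) / 8))
    have h3 := Real.exp_pos ((-(1/16)) * ∑ r, Q (M r) p ^ 2 + ((D : ℝ) / 32))
    have h4 := Real.exp_lt_one_iff.mp (show Real.exp ((1/16) * ∑ r, Q (M r) p ^ 2 + -((D : ℝ) / 8)) < 1 by linarith)
    have h5 := Real.exp_lt_one_iff.mp (show Real.exp ((-(1/16)) * ∑ r, Q (M r) p ^ 2 + ((D : ℝ) / 32)) < 1 by linarith)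
    constructor <;> linarith
  refine ⟨fun i => WithLp.toLp 2 fun r => (∑ k, pdrSign (M r k) * x i k) / Real.sqrt (2 * D), ?_⟩
  intro i hi j hj
  by_cases hij : x i = x j
  · simp [hij]
  have hp : (i, j) ∈ P := by simp [P, hi, hj, hij]
  obtain ⟨hl, hu⟩ := hgood _ hp
  have hv : 0 < ‖x i - x j‖ := norm_pos_iff.mpr (sub_ne_zero.mpr hij)
  have hDp : (0:ℝ) < D := Nat.cast_pos.mpr hD0
  set g : ι → EuclideanSpace ℝ (Fin D) :=
    fun i => WithLp.toLp 2 fun r => (∑ k, pdrSign (M r k) * x i k) / Real.sqrt (2 * D) with hg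
  have hnorm : ‖g i - g j‖ ^ 2 = ‖x i - x j‖ ^ 2 * ((∑ r, Q (M r) (i, j) ^ 2) / (2 * D)) := by
    rw [EuclideanSpace.norm_sq_eq, Finset.sum_div, Finset.mul_sum]
    refine Finset.sum_congr rfl fun r _ => ?_
    have : (g i - g j) r = ‖x i - x j‖ * Q (M r) (i, j) / Real.sqrt (2 * D) := by
      simp only [hg, Q, w, PiLp.sub_apply]
      rw [← sub_div, ← Finset.sum_sub_distrib, Finset.mul_sum]
      congr 1
      refine Finset.sum_congr rfl fun k _ => ?_
      field_simp
    rw [this, Real.norm_eq_abs, sq_abs, div_pow, Real.sq_sqrt (by positivity)]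
    ring
  have hl' : 1 / 4 ≤ (∑ r, Q (M r) (i, j) ^ 2) / (2 * D) := by
    rw [le_div_iff₀ (by positivity)]; linarith
  have hu' : (∑ r, Q (M r) (i, j) ^ 2) / (2 * D) ≤ 1 := by
    rw [div_le_one (by positivity)]; linarith
  change ‖x i - x j‖ ≤ 2 * ‖g i - g j‖ ∧ ‖g i - g j‖ ≤ ‖x i - x j‖
  have hv2 : 0 < ‖x i - x j‖ ^ 2 := by positivity
  constructor
  · apply le_of_sq_le_sq _ (by positivity)
    rw [mul_pow, hnorm]; nlinarith
  · apply le_of_sq_le_sq _ (by positivity)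
    rw [hnorm]; nlinarith
/-- Partial sums of block dimensions. -/
def pdrT (D : ℕ → ℕ) : ℕ → ℕ
  | 0 => D 0
  | k + 1 => pdrT D k + D (k + 1)

/-- Concatenation of Euclidean vectors. -/
def pdrAppend {m n : ℕ} (u : EuclideanSpace ℝ (Fin m)) (v : EuclideanSpace ℝ (Fin n)) :
    EuclideanSpace ℝ (Fin (m + n)) := WithLp.toLp 2 (Fin.append u v)

theorem pdrAppend_norm {m n : ℕ} (u u' : EuclideanSpace ℝ (Fin m))
    (v v' : EuclideanSpace ℝ (Fin n)) :
    ‖pdrAppend u v - pdrAppend u' v'‖ ^ 2 = ‖u - u'‖ ^ 2 + ‖v - v'‖ ^ 2 := by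
  simp [EuclideanSpace.norm_sq_eq, Fin.sum_univ_add, pdrAppend]

theorem pdr_tower {ι : Type*} [Fintype ι] (d : ℕ) (x : ι → EuclideanSpace ℝ (Fin d))
    (S : ℕ → Finset ι) (hmono : Monotone S) (D : ℕ → ℕ) (hD0 : ∀ k, 0 < D k)
    (hD : ∀ k, 2 * ((S k).card : ℝ) ^ 2 * Real.exp (-(D k : ℝ) / 64) < 1) (k : ℕ) :
    ∃ F : ι → EuclideanSpace ℝ (Fin (pdrT D k)), ∃ G : ι → EuclideanSpace ℝ (Fin (D k)),
      (∀ i j, ‖G i - G j‖ ≤ ‖x i - x j‖) ∧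
      (∀ i ∈ S k, ∀ j ∈ S k, ‖x i - x j‖ ≤ 2 * ‖G i - G j‖) ∧
      (∀ i j, ‖F i - F j‖ ≤ (3 * k + 1) * ‖x i - x j‖) ∧
      (∀ i j, ‖G i - G j‖ ≤ (2 ^ (k + 1) - 1) * ‖F i - F j‖) ∧
      (∀ l ≤ k, ∀ i ∈ S l, ∀ r : Fin (pdrT D k), pdrT D l ≤ r → F i r = 0) ∧
      (∀ l ≤ k, ∀ i ∈ S l, ∀ j ∈ S l,
        ‖x i - x j‖ ≤ 2 * (2 ^ (l + 1) - 1) * ‖F i - F j‖ ∧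
        ‖F i - F j‖ ≤ (3 * l + 1) * ‖x i - x j‖) := by
  induction k with
  | zero =>
    obtain ⟨g, hg⟩ := pdr_jl d (D 0) x (S 0) (hD0 0) (hD 0)
    obtain ⟨G, hG, hG2⟩ := pdr_kirszbraun x g (S 0) fun i hi j hj => (hg i hi j hj).2
    have hlow : ∀ i ∈ S 0, ∀ j ∈ S 0, ‖x i - x j‖ ≤ 2 * ‖G i - G j‖ := by
      intro i hi j hj
      rw [hG i hi, hG j hj]; exact (hg i hi j hj).1
    refine ⟨G, G, hG2, hlow, ?_, ?_, ?_, ?_⟩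
    · intro i j
      have := hG2 i j
      norm_num
      exact this
    · intro i j; norm_num; exact le_rfl
    · intro l hl i hi r hr
      obtain rfl : l = 0 := by omega
      exact absurd r.2 (not_lt.mpr hr)
    · intro l hl i hi j hj
      obtain rfl : l = 0 := by omega
      have := hlow i hi j hj
      have := hG2 i j
      norm_num
      constructor <;> assumption
  | succ k ih =>
    obtain ⟨F, G, hG1, hG2, hF, hGF, hz, hdist⟩ := ih
    obtain ⟨g, hg⟩ := pdr_jl d (D (k + 1)) x (S (k + 1)) (hD0 _) (hD _)
    obtain ⟨G', hG', hG'2⟩ := pdr_kirszbraun x g (S (k + 1)) fun i hi j hj => (hg i hi j hj).2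
    have hlow : ∀ i ∈ S (k + 1), ∀ j ∈ S (k + 1), ‖x i - x j‖ ≤ 2 * ‖G' i - G' j‖ := by
      intro i hi j hj
      rw [hG' i hi, hG' j hj]; exact (hg i hi j hj).1
    obtain ⟨u, hu, hu2⟩ := pdr_kirszbraun (fun i => (2 : ℝ) • G i) G' (S k) (by
      intro i hi j hj
      rw [← smul_sub, norm_smul]
      refine (hG'2 i j).trans ((hG2 i hi j hj).trans ?_)
      simp)
    have hu3 : ∀ i j, ‖u i - u j‖ ≤ 2 * ‖G i - G j‖ := by
      intro i j
      have := hu2 i j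
      rw [← smul_sub, norm_smul] at this
      simpa using this
    let F' : ι → EuclideanSpace ℝ (Fin (pdrT D k + D (k + 1))) :=
      fun i => pdrAppend (F i) (G' i - u i)
    have hn : ∀ i j, ‖F' i - F' j‖ ^ 2 = ‖F i - F j‖ ^ 2 + ‖(G' i - u i) - (G' j - u j)‖ ^ 2 :=
      fun i j => pdrAppend_norm _ _ _ _
    have hn1 : ∀ i j, ‖F i - F j‖ ≤ ‖F' i - F' j‖ := fun i j =>
      le_of_sq_le_sq (by rw [hn]; nlinarith [sq_nonneg ‖(G' i - u i) - (G' j - u j)‖])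
        (norm_nonneg _)
    have hn2 : ∀ i j, ‖(G' i - u i) - (G' j - u j)‖ ≤ ‖F' i - F' j‖ := fun i j =>
      le_of_sq_le_sq (by rw [hn]; nlinarith [sq_nonneg ‖F i - F j‖]) (norm_nonneg _)
    have hn3 : ∀ i j, ‖F' i - F' j‖ ≤ ‖F i - F j‖ + ‖(G' i - u i) - (G' j - u j)‖ := fun i j =>
      le_of_sq_le_sq (by
        rw [hn]
        nlinarith [mul_nonneg (norm_nonneg (F i - F j))
          (norm_nonneg ((G' i - u i) - (G' j - u j)))]) (by positivity)
    have hid : ∀ i j, (G' i - u i) - (G' j - u j) = (G' i - G' j) - (u i - u j) :=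
      fun i j => by abel
    have hup : ∀ i j, ‖F' i - F' j‖ ≤ (3 * ((k + 1 : ℕ) : ℝ) + 1) * ‖x i - x j‖ := by
      intro i j
      have h1 := hn3 i j
      have h2 : ‖(G' i - u i) - (G' j - u j)‖ ≤ ‖G' i - G' j‖ + ‖u i - u j‖ := by
        rw [hid]; exact norm_sub_le _ _
      have h3 := hu3 i j
      have h4 := hG1 i j
      have h5 := hG'2 i j
      have h6 := hF i j
      push_cast
      nlinarith
    have hGF' : ∀ i j, ‖G' i - G' j‖ ≤ (2 ^ (k + 1 + 1) - 1) * ‖F' i - F' j‖ := by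
      intro i j
      have h1 : ‖G' i - G' j‖ ≤ ‖(G' i - u i) - (G' j - u j)‖ + ‖u i - u j‖ := by
        have : G' i - G' j = ((G' i - u i) - (G' j - u j)) + (u i - u j) := by abel
        calc _ = ‖((G' i - u i) - (G' j - u j)) + (u i - u j)‖ := by rw [← this]
          _ ≤ _ := norm_add_le _ _
      have h2 := hn2 i j
      have h3 := hu3 i j
      have h4 := hGF i j
      have h6 : (1:ℝ) ≤ 2 ^ (k + 1) := one_le_pow₀ (by norm_num)
      have h5 := mul_le_mul_of_nonneg_left (hn1 i j) (show (0:ℝ) ≤ 2 ^ (k + 1) - 1 by linarith)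
      rw [pow_succ]
      nlinarith
    have hvan : ∀ i ∈ S k, G' i - u i = 0 := fun i hi => by rw [hu i hi, sub_self]
    refine ⟨F', G', hG'2, hlow, hup, hGF', ?_, ?_⟩
    · intro l hl i hi r hr
      rcases Nat.lt_or_ge k l with h | h
      · obtain rfl : l = k + 1 := by omega
        exact absurd r.2 (not_lt.mpr hr)
      · have hik : i ∈ S k := hmono h hi
        change Fin (pdrT D k + D (k + 1)) at r
        change Fin.append (F i) (G' i - u i) r = 0
        induction r using Fin.addCases with
        | left r => rw [Fin.append_left]; exact hz l h i hi r (by simpa using hr)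
        | right r => rw [Fin.append_right, hvan i hik]; simp
    · intro l hl i hi j hj
      rcases Nat.lt_or_ge k l with h | h
      · obtain rfl : l = k + 1 := by omega
        refine ⟨?_, hup i j⟩
        have h1 := hlow i hi j hj
        have h2 := hGF' i j
        calc _ ≤ _ := h1
          _ ≤ 2 * ((2 ^ (k + 1 + 1) - 1) * ‖F' i - F' j‖) := by gcongr
          _ = _ := by rw [mul_assoc]; rfl
      · have : ‖F' i - F' j‖ = ‖F i - F j‖ := by
          rw [← sq_eq_sq₀ (norm_nonneg _) (norm_nonneg _), hn, hvan i (hmono h hi),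
            hvan j (hmono h hj)]
          simp
        have h2 := hdist l h i hi j hj
        rw [← this] at h2
        exact h2

/-- Doubly exponential level sizes (as exponents of two). -/
@[irreducible] def pdrB (k : ℕ) : ℕ := 2 ^ (16 * 3 ^ k)

theorem pdrB_succ (k : ℕ) : pdrB (k + 1) = pdrB k ^ 3 := by
  unfold pdrB; rw [← pow_mul]; congr 1; ring

theorem pdrB_two_le (k : ℕ) : 2 ≤ pdrB k := by
  unfold pdrB
  calc 2 = 2 ^ 1 := rfl
    _ ≤ _ := Nat.pow_le_pow_right (by norm_num) (by have := Nat.pow_pos (n := k) (show 0 < 3 by norm_num); omega)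

theorem pdrB_double (k : ℕ) : 2 * pdrB k ≤ pdrB (k + 1) := by
  rw [pdrB_succ]
  have := pdrB_two_le k
  calc 2 * pdrB k ≤ pdrB k * pdrB k := by gcongr
    _ = pdrB k ^ 2 := by ring
    _ ≤ _ := Nat.pow_le_pow_right (by omega) (by norm_num)

theorem pdrB_mono : Monotone pdrB :=
  monotone_nat_of_le_succ fun k => by have := pdrB_double k; omega

theorem pdrB_gt (k : ℕ) : k < pdrB k := by
  induction k with
  | zero => have := pdrB_two_le 0; omega
  | succ k ih => have := pdrB_double k; omega

theorem pdrT_le (M : ℕ) (k : ℕ) :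
    pdrT (fun k => 192 * min (pdrB k) M) k ≤ 2 * (192 * pdrB k) := by
  induction k with
  | zero => simp only [pdrT]; have := min_le_left (pdrB 0) M; omega
  | succ k ih =>
    simp only [pdrT]
    have := min_le_left (pdrB (k + 1)) M
    have := pdrB_double k
    omega

theorem pdr_growth (k : ℕ) : 2 ^ k * (3 * k + 1) ≤ 4 * 3 ^ k := by
  rcases Nat.lt_or_ge k 2 with h | h
  · interval_cases k <;> norm_num
  · induction k, h using Nat.le_induction with
    | base => norm_num
    | succ k hk ih =>
      rw [pow_succ, pow_succ]
      have : 2 ^ k * (2 * (3 * (k + 1) + 1)) ≤ 2 ^ k * (3 * (3 * k + 1)) := by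
        exact Nat.mul_le_mul_left _ (by omega)
      nlinarith

theorem prioritized_dimension_reduction_loglog (ε : ℝ) (hε : 0 < ε) (hε1 : ε < 1) :
    ∃ c₂ > (0 : ℝ), ∃ c₃ > (0 : ℝ), ∀ d : ℕ, 1 ≤ d →
      ∀ (N : ℕ) (X : Finset (EuclideanSpace ℝ (Fin d))), X.card = N →
      ∀ π : Fin N → EuclideanSpace ℝ (Fin d),
        Function.Injective π → Set.range π = (X : Set (EuclideanSpace ℝ (Fin d))) →
        ∃ d' : ℕ, (d' : ℝ) ≤ c₃ * Real.logb 2 N ∧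
          ∃ f : EuclideanSpace ℝ (Fin d) → EuclideanSpace ℝ (Fin d'),
            Set.InjOn f (X : Set (EuclideanSpace ℝ (Fin d))) ∧
            ∀ j : ℕ, ∀ _ : 4 ≤ j, ∀ hjN : j ≤ N,
              HasDistortionAtMost (π '' {i : Fin N | (i : ℕ) < j}) f
                ((3 + ε) * Real.logb 2 (Real.logb 2 j)) ∧
              ∀ l : Fin d', ⌈c₂ * (Real.logb 2 j) ^ ((3 : ℝ) + ε)⌉₊ ≤ (l : ℕ) →
                f (π ⟨j - 1, by omega⟩) l = 0 := by
  have hB0pos : 0 < pdrB 0 := by have := pdrB_two_le 0; omega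
  refine ⟨2 * (192 * (pdrB 0 : ℝ)), by positivity, 6 * 192, by norm_num, ?_⟩
  intro d _ N X hX π hπ hrange
  rcases Nat.lt_or_ge N 2 with hN | hN
  · refine ⟨0, ?_, fun _ => 0, ?_, ?_⟩
    · interval_cases N <;> simp
    · intro a ha b hb _
      exact Finset.card_le_one.mp (by omega : X.card ≤ 1) a ha b hb
    · intro j h4 hj; omega
  set M := Nat.clog 2 N with hM
  have hM1 : 1 ≤ M := Nat.clog_pos (by norm_num) hN
  have hNM : N ≤ 2 ^ M := Nat.le_pow_clog (by norm_num) N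
  have hMlog : (M : ℝ) ≤ 2 * Real.logb 2 N := by
    have h1 : 2 ^ (M - 1) < N := by
      have := Nat.pow_pred_clog_lt_self (b := 2) (by norm_num) hN
      simpa using this
    have h2 : ((M - 1 : ℕ) : ℝ) ≤ Real.logb 2 N := by
      rw [Real.le_logb_iff_rpow_le (by norm_num) (by positivity), Real.rpow_natCast]
      exact_mod_cast h1.le
    have h3 : (1 : ℝ) ≤ Real.logb 2 N := by
      rw [Real.le_logb_iff_rpow_le (by norm_num) (by positivity), Real.rpow_one]
      exact_mod_cast hN
    push_cast [hM1] at h2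
    linarith
  -- top level
  have hex : ∃ m, N ≤ 2 ^ pdrB m := ⟨N, by
    calc N ≤ 2 ^ N := Nat.lt_two_pow_self.le
      _ ≤ _ := Nat.pow_le_pow_right (by norm_num) (pdrB_gt N).le⟩
  classical
  set m := Nat.find hex with hm
  have hmN : N ≤ 2 ^ pdrB m := Nat.find_spec hex
  let S : ℕ → Finset (Fin N) := fun k => Finset.univ.filter fun i => (i : ℕ) < 2 ^ pdrB k
  have hS : ∀ k i, i ∈ S k ↔ (i : ℕ) < 2 ^ pdrB k := fun k i => by simp [S]
  have hSmono : Monotone S := by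
    intro a b hab i hi
    rw [hS] at hi ⊢
    exact hi.trans_le (Nat.pow_le_pow_right (by norm_num) (pdrB_mono hab))
  have hScard : ∀ k, (S k).card ≤ 2 ^ min (pdrB k) M := by
    intro k
    rcases le_total (pdrB k) M with h | h
    · rw [min_eq_left h]
      calc (S k).card = ((S k).map Fin.valEmbedding).card := (Finset.card_map _).symm
        _ ≤ (Finset.range (2 ^ pdrB k)).card := by
          apply Finset.card_le_card
          intro a ha
          obtain ⟨i, hi, rfl⟩ := Finset.mem_map.mp ha
          exact Finset.mem_range.mpr ((hS _ _).mp hi)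
        _ = _ := Finset.card_range _
    · rw [min_eq_right h]
      calc (S k).card ≤ Fintype.card (Fin N) := Finset.card_le_univ _
        _ = N := Fintype.card_fin N
        _ ≤ _ := hNM
  set D : ℕ → ℕ := fun k => 192 * min (pdrB k) M with hDdef
  have hmin : ∀ k, 1 ≤ min (pdrB k) M := fun k => le_min (by have := pdrB_two_le k; omega) hM1
  have hD : ∀ k, 2 * ((S k).card : ℝ) ^ 2 * Real.exp (-(D k : ℝ) / 64) < 1 := by
    intro k
    set b := min (pdrB k) M with hb
    have h1 : ((S k).card : ℝ) ≤ 2 ^ b := by exact_mod_cast hScard k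
    have h2 : Real.exp (-(D k : ℝ) / 64) = (Real.exp (-3)) ^ b := by
      rw [← Real.exp_nat_mul]; congr 1; simp only [hDdef]; push_cast; rw [hb]; push_cast; ring
    have h3 : Real.exp (-3) < 1 / 8 := by
      rw [Real.exp_neg, ← one_div]
      apply one_div_lt_one_div_of_lt (by norm_num)
      have : Real.exp 3 = Real.exp 1 ^ 3 := by rw [← Real.exp_nat_mul]; norm_num
      rw [this]
      calc (8:ℝ) = 2 ^ 3 := by norm_num
        _ < _ := pow_lt_pow_left₀ (by have := Real.exp_one_gt_d9; linarith) (by norm_num) (by norm_num)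
    rw [h2]
    have h4 : (2:ℝ) ≤ 2 ^ b := by
      calc (2:ℝ) = 2 ^ 1 := by norm_num
        _ ≤ _ := pow_le_pow_right₀ (by norm_num) (hmin k)
    calc 2 * ((S k).card : ℝ) ^ 2 * (Real.exp (-3)) ^ b
        ≤ 2 ^ b * (2 ^ b) ^ 2 * (Real.exp (-3)) ^ b := by gcongr
      _ = (8 * Real.exp (-3)) ^ b := by
          rw [mul_pow, show (8:ℝ) = 2 * 2 ^ 2 by norm_num, mul_pow, ← pow_mul, ← pow_mul, mul_comm b 2]
      _ < 1 := pow_lt_one₀ (by positivity) (by linarith) (by have := hmin k; omega)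
  obtain ⟨F, -, -, -, -, -, hz, hdist⟩ := pdr_tower d π S hSmono D
    (fun k => by have := hmin k; simp only [hDdef]; omega) hD m
  have hTm : pdrT D m ≤ 3 * 192 * M := by
    rcases Nat.eq_zero_or_pos m with h0 | hpos
    · rw [h0]; simp only [pdrT, hDdef]
      have := min_le_right (pdrB 0) M; omega
    · obtain ⟨k, hk⟩ : ∃ k, m = k + 1 := ⟨m - 1, by omega⟩
      have hlt : ¬ N ≤ 2 ^ pdrB k := Nat.find_min hex (by omega)
      have h1 : pdrB k ≤ M := by
        by_contra hcon
        exact hlt (hNM.trans (Nat.pow_le_pow_right (by norm_num) (by omega)))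
      have h2 := pdrT_le M k
      rw [hk]; simp only [pdrT]
      have h3 := min_le_right (pdrB (k + 1)) M
      have h4 : D (k + 1) = 192 * min (pdrB (k + 1)) M := rfl
      change pdrT D k ≤ _ at h2
      omega
  let f : EuclideanSpace ℝ (Fin d) → EuclideanSpace ℝ (Fin (pdrT D m)) :=
    Function.extend π F 0
  have hf : ∀ i, f (π i) = F i := fun i => hπ.extend_apply F 0 i
  have hLpos : ∀ l : ℕ, (0:ℝ) < 2 * (2 ^ (l + 1) - 1) := by
    intro l
    have : (1:ℝ) < 2 ^ (l + 1) := one_lt_pow₀ (by norm_num) (by omega)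
    linarith
  refine ⟨pdrT D m, ?_, f, ?_, ?_⟩
  · have : (pdrT D m : ℝ) ≤ 3 * 192 * M := by exact_mod_cast hTm
    linarith
  · intro a ha b hb hab
    rw [← hrange] at ha hb
    obtain ⟨i, rfl⟩ := ha
    obtain ⟨j, rfl⟩ := hb
    rw [hf, hf] at hab
    have h1 := (hdist m le_rfl i ((hS _ _).mpr (i.2.trans_le hmN)) j
      ((hS _ _).mpr (j.2.trans_le hmN))).1
    rw [hab, sub_self, norm_zero, mul_zero] at h1
    exact sub_eq_zero.mp (norm_le_zero_iff.mp h1)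
  · intro j h4 hjN
    have hexj : ∃ k, j ≤ 2 ^ pdrB k := ⟨m, hjN.trans hmN⟩
    obtain ⟨k, hk, hkmin⟩ : ∃ k, j ≤ 2 ^ pdrB k ∧ ∀ l < k, 2 ^ pdrB l < j :=
      ⟨Nat.find hexj, Nat.find_spec hexj, fun l hl => not_le.mp (Nat.find_min hexj hl)⟩
    have hkm : k ≤ m := by
      by_contra hcon
      have := hkmin m (by omega)
      omega
    have hjpos : (0:ℝ) < j := by positivity
    have hlog2 : (2:ℝ) ≤ Real.logb 2 j := by
      rw [Real.le_logb_iff_rpow_le (by norm_num) hjpos]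
      norm_num
      exact_mod_cast h4
    have hlogB : ∀ l < k, (pdrB l : ℝ) ≤ Real.logb 2 j := by
      intro l hl
      rw [Real.le_logb_iff_rpow_le (by norm_num) hjpos, Real.rpow_natCast]
      exact_mod_cast (hkmin l hl).le
    constructor
    · have hD2 : 2 * (2 ^ (k + 1) - 1) * (3 * (k:ℝ) + 1)
          ≤ (3 + ε) * Real.logb 2 (Real.logb 2 j) := by
        have hll1 : 1 ≤ Real.logb 2 (Real.logb 2 j) := by
          rw [Real.le_logb_iff_rpow_le (by norm_num) (by linarith), Real.rpow_one]
          exact hlog2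
        rcases Nat.eq_zero_or_pos k with h0 | hpos
        · subst h0; norm_num; nlinarith
        · obtain ⟨l, rfl⟩ : ∃ l, k = l + 1 := ⟨k - 1, by omega⟩
          have h1 := hlogB l (by omega)
          have h2 : (16 * 3 ^ l : ℝ) ≤ Real.logb 2 (Real.logb 2 j) := by
            rw [Real.le_logb_iff_rpow_le (by norm_num) (by linarith)]
            calc (2:ℝ) ^ (16 * 3 ^ l : ℝ) = (2:ℝ) ^ ((16 * 3 ^ l : ℕ) : ℝ) := by push_cast; rfl
              _ = (pdrB l : ℝ) := by rw [Real.rpow_natCast]; unfold pdrB; push_cast; rfl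
              _ ≤ _ := h1
          have h3 : (2:ℝ) ^ (l + 1) * (3 * ((l + 1 : ℕ) : ℝ) + 1) ≤ 4 * 3 ^ (l + 1) := by
            exact_mod_cast pdr_growth (l + 1)
          have h5 : (2:ℝ) ^ (l + 1 + 1) = 2 * 2 ^ (l + 1) := by ring
          have h6 : (3:ℝ) ^ (l + 1) = 3 * 3 ^ l := by ring
          rw [h5]
          have h7 : (0:ℝ) ≤ ((l + 1 : ℕ) : ℝ) := Nat.cast_nonneg _
          nlinarith
      refine ⟨(2 * (2 ^ (k + 1) - 1))⁻¹, inv_pos.mpr (hLpos k), ?_⟩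
      rintro _ ⟨i, hi, rfl⟩ _ ⟨i', hi', rfl⟩
      rw [hf, hf]
      obtain ⟨h1, h2⟩ := hdist k hkm i ((hS _ _).mpr (lt_of_lt_of_le hi hk)) i'
        ((hS _ _).mpr (lt_of_lt_of_le hi' hk))
      constructor
      · rw [inv_mul_le_iff₀ (hLpos k)]; exact h1
      · refine h2.trans ?_
        gcongr
        rw [inv_mul_eq_div, le_div_iff₀ (hLpos k)]
        linarith
    · intro l hl
      rw [hf]
      refine hz k hkm _ ((hS _ _).mpr ?_) l (le_trans ?_ hl)
      · show j - 1 < _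
        omega
      · have hT : (pdrT D k : ℝ) ≤ 2 * (192 * pdrB k) := by exact_mod_cast pdrT_le M k
        have hpow : (Real.logb 2 j) ^ 3 ≤ (Real.logb 2 j) ^ ((3:ℝ) + ε) := by
          rw [← Real.rpow_natCast]
          exact Real.rpow_le_rpow_of_exponent_le (by linarith) (by push_cast; linarith)
        have hone : 1 ≤ (Real.logb 2 j) ^ 3 := one_le_pow₀ (by linarith)
        have hb1 : (1:ℝ) ≤ pdrB 0 := by exact_mod_cast hB0pos
        have hmain : (pdrB k : ℝ) ≤ pdrB 0 * (Real.logb 2 j) ^ ((3:ℝ) + ε) := by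
          rcases Nat.eq_zero_or_pos k with h0 | hpos
          · subst h0; nlinarith
          · obtain ⟨q, rfl⟩ : ∃ q, k = q + 1 := ⟨k - 1, by omega⟩
            have h1 := hlogB q (by omega)
            have h2 : (pdrB (q + 1) : ℝ) ≤ (Real.logb 2 j) ^ 3 := by
              rw [pdrB_succ]; push_cast; gcongr
            nlinarith
        have : (pdrT D k : ℝ) ≤ 2 * (192 * (pdrB 0 : ℝ)) * (Real.logb 2 j) ^ ((3:ℝ) + ε) := by
          nlinarith
        exact_mod_cast this.trans (Nat.le_ceil _)
end

section
/- For every ε ∈ (0,1) there exists a constant c₁ > 0 (depending only on ε) such that the following holds. For every d ≥ 1, every finite set X ⊂ ℝ^d with |X| = N, every bijection π : {1,…,N} → X, and every integer k with 1 < k < log₂ log₂ log₂ N, there exist d' ≤ c₁·log₂ N and an injective map f : X → ℝ^{d'} such that: (i) f has distortion at most (3 + ε)^k on all of X; and (ii) for every j ∈ {2,…,N}, all but the first ⌈c₁·log₂ j · (log₂ N)^{1/k}⌉ coordinates of f(π(j)) equal 0. -/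
theorem kb_point {E F ι : Type*} [NormedAddCommGroup E] [InnerProductSpace ℝ E]
    [NormedAddCommGroup F] [InnerProductSpace ℝ F] [FiniteDimensional ℝ F] [Fintype ι] [Nonempty ι]
    (x : ι → E) (y : ι → F) (h : ∀ i j, ‖y i - y j‖ ≤ ‖x i - x j‖) (a : E) :
    ∃ b : F, ∀ i, ‖b - y i‖ ≤ ‖a - x i‖ := by
  classical
  let G : F → ℝ := fun b => Finset.univ.sup' Finset.univ_nonempty
    (fun i => ‖b - y i‖ ^ 2 - ‖a - x i‖ ^ 2)
  have hGle : ∀ b i, ‖b - y i‖ ^ 2 - ‖a - x i‖ ^ 2 ≤ G b := fun b i =>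
    Finset.le_sup' (fun i => ‖b - y i‖ ^ 2 - ‖a - x i‖ ^ 2) (Finset.mem_univ i)
  have hGc : Continuous G := by
    apply Continuous.finset_sup'_apply
    intro i _
    fun_prop
  obtain ⟨i0⟩ := (inferInstance : Nonempty ι)
  have hlim : Filter.Tendsto G (Filter.cocompact F) Filter.atTop := by
    have h1 : Filter.Tendsto (fun b : F => ‖b - y i0‖) (Filter.cocompact F) Filter.atTop := by
      have := tendsto_dist_right_cocompact_atTop (y i0)
      simpa [dist_eq_norm] using this
    have h2 : Filter.Tendsto (fun b : F => ‖b - y i0‖ ^ 2 - ‖a - x i0‖ ^ 2)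
        (Filter.cocompact F) Filter.atTop := by
      apply Filter.tendsto_atTop_add_const_right
      exact (Filter.tendsto_pow_atTop two_ne_zero).comp h1
    exact Filter.tendsto_atTop_mono (fun b => hGle b i0) h2
  obtain ⟨b, hb⟩ := hGc.exists_forall_le hlim
  by_cases hneg : G b ≤ 0
  · refine ⟨b, fun i => ?_⟩
    have := hGle b i
    exact (sq_le_sq₀ (norm_nonneg _) (norm_nonneg _)).1 (by linarith)
  exfalso
  push Not at hneg
  let A : Finset ι := Finset.univ.filter (fun i => ‖b - y i‖ ^ 2 - ‖a - x i‖ ^ 2 = G b)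
  have hmem : b ∈ convexHull ℝ ((A.image y : Finset F) : Set F) := by
    by_contra hnot
    obtain ⟨f, u, hfu, hub⟩ := geometric_hahn_banach_point_closed (convex_convexHull ℝ _)
      ((A.image y).finite_toSet.isClosed_convexHull ℝ) hnot
    obtain ⟨v, rfl⟩ := (InnerProductSpace.toDual ℝ F).surjective f
    simp only [InnerProductSpace.toDual_apply_apply] at hfu hub
    have hA : ∀ i ∈ A, 0 < inner ℝ v (y i - b) := by
      intro i hi
      have := hub (y i) (subset_convexHull ℝ _ (by simpa using ⟨i, hi, rfl⟩))
      rw [inner_sub_right]; linarith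
    have hexp : ∀ (t : ℝ) i, ‖b + t • v - y i‖ ^ 2
        = ‖b - y i‖ ^ 2 - 2 * t * inner ℝ v (y i - b) + t ^ 2 * ‖v‖ ^ 2 := by
      intro t i
      have e : b + t • v - y i = t • v - (y i - b) := by abel
      rw [e, norm_sub_sq_real, norm_smul, real_inner_smul_left, norm_sub_rev (y i) b, mul_pow,
        Real.norm_eq_abs, sq_abs]
      ring
    have hev : ∀ i, ∀ᶠ t : ℝ in nhdsWithin 0 (Set.Ioi 0),
        ‖b + t • v - y i‖ ^ 2 - ‖a - x i‖ ^ 2 < G b := by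
      intro i
      by_cases hi : i ∈ A
      · have hp := hA i hi
        have hi' : ‖b - y i‖ ^ 2 - ‖a - x i‖ ^ 2 = G b := by simpa [A] using hi
        have hc : Filter.Tendsto (fun t : ℝ => t * ‖v‖ ^ 2) (nhdsWithin 0 (Set.Ioi 0)) (nhds 0) := by
          have : Continuous (fun t : ℝ => t * ‖v‖ ^ 2) := by fun_prop
          have := this.tendsto 0
          simp only [zero_mul] at this
          exact this.mono_left nhdsWithin_le_nhds
        filter_upwards [hc.eventually (gt_mem_nhds hp), self_mem_nhdsWithin] with t ht ht0
        have ht0 : 0 < t := ht0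
        rw [hexp]
        nlinarith [mul_pos ht0 hp, mul_lt_mul_of_pos_left ht ht0]
      · have hi' : ‖b - y i‖ ^ 2 - ‖a - x i‖ ^ 2 < G b := by
          refine lt_of_le_of_ne (hGle b i) ?_
          simpa [A] using hi
        have : Continuous (fun t : ℝ => ‖b + t • v - y i‖ ^ 2 - ‖a - x i‖ ^ 2) := by fun_prop
        have := this.tendsto 0
        simp only [zero_smul, add_zero] at this
        exact (this.mono_left nhdsWithin_le_nhds).eventually (gt_mem_nhds hi')
    obtain ⟨t, ht⟩ := (Filter.eventually_all.2 hev).exists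
    have : G (b + t • v) < G b := by
      rw [Finset.sup'_lt_iff]
      intro i _
      exact ht i
    exact absurd (hb (b + t • v)) (not_le.2 this)
  rw [Finset.mem_convexHull'] at hmem
  obtain ⟨w, hw0, hw1, hwb⟩ := hmem
  have hch : ∀ z : F, ∃ i : ι, z ∈ A.image y → i ∈ A ∧ y i = z := by
    intro z
    by_cases hz : z ∈ A.image y
    · obtain ⟨i, hi, h'⟩ := Finset.mem_image.1 hz
      exact ⟨i, fun _ => ⟨hi, h'⟩⟩
    · exact ⟨i0, fun h => absurd h hz⟩
  choose c hc using hch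
  have key : ∀ z ∈ A.image y, ∀ z' ∈ A.image y,
      inner ℝ (x (c z) - a) (x (c z') - a) ≤ - G b + inner ℝ (z - b) (z' - b) := by
    intro z hz z' hz'
    obtain ⟨h1, h2⟩ := hc z hz
    obtain ⟨h3, h4⟩ := hc z' hz'
    have h5 : ‖b - y (c z)‖ ^ 2 - ‖a - x (c z)‖ ^ 2 = G b := by simpa [A] using h1
    have h6 : ‖b - y (c z')‖ ^ 2 - ‖a - x (c z')‖ ^ 2 = G b := by simpa [A] using h3
    have h7 := h (c z) (c z')
    rw [h2, h4] at h7
    rw [h2, norm_sub_rev b, norm_sub_rev a] at h5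
    rw [h4, norm_sub_rev b, norm_sub_rev a] at h6
    have e1 := norm_sub_sq_real (z - b) (z' - b)
    have e2 := norm_sub_sq_real (x (c z) - a) (x (c z') - a)
    rw [sub_sub_sub_cancel_right] at e1 e2
    have h8 := pow_le_pow_left₀ (norm_nonneg _) h7 2
    linarith
  have s1 : ∑ z ∈ A.image y, w z • (z - b) = 0 := by
    simp only [smul_sub, Finset.sum_sub_distrib, ← Finset.sum_smul, hw1, hwb, one_smul, sub_self]
  have hsum : ∑ z ∈ A.image y, ∑ z' ∈ A.image y,
      w z * (w z' * inner ℝ (x (c z) - a) (x (c z') - a))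
      ≤ ∑ z ∈ A.image y, ∑ z' ∈ A.image y, w z * (w z' * (- G b + inner ℝ (z - b) (z' - b))) := by
    refine Finset.sum_le_sum fun z hz => Finset.sum_le_sum fun z' hz' => ?_
    exact mul_le_mul_of_nonneg_left (mul_le_mul_of_nonneg_left (key z hz z' hz') (hw0 z' hz'))
      (hw0 z hz)
  have l1 : ∑ z ∈ A.image y, ∑ z' ∈ A.image y,
      w z * (w z' * inner ℝ (x (c z) - a) (x (c z') - a))
      = inner ℝ (∑ z ∈ A.image y, w z • (x (c z) - a)) (∑ z ∈ A.image y, w z • (x (c z) - a)) := by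
    simp only [sum_inner, inner_sum, real_inner_smul_left, real_inner_smul_right]
    refine Finset.sum_congr rfl fun z _ => Finset.sum_congr rfl fun z' _ => ?_
    rw [real_inner_comm]
  have l2 : ∑ z ∈ A.image y, ∑ z' ∈ A.image y, w z * (w z' * (- G b + inner ℝ (z - b) (z' - b)))
      = - G b + inner ℝ (∑ z ∈ A.image y, w z • (z - b)) (∑ z ∈ A.image y, w z • (z - b)) := by
    simp only [sum_inner, inner_sum, real_inner_smul_left, real_inner_smul_right, mul_add,
      Finset.sum_add_distrib]
    congr 1
    · simp only [← Finset.mul_sum, ← Finset.sum_mul, hw1, one_mul]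
    · refine Finset.sum_congr rfl fun z _ => Finset.sum_congr rfl fun z' _ => ?_
      rw [real_inner_comm]
  rw [l1, l2, s1, inner_zero_left] at hsum
  have := real_inner_self_nonneg (F := E) (x := ∑ z ∈ A.image y, w z • (x (c z) - a))
  linarith

theorem kb_finite {E F : Type*} [NormedAddCommGroup E] [InnerProductSpace ℝ E]
    [NormedAddCommGroup F] [InnerProductSpace ℝ F] [FiniteDimensional ℝ F]
    (K : ℝ) (hK : 0 ≤ K) (S T : Finset E) (f : E → F)
    (hf : ∀ x ∈ S, ∀ y ∈ S, ‖f x - f y‖ ≤ K * ‖x - y‖) :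
    ∃ g : E → F, (∀ x ∈ S, g x = f x) ∧
      ∀ x, x ∈ S ∨ x ∈ T → ∀ y, y ∈ S ∨ y ∈ T → ‖g x - g y‖ ≤ K * ‖x - y‖ := by
  classical
  induction T using Finset.induction_on with
  | empty => exact ⟨f, fun _ _ => rfl, by simpa using hf⟩
  | insert a T ha ih =>
    obtain ⟨g, hg, hL⟩ := ih
    by_cases haS : a ∈ S
    · refine ⟨g, hg, fun x hx y hy => hL x ?_ y ?_⟩
      · rcases hx with hx | hx
        · exact Or.inl hx
        · rcases Finset.mem_insert.1 hx with rfl | hx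
          · exact Or.inl haS
          · exact Or.inr hx
      · rcases hy with hx | hx
        · exact Or.inl hx
        · rcases Finset.mem_insert.1 hx with rfl | hx
          · exact Or.inl haS
          · exact Or.inr hx
    have hb : ∃ b : F, ∀ x, x ∈ S ∨ x ∈ T → ‖b - g x‖ ≤ K * ‖a - x‖ := by
      by_cases hne : (S ∪ T).Nonempty
      · have : Nonempty (S ∪ T : Finset E) := hne.to_subtype
        obtain ⟨b, hb⟩ := kb_point (ι := (S ∪ T : Finset E)) (fun i => K • (i : E)) (fun i => g i)
          (by
            rintro ⟨i, hi⟩ ⟨j, hj⟩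
            rw [← smul_sub, norm_smul, Real.norm_of_nonneg hK]
            exact hL i (Finset.mem_union.1 hi) j (Finset.mem_union.1 hj)) (K • a)
        refine ⟨b, fun x hx => ?_⟩
        have := hb ⟨x, Finset.mem_union.2 hx⟩
        rwa [← smul_sub, norm_smul, Real.norm_of_nonneg hK] at this
      · refine ⟨0, fun x hx => absurd ⟨x, Finset.mem_union.2 hx⟩ hne⟩
    obtain ⟨b, hb⟩ := hb
    have hup : ∀ x, x ∈ S ∨ x ∈ T → Function.update g a b x = g x := by
      intro x hx
      apply Function.update_of_ne
      rintro rfl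
      tauto
    refine ⟨Function.update g a b, fun x hx => by rw [hup x (Or.inl hx), hg x hx], ?_⟩
    have hcase : ∀ x, x ∈ S ∨ x ∈ insert a T → x = a ∨ (x ∈ S ∨ x ∈ T) := by
      intro x hx
      rw [Finset.mem_insert] at hx
      tauto
    intro x hx y hy
    rcases hcase x hx with rfl | hx' <;> rcases hcase y hy with rfl | hy'
    · simp
    · rw [hup y hy', Function.update_self]; exact hb y hy'
    · rw [hup x hx', Function.update_self, norm_sub_rev, norm_sub_rev x]; exact hb x hx'
    · rw [hup x hx', hup y hy']
      exact (hL x hx' y hy')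

def bsgn (b : Bool) : ℝ := if b then 1 else -1

theorem sum_bool_cons (d : ℕ) (v : Fin (d+1) → ℝ) (φ : ℝ → ℝ) :
    ∑ ω : Fin (d+1) → Bool, φ (∑ i, bsgn (ω i) * v i)
      = ∑ ω : Fin d → Bool, (φ (v 0 + ∑ i, bsgn (ω i) * v i.succ)
          + φ (-v 0 + ∑ i, bsgn (ω i) * v i.succ)) := by
  rw [← (Fin.consEquiv (fun _ : Fin (d+1) => Bool)).sum_comp, Fintype.sum_prod_type,
    Fintype.sum_bool, ← Finset.sum_add_distrib]
  simp [Fin.sum_univ_succ, Fin.consEquiv, bsgn]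

theorem avg_sq (d : ℕ) (v : Fin d → ℝ) :
    ∑ ω : Fin d → Bool, (∑ i, bsgn (ω i) * v i) ^ 2 = 2 ^ d * ∑ i, v i ^ 2 := by
  induction d with
  | zero => simp
  | succ d ih =>
    rw [sum_bool_cons d v (fun z => z ^ 2), Fin.sum_univ_succ (fun i => v i ^ 2)]
    have : ∀ ω : Fin d → Bool, (v 0 + ∑ i, bsgn (ω i) * v i.succ) ^ 2
          + (-v 0 + ∑ i, bsgn (ω i) * v i.succ) ^ 2
          = 2 * v 0 ^ 2 + 2 * (∑ i, bsgn (ω i) * v i.succ) ^ 2 := fun ω => by ring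
    simp only [this, Finset.sum_add_distrib, ← Finset.mul_sum, ih (fun i => v i.succ)]
    simp
    ring

theorem avg_exp (d : ℕ) (v : Fin d → ℝ) (t : ℝ) (ht : 0 ≤ t) (h : 2 * t * ∑ i, v i ^ 2 < 1) :
    ∑ ω : Fin d → Bool, Real.exp (t * (∑ i, bsgn (ω i) * v i) ^ 2)
      ≤ 2 ^ d * Real.exp (t * (∑ i, v i ^ 2) / (1 - 2 * t * ∑ i, v i ^ 2)) := by
  induction d generalizing t with
  | zero => simp
  | succ d ih =>
    rw [sum_bool_cons d v (fun z => Real.exp (t * z ^ 2))]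
    rw [Fin.sum_univ_succ (fun i => v i ^ 2)] at h ⊢
    set B := ∑ i : Fin d, v i.succ ^ 2 with hB
    have hB0 : 0 ≤ B := Finset.sum_nonneg fun i _ => sq_nonneg _
    set p := v 0 ^ 2 with hp
    have hp0 : 0 ≤ p := sq_nonneg _
    set t' := t + 2 * t ^ 2 * p with ht'
    have ht'0 : 0 ≤ t' := by positivity
    have htp : 0 ≤ t * p := by positivity
    have htB : 0 ≤ t * B := by positivity
    have hpos : 0 < 1 - 2 * t * (p + B) := by linarith
    have hA : t' * (1 - 2 * t * p) ≤ t := by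
      have : t' * (1 - 2 * t * p) = t - 4 * (t * p) ^ 2 * t := by rw [ht']; ring
      rw [this]
      have : 0 ≤ 4 * (t * p) ^ 2 * t := by positivity
      linarith
    have hC : t' * B * (1 - 2 * t * p) ≤ t * B := by nlinarith
    have h1p : 0 < 1 - 2 * t * p := by nlinarith
    have hlt : 2 * t' * B < 1 := by
      by_contra hcon
      push Not at hcon
      nlinarith
    have step : ∀ ω : Fin d → Bool,
        Real.exp (t * (v 0 + ∑ i, bsgn (ω i) * v i.succ) ^ 2)
          + Real.exp (t * (-v 0 + ∑ i, bsgn (ω i) * v i.succ) ^ 2)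
        ≤ 2 * Real.exp (t * p) * Real.exp (t' * (∑ i, bsgn (ω i) * v i.succ) ^ 2) := by
      intro ω
      set z := ∑ i, bsgn (ω i) * v i.succ
      have e1 : t * (v 0 + z) ^ 2 = t * p + t * z ^ 2 + 2 * t * v 0 * z := by rw [hp]; ring
      have e2 : t * (-v 0 + z) ^ 2 = t * p + t * z ^ 2 + -(2 * t * v 0 * z) := by rw [hp]; ring
      rw [e1, e2, Real.exp_add _ (2 * t * v 0 * z), Real.exp_add _ (-(2 * t * v 0 * z)), ← mul_add]
      have hc := Real.cosh_le_exp_half_sq (2 * t * v 0 * z)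
      rw [Real.cosh_eq] at hc
      have e3 : 2 * Real.exp (t * p) * Real.exp (t' * z ^ 2)
          = Real.exp (t * p + t * z ^ 2) * (2 * Real.exp ((2 * t * v 0 * z) ^ 2 / 2)) := by
        have : t' * z ^ 2 = t * z ^ 2 + (2 * t * v 0 * z) ^ 2 / 2 := by rw [ht', hp]; ring
        rw [this, Real.exp_add, Real.exp_add]; ring
      rw [e3]
      apply mul_le_mul_of_nonneg_left _ (Real.exp_pos _).le
      linarith
    refine (Finset.sum_le_sum fun ω _ => step ω).trans ?_
    rw [← Finset.mul_sum]
    refine (mul_le_mul_of_nonneg_left (ih (fun i => v i.succ) t' ht'0 hlt) (by positivity)).trans ?_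
    have e : 2 * Real.exp (t * p) * (2 ^ d * Real.exp (t' * B / (1 - 2 * t' * B)))
        = 2 ^ (d + 1) * Real.exp (t * p + t' * B / (1 - 2 * t' * B)) := by
      rw [Real.exp_add]; ring
    rw [e]
    apply mul_le_mul_of_nonneg_left _ (by positivity)
    apply Real.exp_le_exp.2
    have k1 : t' * B / (1 - 2 * t' * B) ≤ t * B / (1 - 2 * t * (p + B)) := by
      rw [div_le_div_iff₀ (by linarith) hpos]
      nlinarith
    have k2 : t * p ≤ t * p / (1 - 2 * t * (p + B)) := by
      rw [le_div_iff₀ hpos]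
      nlinarith
    calc _ ≤ t * p / (1 - 2 * t * (p + B)) + t * B / (1 - 2 * t * (p + B)) := add_le_add k2 k1
      _ = _ := by rw [← add_div]; ring

theorem exp_quad (x : ℝ) : Real.exp x ≤ 1 + x + x ^ 2 * Real.exp |x| := by
  have h1 : 1 ≤ Real.exp |x| := Real.one_le_exp (abs_nonneg x)
  by_cases hx : |x| ≤ 1
  · have := (abs_le.1 (Real.abs_exp_sub_one_sub_id_le hx)).2
    nlinarith [sq_nonneg x]
  · push Not at hx
    have hx2 : 1 ≤ x ^ 2 := by rw [← sq_abs]; nlinarith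
    rcases lt_abs.1 hx with h | h
    · rw [abs_of_pos (by linarith)] at *
      nlinarith [Real.exp_pos x]
    · have : Real.exp x ≤ 1 := Real.exp_le_one_iff.2 (by linarith)
      nlinarith [Real.add_one_le_exp |x|, neg_le_abs x]

theorem avg_exp_small (d : ℕ) (v : Fin d → ℝ) (hv : ∑ i, v i ^ 2 = 1) (s : ℝ) (hs : |s| ≤ 1/16) :
    ∑ ω : Fin d → Bool, Real.exp (s * (∑ i, bsgn (ω i) * v i) ^ 2)
      ≤ 2 ^ d * Real.exp (s + 1024 * s ^ 2) := by
  have hpt : ∀ z : ℝ, Real.exp (s * z ^ 2) ≤ 1 + s * z ^ 2 + 512 * s ^ 2 * Real.exp (1/8 * z ^ 2) := by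
    intro z
    have h1 := exp_quad (s * z ^ 2)
    have hz : 0 ≤ z ^ 2 := sq_nonneg z
    have h2 : |s * z ^ 2| ≤ z ^ 2 / 16 := by
      rw [abs_mul, abs_of_nonneg hz]; nlinarith
    have h3 := Real.exp_le_exp.2 h2
    have h4 := Real.quadratic_le_exp_of_nonneg (x := z ^ 2 / 16) (by positivity)
    have h5 : (z ^ 2) ^ 2 ≤ 512 * Real.exp (z ^ 2 / 16) := by nlinarith
    have h6 : Real.exp (1/8 * z ^ 2) = Real.exp (z ^ 2 / 16) * Real.exp (z ^ 2 / 16) := by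
      rw [← Real.exp_add]; congr 1; ring
    rw [h6]
    have h7 : (s * z ^ 2) ^ 2 * Real.exp |s * z ^ 2|
        ≤ s ^ 2 * ((512 * Real.exp (z ^ 2 / 16)) * Real.exp (z ^ 2 / 16)) := by
      rw [mul_pow, mul_assoc]
      gcongr
    linarith
  have hE := avg_exp d v (1/8) (by norm_num) (by rw [hv]; norm_num)
  rw [hv] at hE
  have hE2 : Real.exp (1/8 * 1 / (1 - 2 * (1/8) * 1)) ≤ 2 := by
    have : (1/8 * 1 / (1 - 2 * (1/8) * 1) : ℝ) ≤ Real.log 2 := by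
      have := Real.log_two_gt_d9; norm_num at this ⊢; linarith
    calc _ ≤ Real.exp (Real.log 2) := Real.exp_le_exp.2 this
      _ = 2 := Real.exp_log (by norm_num)
  have hE3 : ∑ ω : Fin d → Bool, Real.exp (1/8 * (∑ i, bsgn (ω i) * v i) ^ 2) ≤ 2 ^ d * 2 :=
    hE.trans (mul_le_mul_of_nonneg_left hE2 (by positivity))
  refine (Finset.sum_le_sum fun ω _ => hpt _).trans ?_
  rw [Finset.sum_add_distrib, Finset.sum_add_distrib, ← Finset.mul_sum, ← Finset.mul_sum, avg_sq, hv]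
  have hcard : ∑ ω : Fin d → Bool, (1:ℝ) = 2 ^ d := by simp
  rw [hcard]
  have := mul_le_mul_of_nonneg_left hE3 (show (0:ℝ) ≤ 512 * s ^ 2 by positivity)
  have h9 := mul_le_mul_of_nonneg_left (Real.add_one_le_exp (s + 1024 * s ^ 2))
    (show (0:ℝ) ≤ 2 ^ d by positivity)
  linarith

/-- existence of a good sign matrix -/
theorem jl_signs (d m : ℕ) (V : Finset (EuclideanSpace ℝ (Fin d))) (δ : ℝ) (hδ : 0 < δ)
    (hδ1 : δ < 1) (hm : 2 * (V.card : ℝ) * Real.exp (-(m * δ ^ 2 / 4096)) < 1) :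
    ∃ A : Fin m → Fin d → Bool, ∀ v ∈ V, v ≠ 0 →
      m * (1 - δ) * ‖v‖ ^ 2 ≤ ∑ r, (∑ i, bsgn (A r i) * v i) ^ 2 ∧
      ∑ r, (∑ i, bsgn (A r i) * v i) ^ 2 ≤ m * (1 + δ) * ‖v‖ ^ 2 := by
  classical
  set u : EuclideanSpace ℝ (Fin d) → Fin d → ℝ := fun v i => v i / ‖v‖ with hu
  have hu1 : ∀ v ≠ 0, ∑ i, u v i ^ 2 = 1 := by
    intro v hv
    have : ‖v‖ ^ 2 ≠ 0 := by simpa using hv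
    simp only [hu, div_pow, ← Finset.sum_div]
    rw [div_eq_one_iff_eq this, EuclideanSpace.norm_sq_eq]
    simp
  have hk : ∀ v ≠ 0, ∀ s : ℝ, |s| ≤ 1/16 →
      ∑ A : Fin m → Fin d → Bool, Real.exp (s * ∑ r, (∑ i, bsgn (A r i) * u v i) ^ 2)
        ≤ (2 ^ d) ^ m * Real.exp (m * (s + 1024 * s ^ 2)) := by
    intro v hv s hs
    simp only [Finset.mul_sum, Real.exp_sum]
    rw [← Fintype.sum_pow (fun ω : Fin d → Bool => Real.exp (s * (∑ i, bsgn (ω i) * u v i) ^ 2)) m,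
      Real.exp_nat_mul, ← mul_pow]
    exact pow_le_pow_left₀ (Finset.sum_nonneg fun _ _ => (Real.exp_pos _).le)
      (avg_exp_small d (u v) (hu1 v hv) s hs) m
  set s := δ / 2048 with hs
  have hs0 : 0 < s := by positivity
  have hs1 : |s| ≤ 1/16 := by rw [abs_of_pos hs0, hs]; linarith
  set Q : (Fin m → Fin d → Bool) → EuclideanSpace ℝ (Fin d) → ℝ :=
    fun A v => ∑ r, (∑ i, bsgn (A r i) * u v i) ^ 2 with hQ
  set W := V.filter (fun v => v ≠ 0) with hW
  have hex : ∃ A, ∑ v ∈ W, (Real.exp (s * Q A v - s * (m * (1 + δ)))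
      + Real.exp (-s * Q A v + s * (m * (1 - δ)))) < 1 := by
    by_contra hcon
    push Not at hcon
    have h1 : ((2:ℝ) ^ d) ^ m ≤ ∑ A : Fin m → Fin d → Bool,
        ∑ v ∈ W, (Real.exp (s * Q A v - s * (m * (1 + δ)))
      + Real.exp (-s * Q A v + s * (m * (1 - δ)))) := by
      have := Finset.sum_le_sum (s := (Finset.univ : Finset (Fin m → Fin d → Bool)))
        fun A _ => hcon A
      simpa using this
    rw [Finset.sum_comm] at h1
    have h2 : ∀ v ∈ W, ∑ A : Fin m → Fin d → Bool, (Real.exp (s * Q A v - s * (m * (1 + δ)))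
      + Real.exp (-s * Q A v + s * (m * (1 - δ)))) ≤
        (2 ^ d) ^ m * (2 * Real.exp (-(m * δ ^ 2 / 4096))) := by
      intro v hv
      have hv0 : v ≠ 0 := (Finset.mem_filter.1 hv).2
      simp only [sub_eq_add_neg (s * _), Real.exp_add]
      rw [Finset.sum_add_distrib, ← Finset.sum_mul, ← Finset.sum_mul]
      have a1 := mul_le_mul_of_nonneg_right (hk v hv0 s hs1)
        (Real.exp_pos (-(s * (m * (1 + δ))))).le
      have a2 := mul_le_mul_of_nonneg_right (hk v hv0 (-s) (by rwa [abs_neg]))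
        (Real.exp_pos (s * (m * (1 - δ)))).le
      rw [mul_assoc, ← Real.exp_add] at a1 a2
      have e1 : m * (s + 1024 * s ^ 2) + -(s * (m * (1 + δ))) = -(m * δ ^ 2 / 4096) := by
        rw [hs]; ring
      have e2 : m * (-s + 1024 * (-s) ^ 2) + s * (m * (1 - δ)) = -(m * δ ^ 2 / 4096) := by
        rw [hs]; ring
      rw [e1] at a1
      rw [e2] at a2
      linarith
    have h3 := h1.trans (Finset.sum_le_sum h2)
    rw [Finset.sum_const, nsmul_eq_mul] at h3
    have hc : (W.card : ℝ) ≤ V.card := by exact_mod_cast Finset.card_filter_le _ _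
    have hp : (0:ℝ) < (2 ^ d) ^ m := by positivity
    have h4 : (W.card : ℝ) * ((2 ^ d) ^ m * (2 * Real.exp (-(m * δ ^ 2 / 4096))))
        ≤ (2 ^ d) ^ m * (2 * V.card * Real.exp (-(m * δ ^ 2 / 4096))) := by
      have := mul_le_mul_of_nonneg_right hc
        (show 0 ≤ ((2:ℝ) ^ d) ^ m * (2 * Real.exp (-(m * δ ^ 2 / 4096))) by positivity)
      linarith
    have h5 := mul_lt_mul_of_pos_left hm hp
    linarith
  obtain ⟨A, hA⟩ := hex
  refine ⟨A, fun v hv hv0 => ?_⟩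
  have hvW : v ∈ W := Finset.mem_filter.2 ⟨hv, hv0⟩
  have hlt := (Finset.single_le_sum (f := fun v => Real.exp (s * Q A v - s * (m * (1 + δ)))
      + Real.exp (-s * Q A v + s * (m * (1 - δ)))) (fun v _ => by positivity) hvW).trans_lt hA
  have g1 : s * Q A v - s * (m * (1 + δ)) < 0 := by
    rw [← Real.exp_lt_one_iff]; linarith [Real.exp_pos (-s * Q A v + s * (m * (1 - δ)))]
  have g2 : -s * Q A v + s * (m * (1 - δ)) < 0 := by
    rw [← Real.exp_lt_one_iff]; linarith [Real.exp_pos (s * Q A v - s * (m * (1 + δ)))]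
  have g1' : Q A v < m * (1 + δ) := by
    by_contra hc; push Not at hc; nlinarith [mul_le_mul_of_nonneg_left hc hs0.le]
  have g2' : m * (1 - δ) < Q A v := by
    by_contra hc; push Not at hc; nlinarith [mul_le_mul_of_nonneg_left hc hs0.le]
  have hn : 0 < ‖v‖ := norm_pos_iff.2 hv0
  have hQv : ∑ r, (∑ i, bsgn (A r i) * v i) ^ 2 = Q A v * ‖v‖ ^ 2 := by
    simp only [hQ, Finset.sum_mul, hu]
    refine Finset.sum_congr rfl fun r _ => ?_
    rw [← mul_pow, Finset.sum_mul]
    congr 1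
    refine Finset.sum_congr rfl fun i _ => ?_
    field_simp
  rw [hQv]
  exact ⟨by gcongr, by gcongr⟩

/-- Johnson–Lindenstrauss -/
theorem jl_linear (d m : ℕ) (V : Finset (EuclideanSpace ℝ (Fin d))) (δ : ℝ) (hδ : 0 < δ)
    (hδ1 : δ < 1) (hm0 : 0 < m) (hm : 2 * (V.card : ℝ) * Real.exp (-(m * δ ^ 2 / 4096)) < 1) :
    ∃ A : EuclideanSpace ℝ (Fin d) → EuclideanSpace ℝ (Fin m), A 0 = 0 ∧
      (∀ x y, A (x - y) = A x - A y) ∧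
      ∀ v ∈ V, (1 - δ) * ‖v‖ ^ 2 ≤ ‖A v‖ ^ 2 ∧ ‖A v‖ ^ 2 ≤ (1 + δ) * ‖v‖ ^ 2 := by
  obtain ⟨B, hB⟩ := jl_signs d m V δ hδ hδ1 hm
  have hmr : (0:ℝ) < m := by exact_mod_cast hm0
  let A : EuclideanSpace ℝ (Fin d) → EuclideanSpace ℝ (Fin m) := fun v =>
    WithLp.toLp 2 (fun r => (∑ i, bsgn (B r i) * v i) / Real.sqrt m)
  have h0 : A 0 = 0 := by
    ext r; simp [A]
  refine ⟨A, h0, ?_, ?_⟩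
  · intro x y
    ext r
    simp [A, mul_sub, Finset.sum_sub_distrib, sub_div]
  · intro v hv
    by_cases hv0 : v = 0
    · subst hv0; rw [h0]; simp
    obtain ⟨h1, h2⟩ := hB v hv hv0
    have : ‖A v‖ ^ 2 = (∑ r, (∑ i, bsgn (B r i) * v i) ^ 2) / m := by
      rw [EuclideanSpace.norm_sq_eq, Finset.sum_div]
      refine Finset.sum_congr rfl fun r _ => ?_
      simp only [A, Real.norm_eq_abs, sq_abs, div_pow, Real.sq_sqrt hmr.le]
    rw [this, le_div_iff₀ hmr, div_le_iff₀ hmr]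
    constructor <;> linarith

theorem num_lower (D c β α r u w z : ℝ) (hD0 : 0 < D) (hr0 : 0 ≤ r)
    (hβD : β * (1 + D) = D) (hcD : c * D = 2 * D + 1) (hw1 : r - u ≤ w)
    (b1 : β * w ^ 2 ≤ α * z) : r ^ 2 ≤ c * (u ^ 2 + α * z) := by
  have hru : r ^ 2 ≤ (u + w) ^ 2 := pow_le_pow_left₀ hr0 (by linarith) 2
  have low : r ^ 2 * (D * (1 + D)) ≤ ((2 * D + 1) * (u ^ 2 + β * w ^ 2)) * (1 + D) := by
    have e4 : ((2 * D + 1) * (u ^ 2 + β * w ^ 2)) * (1 + D)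
        = (u + w) ^ 2 * (D * (1 + D)) + ((1 + D) * u - D * w) ^ 2 := by
      have : ((2 * D + 1) * (u ^ 2 + β * w ^ 2)) * (1 + D)
        = (2 * D + 1) * ((1 + D) * u ^ 2 + (β * (1 + D)) * w ^ 2) := by ring
      rw [this, hβD]; ring
    rw [e4]
    have := mul_le_mul_of_nonneg_right hru (show 0 ≤ D * (1 + D) by positivity)
    linarith [sq_nonneg ((1 + D) * u - D * w)]
  have low2 : r ^ 2 * D ≤ (2 * D + 1) * (u ^ 2 + β * w ^ 2) := by
    refine le_of_mul_le_mul_right ?_ (show 0 < 1 + D by positivity)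
    linarith
  refine le_of_mul_le_mul_right ?_ hD0
  have e5 : c * (u ^ 2 + α * z) * D = (2 * D + 1) * (u ^ 2 + α * z) := by rw [← hcD]; ring
  rw [e5]
  refine low2.trans ?_
  gcongr

theorem num_upper (D ε c β α r u w z : ℝ) (hD : 1 ≤ D) (hε : 0 < ε)
    (hc0 : 0 < c) (hβ0 : 0 < β) (hu0 : 0 ≤ u) (hw0 : 0 ≤ w)
    (hu1 : u ≤ D * r) (hw2 : w ≤ (1 + D) * r)
    (hβD : β * (1 + D) = D) (hcD : c * D = 2 * D + 1)
    (b2 : α * z ≤ (1 + 2 * ε / 3) * β * w ^ 2) :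
    c * (u ^ 2 + α * z) ≤ ((3 + ε) * D * r) ^ 2 := by
  have hD0 : 0 < D := by linarith
  have h1 : u ^ 2 ≤ (D * r) ^ 2 := pow_le_pow_left₀ hu0 hu1 2
  have h2 : w ^ 2 ≤ ((1 + D) * r) ^ 2 := pow_le_pow_left₀ hw0 hw2 2
  have h3 : α * z ≤ (1 + 2 * ε / 3) * (D * (1 + D) * r ^ 2) := by
    refine b2.trans ?_
    have := mul_le_mul_of_nonneg_left h2 (show 0 ≤ (1 + 2 * ε / 3) * β by positivity)
    refine this.trans (le_of_eq ?_)
    have : (1 + 2 * ε / 3) * β * ((1 + D) * r) ^ 2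
      = (1 + 2 * ε / 3) * ((β * (1 + D)) * (1 + D) * r ^ 2) := by ring
    rw [this, hβD]
  have h4 : u ^ 2 + α * z ≤ (1 + 2 * ε / 3) * (D * (2 * D + 1) * r ^ 2) := by
    have : 0 ≤ 2 * ε / 3 * (D * r) ^ 2 := by positivity
    linarith
  have h5 : c * (u ^ 2 + α * z) ≤ (1 + 2 * ε / 3) * (2 * D + 1) ^ 2 * r ^ 2 := by
    have := mul_le_mul_of_nonneg_left h4 hc0.le
    refine this.trans (le_of_eq ?_)
    have : c * ((1 + 2 * ε / 3) * (D * (2 * D + 1) * r ^ 2))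
      = (1 + 2 * ε / 3) * ((c * D) * (2 * D + 1) * r ^ 2) := by ring
    rw [this, hcD]; ring
  refine h5.trans ?_
  have h6 : (2 * D + 1) ^ 2 ≤ (3 * D) ^ 2 := pow_le_pow_left₀ (by positivity) (by linarith) 2
  have h7 : (1 + 2 * ε / 3) * (2 * D + 1) ^ 2 ≤ ((3 + ε) * D) ^ 2 := by
    have := mul_le_mul_of_nonneg_left h6 (show 0 ≤ 1 + 2 * ε / 3 by positivity)
    have : 0 ≤ (ε * D) ^ 2 := by positivity
    linarith
  rw [mul_pow _ r]
  gcongr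

/-- one extension step -/
theorem ext_step (d M m : ℕ) (S T : Finset (EuclideanSpace ℝ (Fin d))) (hST : S ⊆ T)
    (f : EuclideanSpace ℝ (Fin d) → EuclideanSpace ℝ (Fin M)) (D ε : ℝ) (hD : 1 ≤ D)
    (hε : 0 < ε) (hε1 : ε < 1)
    (hf : ∀ x ∈ S, ∀ y ∈ S, ‖x - y‖ ≤ ‖f x - f y‖ ∧ ‖f x - f y‖ ≤ D * ‖x - y‖)
    (hm0 : 0 < m) (hm : 2 * ((T.card : ℝ) ^ 2) * Real.exp (-(m * (ε / 8) ^ 2 / 4096)) < 1) :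
    ∃ F : EuclideanSpace ℝ (Fin d) → EuclideanSpace ℝ (Fin (M + m)),
      (∀ x ∈ T, ∀ y ∈ T, ‖x - y‖ ≤ ‖F x - F y‖ ∧ ‖F x - F y‖ ≤ (3 + ε) * D * ‖x - y‖) ∧
      (∀ x ∈ S, ∀ l, f x l = 0 → F x (Fin.castAdd m l) = 0) ∧
      (∀ x ∈ S, ∀ l, F x (Fin.natAdd M l) = 0) := by
  classical
  have hD0 : 0 < D := by linarith
  obtain ⟨f', hf', hL⟩ := kb_finite D hD0.le S T f (fun x hx y hy => (hf x hx y hy).2)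
  have hL : ∀ x ∈ T, ∀ y ∈ T, ‖f' x - f' y‖ ≤ D * ‖x - y‖ :=
    fun x hx y hy => hL x (Or.inr hx) y (Or.inr hy)
  have hinj : Set.InjOn f (S : Set (EuclideanSpace ℝ (Fin d))) := by
    intro x hx y hy hxy
    have := (hf x hx y hy).1
    rw [hxy, sub_self, norm_zero] at this
    exact sub_eq_zero.1 (norm_le_zero_iff.1 this)
  have hinv : ∀ x ∈ S, Function.invFunOn f (S : Set (EuclideanSpace ℝ (Fin d))) (f x) = x :=
    fun x hx => hinj.leftInvOn_invFunOn hx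
  obtain ⟨g, hg, hgL⟩ := kb_finite 1 zero_le_one (S.image f) (T.image f')
    (Function.invFunOn f (S : Set (EuclideanSpace ℝ (Fin d)))) (by
      intro p hp q hq
      obtain ⟨x, hx, rfl⟩ := Finset.mem_image.1 hp
      obtain ⟨y, hy, rfl⟩ := Finset.mem_image.1 hq
      rw [hinv x hx, hinv y hy, one_mul]
      exact (hf x hx y hy).1)
  have hgL : ∀ x ∈ T, ∀ y ∈ T, ‖g (f' x) - g (f' y)‖ ≤ ‖f' x - f' y‖ := by
    intro x hx y hy
    have := hgL (f' x) (Or.inr (Finset.mem_image_of_mem _ hx)) (f' y)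
      (Or.inr (Finset.mem_image_of_mem _ hy))
    rwa [one_mul] at this
  have hgS : ∀ x ∈ S, g (f' x) = x := by
    intro x hx
    rw [hf' x hx, hg (f x) (Finset.mem_image_of_mem _ hx), hinv x hx]
  set h : EuclideanSpace ℝ (Fin d) → EuclideanSpace ℝ (Fin d) := fun x => x - g (f' x) with hh
  set V := (T ×ˢ T).image (fun p => h p.1 - h p.2) with hV
  have hVc : (V.card : ℝ) ≤ (T.card : ℝ) ^ 2 := by
    have : V.card ≤ T.card * T.card := by
      refine Finset.card_image_le.trans ?_
      rw [Finset.card_product]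
    rw [sq]; exact_mod_cast this
  obtain ⟨A, hA0, hAs, hA⟩ := jl_linear d m V (ε / 8) (by linarith) (by linarith) hm0
    (lt_of_le_of_lt (by gcongr) hm)
  -- parameters
  set β := D / (1 + D) with hβ
  have hβ0 : 0 < β := by positivity
  have hδ : 0 < 1 - ε / 8 := by linarith
  set α := β / (1 - ε / 8) with hα
  have hα0 : 0 < α := by positivity
  set c := (2 * D + 1) / D with hc
  have hc0 : 0 < c := by positivity
  let F : EuclideanSpace ℝ (Fin d) → EuclideanSpace ℝ (Fin (M + m)) := fun x =>
    WithLp.toLp 2 (Fin.append (fun l => Real.sqrt c * f' x l)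
      (fun l => Real.sqrt c * (Real.sqrt α * A (h x) l)))
  have hFn : ∀ x y, ‖F x - F y‖ ^ 2
      = c * (‖f' x - f' y‖ ^ 2 + α * ‖A (h x) - A (h y)‖ ^ 2) := by
    intro x y
    simp only [EuclideanSpace.norm_sq_eq, Real.norm_eq_abs, sq_abs, Fin.sum_univ_add, F,
      PiLp.sub_apply, Fin.append_left, Fin.append_right, ← mul_sub, mul_pow,
      Real.sq_sqrt hc0.le, Real.sq_sqrt hα0.le, ← Finset.mul_sum]
    ring
  refine ⟨F, ?_, ?_, ?_⟩
  · intro x hx y hy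
    obtain ⟨a1, a2⟩ := hA (h x - h y) (Finset.mem_image.2 ⟨(x, y), Finset.mk_mem_product hx hy, rfl⟩)
    rw [hAs] at a1 a2
    have hFF := hFn x y
    set r := ‖x - y‖ with hr
    set u := ‖f' x - f' y‖ with hu
    set w := ‖h x - h y‖ with hw
    set z := ‖A (h x) - A (h y)‖ ^ 2 with hz
    have hr0 : 0 ≤ r := norm_nonneg _
    have hu0 : 0 ≤ u := norm_nonneg _
    have hw0 : 0 ≤ w := norm_nonneg _
    have hu1 : u ≤ D * r := hL x hx y hy
    have hg1 : ‖g (f' x) - g (f' y)‖ ≤ u := hgL x hx y hy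
    have e : h x - h y = (x - y) - (g (f' x) - g (f' y)) := by simp only [hh]; abel
    have hw1 : r - u ≤ w := by
      rw [hw, e]
      have := norm_sub_norm_le (x - y) (g (f' x) - g (f' y))
      linarith
    have hw2 : w ≤ (1 + D) * r := by
      rw [hw, e]
      have := norm_sub_le (x - y) (g (f' x) - g (f' y))
      linarith
    have hαβ : α * (1 - ε / 8) = β := div_mul_cancel₀ _ hδ.ne'
    have b1 : β * w ^ 2 ≤ α * z := by
      have := mul_le_mul_of_nonneg_left a1 hα0.le
      have e2 : α * ((1 - ε / 8) * w ^ 2) = β * w ^ 2 := by rw [← hαβ]; ring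
      linarith
    have hκ : (1 + ε / 8) ≤ (1 + 2 * ε / 3) * (1 - ε / 8) := by nlinarith
    have b2 : α * z ≤ (1 + 2 * ε / 3) * β * w ^ 2 := by
      have := mul_le_mul_of_nonneg_left a2 hα0.le
      have e3 : (1 + 2 * ε / 3) * β * w ^ 2
          = α * (((1 + 2 * ε / 3) * (1 - ε / 8)) * w ^ 2) := by rw [← hαβ]; ring
      rw [e3]
      refine this.trans ?_
      gcongr
    have hβD : β * (1 + D) = D := by rw [hβ]; field_simp
    have hcD : c * D = 2 * D + 1 := by rw [hc]; field_simp
    constructor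
    · refine (sq_le_sq₀ hr0 (norm_nonneg _)).1 ?_
      rw [hFF]
      exact num_lower D c β α r u w z hD0 hr0 hβD hcD hw1 b1
    · refine (sq_le_sq₀ (norm_nonneg _) (by positivity)).1 ?_
      rw [hFF]
      exact num_upper D ε c β α r u w z hD hε hc0 hβ0 hu0 hw0 hu1 hw2 hβD hcD b2
  · intro x hx l hl
    simp [F, hf' x hx, hl]
  · intro x hx l
    have : h x = 0 := by simp [hh, hgS x hx]
    simp [F, this, hA0]

theorem triple_log (N k : ℕ) (hk : 1 < k)
    (h : (k : ℝ) < Real.logb 2 (Real.logb 2 (Real.logb 2 N))) : (2:ℝ) ^ k ≤ Real.logb 2 N := by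
  have hk1 : (1:ℝ) < k := by exact_mod_cast hk
  set L := Real.logb 2 (N:ℝ) with hL
  set a := Real.logb 2 L with ha
  have hL0 : L = 0 ∨ 1 ≤ L := by
    rcases Nat.lt_or_ge N 2 with h2 | h2
    · left; rw [hL]; interval_cases N <;> simp
    · right
      rw [hL, Real.le_logb_iff_rpow_le (by norm_num) (by positivity)]
      simpa using h2
  have ha0 : 0 ≤ a := by
    rcases hL0 with h0 | h0
    · rw [ha, h0]; simp
    · exact Real.logb_nonneg (by norm_num) h0
  have ha1 : 0 < a := by
    rcases ha0.eq_or_lt with h0 | h0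
    · rw [← h0] at h; simp at h; linarith
    · exact h0
  have hL1 : 1 ≤ L := by
    rcases hL0 with h0 | h0
    · rw [ha, h0] at ha1; simp at ha1
    · exact h0
  have h1 : (2:ℝ) ^ (k:ℝ) < a := (Real.lt_logb_iff_rpow_lt (by norm_num) ha1).1 h
  have h2 : (2:ℝ) ^ ((2:ℝ) ^ (k:ℝ)) < L := (Real.lt_logb_iff_rpow_lt (by norm_num) (by linarith)).1 h1
  have h3 : (k:ℝ) ≤ (2:ℝ) ^ (k:ℝ) := by
    rw [Real.rpow_natCast]; exact_mod_cast Nat.lt_two_pow_self.le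
  have h4 : (2:ℝ) ^ (k:ℝ) ≤ (2:ℝ) ^ ((2:ℝ) ^ (k:ℝ)) := Real.rpow_le_rpow_of_exponent_le (by norm_num) h3
  rw [← Real.rpow_natCast]
  linarith

/-- dimensions used up to level `i` -/
noncomputable def dimUpTo (C q : ℝ) : ℕ → ℕ
  | 0 => 0
  | i + 1 => dimUpTo C q i + ⌈C * q ^ (i + 1)⌉₊

theorem dimUpTo_le (C q : ℝ) (hC : 1 ≤ C) (hq : 2 ≤ q) (i : ℕ) :
    (dimUpTo C q i : ℝ) ≤ 4 * C * q ^ i := by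
  induction i with
  | zero => simp [dimUpTo]; linarith
  | succ i ih =>
    have hqi : (1:ℝ) ≤ q ^ (i + 1) := one_le_pow₀ (by linarith)
    have h1 : 1 ≤ C * q ^ (i + 1) := by nlinarith
    have h2 := (Nat.ceil_lt_add_one (show 0 ≤ C * q ^ (i + 1) by linarith)).le
    have h3 : 0 < C * q ^ i := by positivity
    simp only [dimUpTo, Nat.cast_add]
    rw [pow_succ] at *
    nlinarith

theorem card_level (N : ℕ) (Q : ℝ) :
    (((Finset.univ : Finset (Fin N)).filter
      (fun p : Fin N => Real.logb 2 ((p : ℕ) + 1 : ℝ) ≤ Q)).card : ℝ) ≤ 2 ^ Q := by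
  have h : ((Finset.univ : Finset (Fin N)).filter
      (fun p : Fin N => Real.logb 2 ((p : ℕ) + 1 : ℝ) ≤ Q)).card ≤ ⌊(2:ℝ) ^ Q⌋₊ := by
    rw [← Finset.card_range ⌊(2:ℝ) ^ Q⌋₊]
    refine Finset.card_le_card_of_injOn (fun p => (p : ℕ)) ?_ (fun a _ b _ h => Fin.ext h)
    intro p hp
    have hp : Real.logb 2 ((p : ℕ) + 1 : ℝ) ≤ Q := by simpa using hp
    rw [Real.logb_le_iff_le_rpow (by norm_num) (by positivity)] at hp
    have : (p : ℕ) + 1 ≤ ⌊(2:ℝ) ^ Q⌋₊ := Nat.le_floor (by exact_mod_cast hp)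
    simp only [Finset.coe_range, Set.mem_Iio]
    omega
  exact (Nat.cast_le.2 h).trans (Nat.floor_le (by positivity))

theorem card_exp (n m : ℕ) (Q C η : ℝ) (hQ : 1 ≤ Q) (hη : 0 < η) (hC : C = 3 / η)
    (hn : (n:ℝ) ≤ 2 ^ Q) (hm : C * Q ≤ m) :
    2 * ((n : ℝ) ^ 2) * Real.exp (-(m * η)) < 1 := by
  have h1 : 3 * Q ≤ m * η := by
    have := mul_le_mul_of_nonneg_right hm hη.le
    have e : C * Q * η = 3 * Q := by rw [hC]; field_simp
    linarith
  have h2 : 2 * ((n : ℝ) ^ 2) ≤ 2 ^ (3 * Q) := by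
    have e : (2:ℝ) ^ (3 * Q) = 2 ^ Q * (2 ^ Q) ^ 2 := by
      rw [← Real.rpow_natCast, ← Real.rpow_mul (by norm_num), ← Real.rpow_add (by norm_num)]
      congr 1; push_cast; ring
    rw [e]
    have : (2:ℝ) ≤ 2 ^ Q := by
      simpa using Real.rpow_le_rpow_of_exponent_le (by norm_num : (1:ℝ) ≤ 2) hQ
    gcongr
  have h3 : (2:ℝ) ^ (3 * Q) < Real.exp (3 * Q) := by
    rw [Real.rpow_def_of_pos (by norm_num)]
    apply Real.exp_lt_exp.2
    have := Real.log_two_lt_d9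
    nlinarith
  calc 2 * ((n : ℝ) ^ 2) * Real.exp (-(m * η)) < Real.exp (3 * Q) * Real.exp (-(m * η)) := by
        apply mul_lt_mul_of_pos_right _ (Real.exp_pos _)
        linarith
    _ = Real.exp (3 * Q - m * η) := by rw [← Real.exp_add]; ring_nf
    _ ≤ 1 := Real.exp_le_one_iff.2 (by linarith)

/-- the nested sets of high priority points -/
noncomputable def level {d N : ℕ} (π : Fin N → EuclideanSpace ℝ (Fin d)) (q : ℝ) :
    ℕ → Finset (EuclideanSpace ℝ (Fin d))
  | 0 => ∅
  | i + 1 => by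
    classical
    exact ((Finset.univ : Finset (Fin N)).filter
      (fun p : Fin N => Real.logb 2 ((p : ℕ) + 1 : ℝ) ≤ q ^ (i + 1))).image π

theorem iterate_ext {d N : ℕ} (π : Fin N → EuclideanSpace ℝ (Fin d)) (q ε C : ℝ) (hq : 2 ≤ q)
    (hε : 0 < ε) (hε1 : ε < 1) (hC : C = 3 / ((ε / 8) ^ 2 / 4096)) (i : ℕ) :
    ∃ f : EuclideanSpace ℝ (Fin d) → EuclideanSpace ℝ (Fin (dimUpTo C q i)),
      (∀ x ∈ level π q i, ∀ y ∈ level π q i,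
        ‖x - y‖ ≤ ‖f x - f y‖ ∧ ‖f x - f y‖ ≤ (3 + ε) ^ i * ‖x - y‖) ∧
      ∀ i' ≤ i, ∀ x ∈ level π q i', ∀ l : Fin (dimUpTo C q i), dimUpTo C q i' ≤ (l : ℕ) → f x l = 0 := by
  classical
  induction i with
  | zero =>
    refine ⟨fun _ => 0, by simp [level], ?_⟩
    intro i' hi' x hx l hl
    exact absurd l.2 (by simp [dimUpTo])
  | succ i ih =>
    obtain ⟨f, hf, hz⟩ := ih
    have hC0 : 0 < C := by rw [hC]; positivity
    have hsub : ∀ a b, a ≤ b → level π q a ⊆ level π q b := by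
      refine fun a b hab => monotone_nat_of_le_succ (f := level π q) ?_ hab
      intro n
      cases n with
      | zero => simp [level]
      | succ n =>
        simp only [level]
        apply Finset.image_subset_image
        intro p hp
        simp only [Finset.mem_filter, Finset.mem_univ, true_and] at hp ⊢
        exact hp.trans (pow_le_pow_right₀ (by linarith) (by omega))
    have hq1 : (1:ℝ) ≤ q ^ (i + 1) := one_le_pow₀ (by linarith)
    have hm0 : 0 < ⌈C * q ^ (i + 1)⌉₊ := Nat.ceil_pos.2 (by positivity)
    have hcard : ((level π q (i + 1)).card : ℝ) ≤ 2 ^ (q ^ (i + 1)) := by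
      refine le_trans ?_ (card_level N (q ^ (i + 1)))
      simp only [level]
      exact_mod_cast Finset.card_image_le
    have hce := card_exp _ ⌈C * q ^ (i + 1)⌉₊ (q ^ (i + 1)) C ((ε / 8) ^ 2 / 4096) hq1
      (by positivity) hC hcard (Nat.le_ceil _)
    obtain ⟨F, hF, hF1, hF2⟩ := ext_step d (dimUpTo C q i) ⌈C * q ^ (i + 1)⌉₊ (level π q i)
      (level π q (i + 1)) (hsub _ _ (by omega)) f ((3 + ε) ^ i) ε (one_le_pow₀ (by linarith))
      hε hε1 hf hm0 (by rwa [← mul_div_assoc] at hce)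
    refine ⟨F, ?_, ?_⟩
    · intro x hx y hy
      rw [pow_succ', ]
      exact hF x hx y hy
    · intro i' hi' x hx l hl
      rcases Nat.lt_or_ge i i' with h | h
      · have : i' = i + 1 := by omega
        subst this
        exact absurd l.2 (by omega)
      · have hxi := hsub _ _ h hx
        change Fin (dimUpTo C q i + ⌈C * q ^ (i + 1)⌉₊) at l
        refine Fin.addCases (motive := fun l => dimUpTo C q i' ≤ (l : ℕ) → F x l = 0)
          (fun l hl => ?_) (fun l hl => ?_) l hl
        · exact hF1 x hxi l (hz i' h x hx l (by simpa using hl))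
        · exact hF2 x hxi l

theorem prioritized_dimension_reduction_const_distortion (ε : ℝ) (hε : 0 < ε) (hε1 : ε < 1) :
    ∃ c₁ > (0 : ℝ), ∀ d : ℕ, 1 ≤ d →
      ∀ (N : ℕ) (X : Finset (EuclideanSpace ℝ (Fin d))), X.card = N →
      ∀ π : Fin N → EuclideanSpace ℝ (Fin d),
        Function.Injective π → Set.range π = (X : Set (EuclideanSpace ℝ (Fin d))) →
        ∀ k : ℕ, 1 < k → (k : ℝ) < Real.logb 2 (Real.logb 2 (Real.logb 2 N)) →
        ∃ d' : ℕ, (d' : ℝ) ≤ c₁ * Real.logb 2 N ∧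
          ∃ f : EuclideanSpace ℝ (Fin d) → EuclideanSpace ℝ (Fin d'),
            Set.InjOn f (X : Set (EuclideanSpace ℝ (Fin d))) ∧
            HasDistortionAtMost (X : Set (EuclideanSpace ℝ (Fin d))) f ((3 + ε) ^ k) ∧
            ∀ j : ℕ, ∀ _ : 2 ≤ j, ∀ hjN : j ≤ N,
              ∀ l : Fin d',
                ⌈c₁ * Real.logb 2 j * (Real.logb 2 N) ^ ((1 : ℝ) / k)⌉₊ ≤ (l : ℕ) →
                f (π ⟨j - 1, by omega⟩) l = 0 := by
  obtain ⟨C, hC⟩ : ∃ C : ℝ, C = 3 / ((ε / 8) ^ 2 / 4096) := ⟨_, rfl⟩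
  have hC1 : 1 ≤ C := by
    rw [hC, le_div_iff₀ (by positivity)]
    nlinarith
  refine ⟨4 * C, by linarith, ?_⟩
  intro d _ N X hX π hπ hrange k hk hkN
  have hL := triple_log N k hk hkN
  set L := Real.logb 2 (N:ℝ) with hLdef
  have hLpos : 0 < L := lt_of_lt_of_le (by positivity) hL
  set q := L ^ ((1:ℝ) / k) with hq
  have hqk : q ^ k = L := by
    rw [hq, one_div]; exact Real.rpow_inv_natCast_pow hLpos.le (by omega)
  have hq0 : 0 ≤ q := by positivity
  have hq2 : 2 ≤ q := by
    refine (pow_le_pow_iff_left₀ (by norm_num) hq0 (show k ≠ 0 by omega)).1 ?_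
    rwa [hqk]
  obtain ⟨f, hf, hz⟩ := iterate_ext π q ε C hq2 hε hε1 hC k
  have hmem : ∀ (p : Fin N) (i : ℕ), Real.logb 2 ((p : ℕ) + 1 : ℝ) ≤ q ^ (i + 1) →
      π p ∈ level π q (i + 1) := by
    classical
    intro p i hp
    simp only [level]
    exact Finset.mem_image_of_mem _ (by simpa using hp)
  have hlogN : ∀ p : Fin N, Real.logb 2 ((p : ℕ) + 1 : ℝ) ≤ q ^ k := by
    intro p
    rw [hqk]
    apply Real.logb_le_logb_of_le (by norm_num) (by positivity)
    exact_mod_cast p.2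
  have hXk : ∀ x ∈ (X : Set (EuclideanSpace ℝ (Fin d))), x ∈ level π q k := by
    intro x hx
    rw [← hrange] at hx
    obtain ⟨p, rfl⟩ := hx
    obtain ⟨k', rfl⟩ : ∃ k', k = k' + 1 := ⟨k - 1, by omega⟩
    exact hmem p k' (hlogN p)
  have hdim := fun i => dimUpTo_le C q hC1 hq2 i
  refine ⟨dimUpTo C q k, by rw [← hqk]; exact hdim k, f, ?_, ⟨1, one_pos, ?_⟩, ?_⟩
  · intro x hx y hy hxy
    have := (hf x (hXk x hx) y (hXk y hy)).1
    rw [hxy, sub_self, norm_zero] at this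
    exact sub_eq_zero.1 (norm_le_zero_iff.1 this)
  · intro x hx y hy
    rw [one_mul, one_mul]
    exact hf x (hXk x hx) y (hXk y hy)
  · intro j hj hjN l hl
    have hjlog : 1 ≤ Real.logb 2 (j:ℝ) := by
      rw [Real.le_logb_iff_rpow_le (by norm_num) (by positivity)]
      simpa using hj
    have hjN' : Real.logb 2 (j:ℝ) ≤ q ^ k := by
      rw [hqk]
      apply Real.logb_le_logb_of_le (by norm_num) (by positivity)
      exact_mod_cast hjN
    have hex : ∃ i, Real.logb 2 (j:ℝ) ≤ q ^ (i + 1) :=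
      ⟨k - 1, by rwa [show k - 1 + 1 = k by omega]⟩
    classical
    have hi := Nat.find_spec hex
    have hik : Nat.find hex ≤ k - 1 := Nat.find_min' hex (by rwa [show k - 1 + 1 = k by omega])
    have hlow : q ^ (Nat.find hex) ≤ Real.logb 2 (j:ℝ) := by
      rcases Nat.eq_zero_or_pos (Nat.find hex) with h0 | h0
      · rw [h0, pow_zero]; exact hjlog
      · have := Nat.find_min hex (m := Nat.find hex - 1) (by omega)
        rw [show Nat.find hex - 1 + 1 = Nat.find hex by omega] at this
        exact (not_le.1 this).le
    refine hz (Nat.find hex + 1) (by omega) _ (hmem _ _ ?_) l ?_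
    · have e : (((j - 1 : ℕ) : ℝ) + 1) = j := by
        rw [Nat.cast_sub (by omega)]; simp
      simp only [e]
      exact hi
    · refine le_trans ?_ hl
      have h1 : (dimUpTo C q (Nat.find hex + 1) : ℝ) ≤ 4 * C * Real.logb 2 (j:ℝ) * q := by
        refine (hdim _).trans ?_
        rw [pow_succ, ← mul_assoc]
        gcongr
      exact_mod_cast h1.trans (Nat.le_ceil _)
end

section
/- There exists an absolute constant c > 0 such that for every d ≥ 1, every finite set X ⊂ ℝ^d of size N ≥ 2, and every parameter ε ∈ (0, 1/2), there exist d' ≤ c·(log₂ N)/ε⁴ and a map f : ℝ^d → ℝ^{d'} such that for every terminal x ∈ X and every point p ∈ ℝ^d: ‖p − x‖ ≤ ‖f(p) − f(x)‖ ≤ (1 + ε)·‖p − x‖. -/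
open MeasureTheory ProbabilityTheory

lemma tdr_log_aux (t : ℝ) (h : |t| ≤ 1/2) : -t - 2 * t^2 ≤ Real.log (1 - t) := by
  have := Real.abs_log_sub_add_sum_range_le (x := t) (by linarith) 1
  simp at this
  have h2 : t^2/(1-|t|) ≤ 2 * t^2 := by
    rw [div_le_iff₀ (by linarith)]; nlinarith [sq_nonneg t]
  have := abs_le.1 this
  linarith [this.1]

lemma tdr_pdf_mul (s x : ℝ) : gaussianPDFReal 0 1 x * Real.exp (s * x^2)
    = (√(2 * Real.pi))⁻¹ * Real.exp (-(1/2 - s) * x^2) := by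
  rw [gaussianPDFReal_def]
  simp only [NNReal.coe_one, mul_one, sub_zero]
  rw [mul_assoc, ← Real.exp_add]
  congr 2
  ring

lemma tdr_gauss_int (s : ℝ) (h : |s| ≤ 1/4) :
    Integrable (fun x : ℝ => Real.exp (s * x^2)) (gaussianReal 0 1) := by
  rw [gaussianReal_of_var_ne_zero 0 one_ne_zero, integrable_withDensity_iff_integrable_smul'
    (measurable_gaussianPDF 0 1) (Filter.Eventually.of_forall fun x => gaussianPDF_lt_top)]
  simp only [toReal_gaussianPDF, smul_eq_mul, tdr_pdf_mul]
  exact (integrable_exp_neg_mul_sq (by linarith [(abs_le.1 h).2])).const_mul _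

lemma tdr_gauss_le (s : ℝ) (h : |s| ≤ 1/4) :
    ∫ x : ℝ, Real.exp (s * x^2) ∂(gaussianReal 0 1) ≤ Real.exp (s + 4 * s^2) := by
  rw [integral_gaussianReal_eq_integral_smul one_ne_zero]
  simp only [smul_eq_mul, tdr_pdf_mul]
  rw [integral_const_mul, integral_gaussian, ← Real.sqrt_inv, ← Real.sqrt_mul (by positivity)]
  have hs := abs_le.1 h
  have h1 : (0:ℝ) < 1 - 2 * s := by linarith [hs.2]
  have e : (2 * Real.pi)⁻¹ * (Real.pi / (1/2 - s)) = (1 - 2*s)⁻¹ := by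
    have : (1/2 - s) ≠ 0 := by linarith
    have : (1 - 2 * s) ≠ 0 := h1.ne'
    have : (1 - s * 2) ≠ 0 := by linarith
    field_simp
  rw [e]
  apply Real.sqrt_le_iff.2 ⟨(Real.exp_pos _).le, ?_⟩
  rw [← Real.exp_nat_mul]
  have hl := tdr_log_aux (2*s) (by rw [abs_mul]; norm_num; linarith)
  rw [← Real.exp_log h1, ← Real.exp_neg]
  apply Real.exp_le_exp.2
  push_cast
  nlinarith

lemma tdr_div_mul_le (a b : ℝ) (ha : 0 ≤ a) : a / b * b ≤ a := by
  by_cases h : b = 0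
  · simp [h, ha]
  · rw [div_mul_cancel₀ _ h]

section
variable {E : Type*} [NormedAddCommGroup E] [InnerProductSpace ℝ E] [FiniteDimensional ℝ E]

lemma tdr_map [MeasurableSpace E] [BorelSpace E] (w : E) (hw : ‖w‖ = 1) :
    (stdGaussian E).map (fun g => inner ℝ w g) = gaussianReal 0 1 := by
  have := IsGaussian.map_eq_gaussianReal (μ := stdGaussian E) (innerSL ℝ w)
  rw [integral_strongDual_stdGaussian, variance_dual_stdGaussian] at this
  simpa [hw] using this

lemma tdr_int [MeasurableSpace E] [BorelSpace E] (w : E) (hw : ‖w‖ = 1) (s : ℝ) (h : |s| ≤ 1/4) :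
    Integrable (fun g => Real.exp (s * (inner ℝ w g)^2)) (stdGaussian E) := by
  have := tdr_gauss_int s h
  rw [← tdr_map w hw] at this
  exact this.comp_measurable (by fun_prop)

lemma tdr_le [MeasurableSpace E] [BorelSpace E] (w : E) (hw : ‖w‖ = 1) (s : ℝ) (h : |s| ≤ 1/4) :
    ∫ g, Real.exp (s * (inner ℝ w g)^2) ∂(stdGaussian E) ≤ Real.exp (s + 4 * s^2) := by
  have := tdr_gauss_le s h
  rw [← tdr_map w hw, integral_map (by fun_prop) (by fun_prop)] at this
  exact this

/-- one-sided exponential estimate -/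
lemma tdr_pi [MeasurableSpace E] [BorelSpace E] (m : ℕ) (w : E) (hw : ‖w‖ = 1) (s : ℝ)
    (h : |s| ≤ 1/4) (c : ℝ) :
    Integrable (fun g : Fin m → E => Real.exp (s * (∑ i, (inner ℝ w (g i))^2) - c))
      (Measure.pi fun _ => stdGaussian E) ∧
    ∫ g : Fin m → E, Real.exp (s * (∑ i, (inner ℝ w (g i))^2) - c)
      ∂(Measure.pi fun _ => stdGaussian E) ≤ Real.exp (m * (s + 4 * s^2) - c) := by
  have e : (fun g : Fin m → E => Real.exp (s * (∑ i, (inner ℝ w (g i))^2) - c))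
      = fun g => Real.exp (-c) * ∏ i, Real.exp (s * (inner ℝ w (g i))^2) := by
    ext g
    rw [← Real.exp_sum, ← Real.exp_add, Finset.mul_sum]
    congr 1; ring
  rw [e]
  constructor
  · exact (Integrable.fintype_prod (fun _ => tdr_int w hw s h)).const_mul _
  · rw [integral_const_mul, integral_fintype_prod_eq_pow (fun g => Real.exp (s * (inner ℝ w g)^2)),
      sub_eq_neg_add, Real.exp_add, Real.exp_nat_mul, Fintype.card_fin]
    gcongr
    exact tdr_le w hw s h

lemma tdr_jl_unit (S : Finset E) (hS : ∀ w ∈ S, ‖w‖ = 1) (m : ℕ) (δ : ℝ) (h0 : 0 < δ)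
    (h1 : δ ≤ 1) (hm : 2 * S.card * Real.exp (-(δ^2 * m / 16)) < 1) :
    ∃ g : Fin m → E, ∀ w ∈ S, |∑ i, (inner ℝ w (g i))^2 - m| ≤ δ * m := by
  borelize E
  let s := δ / 8
  have hs : |s| ≤ 1/4 := by rw [abs_of_pos (by positivity)]; simp only [s]; linarith
  have hs' : |-s| ≤ 1/4 := by rwa [abs_neg]
  let F : E → (Fin m → E) → ℝ := fun w g =>
    Real.exp (s * (∑ i, (inner ℝ w (g i))^2) - s * (1 + δ) * m) +
    Real.exp (-s * (∑ i, (inner ℝ w (g i))^2) - (-s) * (1 - δ) * m)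
  let μ : Measure (Fin m → E) := Measure.pi fun _ => stdGaussian E
  have hF : ∀ w ∈ S, Integrable (F w) μ := fun w hw =>
    (tdr_pi m w (hS w hw) s hs _).1.add (tdr_pi m w (hS w hw) (-s) hs' _).1
  have hFi : ∀ w ∈ S, ∫ g, F w g ∂μ ≤ 2 * Real.exp (-(δ^2 * m / 16)) := by
    intro w hw
    simp only [F]
    rw [integral_add (tdr_pi m w (hS w hw) s hs _).1 (tdr_pi m w (hS w hw) (-s) hs' _).1, two_mul]
    apply add_le_add
    · refine (tdr_pi m w (hS w hw) s hs _).2.trans (Real.exp_le_exp.2 (le_of_eq ?_))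
      simp only [s]; ring
    · refine (tdr_pi m w (hS w hw) (-s) hs' _).2.trans (Real.exp_le_exp.2 (le_of_eq ?_))
      simp only [s]; ring
  obtain ⟨g, hg⟩ := exists_le_integral (μ := μ) (integrable_finsetSum S hF)
  rw [integral_finsetSum S hF] at hg
  have hlt : ∑ w ∈ S, F w g < 1 := by
    refine (hg.trans (Finset.sum_le_sum hFi)).trans_lt ?_
    rw [Finset.sum_const, nsmul_eq_mul]; linarith
  refine ⟨g, fun w hw => ?_⟩
  have hpos : ∀ w ∈ S, 0 ≤ F w g := fun w _ => by positivity
  have hw1 := (Finset.single_le_sum hpos hw).trans_lt hlt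
  have hspos : 0 < s := by positivity
  have a1 : Real.exp (s * (∑ i, (inner ℝ w (g i))^2) - s * (1 + δ) * m) < 1 :=
    lt_of_le_of_lt (le_add_of_nonneg_right (Real.exp_pos _).le) hw1
  have a2 : Real.exp (-s * (∑ i, (inner ℝ w (g i))^2) - (-s) * (1 - δ) * m) < 1 :=
    lt_of_le_of_lt (le_add_of_nonneg_left (Real.exp_pos _).le) hw1
  rw [Real.exp_lt_one_iff] at a1 a2
  rw [abs_le]
  constructor
  · have : s * ((1 - δ) * m - ∑ i, (inner ℝ w (g i))^2) < 0 := by linarith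
    have := neg_of_mul_neg_right this hspos.le
    linarith
  · have : s * ((∑ i, (inner ℝ w (g i))^2) - (1 + δ) * m) < 0 := by linarith
    have := neg_of_mul_neg_right this hspos.le
    linarith

lemma tdr_jl (S : Finset E) (m : ℕ) (hm0 : 0 < m) (δ : ℝ) (h0 : 0 < δ)
    (h1 : δ ≤ 1) (hm : 2 * S.card * Real.exp (-(δ^2 * m / 16)) < 1) :
    ∃ A : E →ₗ[ℝ] EuclideanSpace ℝ (Fin m), ∀ w ∈ S, |‖A w‖^2 - ‖w‖^2| ≤ δ * ‖w‖^2 := by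
  classical
  let S' := (S.filter (fun w => w ≠ 0)).image (fun w => ‖w‖⁻¹ • w)
  have hc : S'.card ≤ S.card := Finset.card_image_le.trans (Finset.card_filter_le _ _)
  obtain ⟨g, hg⟩ := tdr_jl_unit S' (by
    intro w hw
    simp only [S', Finset.mem_image, Finset.mem_filter] at hw
    obtain ⟨a, ⟨_, ha⟩, rfl⟩ := hw
    rw [norm_smul, norm_inv, norm_norm, inv_mul_cancel₀ (norm_ne_zero_iff.2 ha)]) m δ h0 h1 (by
      refine lt_of_le_of_lt ?_ hm
      gcongr)
  let A : E →ₗ[ℝ] EuclideanSpace ℝ (Fin m) :=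
    { toFun := fun w => WithLp.toLp 2 (fun i => (√m)⁻¹ * inner ℝ w (g i))
      map_add' := by intro x y; ext i; simp [inner_add_left, mul_add]
      map_smul' := by intro c x; ext i; simp [inner_smul_left]; ring }
  have hmR : (0:ℝ) < m := by exact_mod_cast hm0
  have hA : ∀ w, ‖A w‖^2 = (m:ℝ)⁻¹ * ∑ i, (inner ℝ w (g i))^2 := by
    intro w
    rw [EuclideanSpace.real_norm_sq_eq, Finset.mul_sum]
    refine Finset.sum_congr rfl fun i _ => ?_
    simp only [A, LinearMap.coe_mk, AddHom.coe_mk]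
    rw [mul_pow, inv_pow, Real.sq_sqrt hmR.le]
  refine ⟨A, fun w hw => ?_⟩
  by_cases hw0 : w = 0
  · simp [hw0]
  have := hg (‖w‖⁻¹ • w) (Finset.mem_image_of_mem _ (Finset.mem_filter.2 ⟨hw, hw0⟩))
  have hn : 0 < ‖w‖ := norm_pos_iff.2 hw0
  have e : ∑ i, (inner ℝ (‖w‖⁻¹ • w) (g i))^2 = (‖w‖^2)⁻¹ * (m * ‖A w‖^2) := by
    rw [hA, mul_inv_cancel_left₀ hmR.ne', Finset.mul_sum]
    refine Finset.sum_congr rfl fun i _ => ?_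
    rw [real_inner_smul_left, mul_pow, inv_pow]
  rw [e] at this
  have e2 : (‖w‖^2)⁻¹ * (m * ‖A w‖^2) - m = (m / ‖w‖^2) * (‖A w‖^2 - ‖w‖^2) := by
    field_simp
  rw [e2, abs_mul, abs_of_pos (by positivity : 0 < m / ‖w‖^2), div_mul_eq_mul_div,
    div_le_iff₀ (by positivity)] at this
  have h3 : (m:ℝ) * |‖A w‖^2 - ‖w‖^2| ≤ m * (δ * ‖w‖^2) := by linarith
  exact le_of_mul_le_mul_left h3 hmR

/-- extension of a functional by separation -/
lemma tdr_ext {F ι : Type*} [NormedAddCommGroup F] [InnerProductSpace ℝ F] [FiniteDimensional ℝ F]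
    [Fintype ι] (t : ι → E) (A : E →ₗ[ℝ] F) (η : ℝ) (hη : 0 ≤ η)
    (h : ∀ i j, |inner ℝ (A (t i)) (A (t j)) - inner ℝ (t i) (t j)| ≤ η^2) (u : E) :
    ∃ v : F, ‖v‖ ≤ ‖u‖ ∧ ∀ i, |inner ℝ v (A (t i)) - inner ℝ u (t i)| ≤ η * ‖u‖ := by
  classical
  let L : F →ₗ[ℝ] (ι → ℝ) := LinearMap.pi fun i => (innerₛₗ ℝ (A (t i)))
  have hLc : Continuous L := L.continuous_of_finiteDimensional
  let b : ι → ℝ := fun i => inner ℝ u (t i)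
  by_cases hd : Disjoint (L '' Metric.closedBall 0 ‖u‖) (Metric.closedBall b (η * ‖u‖))
  · exfalso
    obtain ⟨f, r, r', hf1, hr, hf2⟩ := geometric_hahn_banach_compact_closed
      ((convex_closedBall (0:F) ‖u‖).linear_image L)
      ((isCompact_closedBall (0:F) ‖u‖).image hLc)
      (convex_closedBall b (η * ‖u‖)) Metric.isClosed_closedBall hd
    let c : ι → ℝ := fun i => f (Pi.single i 1)
    have hfc : ∀ y : ι → ℝ, f y = ∑ i, y i * c i := by
      intro y
      conv_lhs => rw [pi_eq_sum_univ' y, map_sum]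
      refine Finset.sum_congr rfl fun i _ => ?_
      rw [map_smul, smul_eq_mul]
      
    let z : E := ∑ i, c i • t i
    let Λ : ℝ := ∑ i, |c i|
    have hΛ : 0 ≤ Λ := Finset.sum_nonneg fun i _ => abs_nonneg _
    have k1 : ‖u‖ * ‖A z‖ < r := by
      have := hf1 (L ((‖u‖ / ‖A z‖) • A z)) ⟨_, by
        rw [mem_closedBall_zero_iff, norm_smul, norm_div, norm_norm, norm_norm]
        exact tdr_div_mul_le _ _ (norm_nonneg _), rfl⟩
      rw [hfc] at this
      have e : ∑ i, L ((‖u‖ / ‖A z‖) • A z) i * c i = ‖u‖ * ‖A z‖ := by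
        have : ∀ i, L ((‖u‖ / ‖A z‖) • A z) i * c i
            = (‖u‖ / ‖A z‖) * inner ℝ (A (c i • t i)) (A z) := by
          intro i
          simp only [L, LinearMap.pi_apply, innerₛₗ_apply_apply, real_inner_smul_right, map_smul,
            real_inner_smul_left]
          ring
        simp only [this]
        rw [← Finset.mul_sum, ← sum_inner, ← map_sum, real_inner_self_eq_norm_sq]
        by_cases hz : ‖A z‖ = 0
        · simp [hz]
        · change ‖u‖ / ‖A z‖ * ‖A z‖^2 = _
          field_simp
      linarith
    have k2 : r' < inner ℝ u z - η * ‖u‖ * Λ := by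
      have := hf2 (fun i => b i - η * ‖u‖ * SignType.sign (c i)) (by
        rw [mem_closedBall_iff_norm, pi_norm_le_iff_of_nonneg (by positivity)]
        intro i
        simp only [Pi.sub_apply, sub_sub_cancel_left, norm_neg, norm_mul, norm_norm]
        rw [Real.norm_of_nonneg hη]
        refine mul_le_of_le_one_right (by positivity) ?_
        rcases lt_trichotomy (c i) 0 with h | h | h <;> simp [h])
      rw [hfc] at this
      have e : ∑ i, (b i - η * ‖u‖ * SignType.sign (c i)) * c i = inner ℝ u z - η * ‖u‖ * Λ := by
        simp only [z, Λ, b]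
        rw [inner_sum, Finset.mul_sum, ← Finset.sum_sub_distrib]
        refine Finset.sum_congr rfl fun i _ => ?_
        rw [real_inner_smul_right, sub_mul, mul_assoc _ _ (c i), sign_mul_self]
        ring
      linarith
    have k3 : ‖z‖^2 ≤ ‖A z‖^2 + η^2 * Λ^2 := by
      have e : ‖A z‖^2 - ‖z‖^2 = ∑ i, ∑ j, (c i * c j) *
          (inner ℝ (A (t i)) (A (t j)) - inner ℝ (t i) (t j)) := by
        rw [← real_inner_self_eq_norm_sq, ← real_inner_self_eq_norm_sq]
        simp only [z, map_sum, map_smul, sum_inner, inner_sum, ← Finset.sum_sub_distrib,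
          real_inner_smul_left, real_inner_smul_right]
        refine Finset.sum_congr rfl fun i _ => Finset.sum_congr rfl fun j _ => ?_
        rw [real_inner_comm (A (t i)), real_inner_comm (t i)]
        ring
      have e2 : η^2 * Λ^2 = ∑ i, ∑ j, |c i| * |c j| * η^2 := by
        simp only [Λ]
        rw [pow_two (∑ i, |c i|), Finset.sum_mul_sum, Finset.mul_sum]
        refine Finset.sum_congr rfl fun i _ => ?_
        rw [Finset.mul_sum]
        refine Finset.sum_congr rfl fun j _ => ?_
        ring
      have : -(η^2 * Λ^2) ≤ ‖A z‖^2 - ‖z‖^2 := by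
        rw [e, e2, ← Finset.sum_neg_distrib]
        refine Finset.sum_le_sum fun i _ => ?_
        rw [← Finset.sum_neg_distrib]
        refine Finset.sum_le_sum fun j _ => ?_
        refine neg_le_of_abs_le ?_
        rw [abs_mul, abs_mul]
        gcongr
        exact h i j
      linarith
    have k4 : ‖z‖ ≤ ‖A z‖ + η * Λ := by
      refine abs_le_of_sq_le_sq' ?_ (by positivity) |>.2
      nlinarith [mul_nonneg (norm_nonneg (A z)) (mul_nonneg hη hΛ)]
    have k5 := real_inner_le_norm u z
    have k6 := mul_le_mul_of_nonneg_left k4 (norm_nonneg u)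
    linarith
  · rw [Set.not_disjoint_iff] at hd
    obtain ⟨y, ⟨v, hv, rfl⟩, hy⟩ := hd
    refine ⟨v, mem_closedBall_zero_iff.1 hv, fun i => ?_⟩
    rw [mem_closedBall_iff_norm] at hy
    have := (norm_le_pi_norm (L v - b) i).trans hy
    simpa [L, b, real_inner_comm] using this

lemma tdr_main {F : Type*} [NormedAddCommGroup F] [InnerProductSpace ℝ F] [FiniteDimensional ℝ F]
    (X : Finset E) (hX : X.Nonempty) (A : E →ₗ[ℝ] F) (η : ℝ) (hη : 0 ≤ η)
    (h : ∀ i j : X × X,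
      |inner ℝ (A (‖(i.1 - i.2 : E)‖⁻¹ • (i.1 - i.2 : E))) (A (‖(j.1 - j.2 : E)‖⁻¹ • (j.1 - j.2 : E)))
        - inner ℝ (‖(i.1 - i.2 : E)‖⁻¹ • (i.1 - i.2 : E)) (‖(j.1 - j.2 : E)‖⁻¹ • (j.1 - j.2 : E))|
        ≤ η^2) :
    ∃ f : E → WithLp 2 (F × ℝ), ∀ x ∈ X, ∀ p,
      |‖f p - f x‖^2 - ‖p - x‖^2| ≤ (4 * η^2 + 4 * η) * ‖p - x‖^2 := by
  have hnear : ∀ p : E, ∃ y ∈ X, ∀ x ∈ X, ‖p - y‖ ≤ ‖p - x‖ := fun p =>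
    X.exists_min_image (fun y => ‖p - y‖) hX
  choose y hyX hy using hnear
  have hext := fun p => tdr_ext (fun i : X × X => ‖(i.1 - i.2 : E)‖⁻¹ • (i.1 - i.2 : E)) A η hη h
    (p - y p)
  choose v hv1 hv2 using hext
  have hscale : ∀ a b : E, a - b = ‖a - b‖ • (‖a - b‖⁻¹ • (a - b)) := by
    intro a b
    by_cases hab : a - b = 0
    · simp [hab]
    · rw [smul_smul, mul_inv_cancel₀ (norm_ne_zero_iff.2 hab), one_smul]
  refine ⟨fun p => WithLp.toLp 2 (A (y p) + v p, √(‖p - y p‖^2 - ‖v p‖^2)), fun x hx p => ?_⟩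
  have hyx : y x = x := by
    have := hy x x hx
    rw [sub_self, norm_zero, norm_le_zero_iff, sub_eq_zero] at this
    exact this.symm
  have hvx : v x = 0 := by
    have := hv1 x
    rwa [hyx, sub_self, norm_zero, norm_le_zero_iff] at this
  have e1 : ‖WithLp.toLp 2 (A (y p) + v p, √(‖p - y p‖^2 - ‖v p‖^2))
      - WithLp.toLp 2 (A (y x) + v x, √(‖x - y x‖^2 - ‖v x‖^2))‖^2
      = ‖A (y p - x) + v p‖^2 + (‖p - y p‖^2 - ‖v p‖^2) := by
    rw [WithLp.prod_norm_sq_eq_of_L2]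
    simp only [hyx, hvx, ← WithLp.toLp_sub, Prod.mk_sub_mk, add_zero, sub_self, norm_zero,
      Real.sqrt_zero, sub_zero, ne_eq, OfNat.ofNat_ne_zero, not_false_eq_true, zero_pow]
    congr 1
    · change ‖A (y p) + v p - A x‖^2 = _
      rw [map_sub]; congr 2; abel
    · change ‖√(‖p - y p‖^2 - ‖v p‖^2)‖^2 = _
      rw [Real.norm_eq_abs, sq_abs, Real.sq_sqrt]
      have := hv1 p
      have := pow_le_pow_left₀ (norm_nonneg _) this 2
      linarith
  rw [e1]
  set a := y p - x with ha
  have e2 : p - x = (p - y p) + a := by rw [ha]; abel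
  have e3 : ‖p - x‖^2 = ‖p - y p‖^2 + 2 * inner ℝ (p - y p) a + ‖a‖^2 := by
    rw [e2, norm_add_sq_real]
  have n1 : ‖p - y p‖ ≤ ‖p - x‖ := hy p x hx
  have n2 : ‖a‖ ≤ 2 * ‖p - x‖ := by
    have : a = (p - x) - (p - y p) := by rw [ha]; abel
    rw [this]
    refine (norm_sub_le _ _).trans (by linarith)
  let i : X × X := (⟨y p, hyX p⟩, ⟨x, hx⟩)
  let w : E := ‖a‖⁻¹ • a
  have hw : a = ‖a‖ • w := hscale (y p) x
  have b1 : |‖A w‖^2 - ‖w‖^2| ≤ η^2 := by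
    have := h i i
    rwa [real_inner_self_eq_norm_sq, real_inner_self_eq_norm_sq] at this
  have b2 : |inner ℝ (v p) (A w) - inner ℝ (p - y p) w| ≤ η * ‖p - y p‖ := hv2 p i
  have c1 : |‖A a‖^2 - ‖a‖^2| ≤ η^2 * ‖a‖^2 := by
    have q1 : ‖A a‖^2 = ‖a‖^2 * ‖A w‖^2 := by
      conv_lhs => rw [hw, map_smul, norm_smul, norm_norm, mul_pow]
    have q2 : ‖a‖^2 = ‖a‖^2 * ‖w‖^2 := by
      conv_lhs => rw [hw, norm_smul, norm_norm, mul_pow]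
    have q3 : ‖A a‖^2 - ‖a‖^2 = ‖a‖^2 * (‖A w‖^2 - ‖w‖^2) := by rw [mul_sub, ← q1, ← q2]
    rw [q3, abs_mul, abs_of_nonneg (sq_nonneg ‖a‖), mul_comm]
    gcongr
  have c2 : |inner ℝ (v p) (A a) - inner ℝ (p - y p) a| ≤ η * ‖p - y p‖ * ‖a‖ := by
    have q1 : inner ℝ (v p) (A a) = ‖a‖ * inner ℝ (v p) (A w) := by
      conv_lhs => rw [hw, map_smul, real_inner_smul_right]
    have q2 : inner ℝ (p - y p) a = ‖a‖ * inner ℝ (p - y p) w := by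
      conv_lhs => rw [hw, real_inner_smul_right]
    rw [q1, q2, ← mul_sub, abs_mul, abs_norm, mul_comm]
    gcongr
  have e4 : ‖A a + v p‖^2 + (‖p - y p‖^2 - ‖v p‖^2) - ‖p - x‖^2
      = (‖A a‖^2 - ‖a‖^2) + 2 * (inner ℝ (v p) (A a) - inner ℝ (p - y p) a) := by
    rw [e3, norm_add_sq_real, real_inner_comm (v p)]; ring
  rw [e4]
  refine (abs_add_le _ _).trans ?_
  rw [abs_mul, abs_two]
  have d1 : η^2 * ‖a‖^2 ≤ η^2 * (2 * ‖p - x‖)^2 := by gcongr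
  have d2 : η * ‖p - y p‖ * ‖a‖ ≤ η * ‖p - x‖ * (2 * ‖p - x‖) := by gcongr
  linarith

lemma tdr_polar {F : Type*} [NormedAddCommGroup F] [InnerProductSpace ℝ F] (A : E →ₗ[ℝ] F)
    (δ : ℝ) (h0 : 0 ≤ δ) (a b : E) (ha : ‖a‖ ≤ 1) (hb : ‖b‖ ≤ 1)
    (h1 : |‖A (a + b)‖^2 - ‖a + b‖^2| ≤ δ * ‖a + b‖^2)
    (h2 : |‖A (a - b)‖^2 - ‖a - b‖^2| ≤ δ * ‖a - b‖^2) :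
    |inner ℝ (A a) (A b) - inner ℝ a b| ≤ δ := by
  have q1 := norm_add_sq_real a b
  have q2 := norm_sub_sq_real a b
  have q3 := norm_add_sq_real (A a) (A b)
  have q4 := norm_sub_sq_real (A a) (A b)
  rw [← map_add] at q3
  rw [← map_sub] at q4
  have r1 : ‖a‖^2 ≤ 1 := pow_le_one₀ (norm_nonneg _) ha
  have r2 : ‖b‖^2 ≤ 1 := pow_le_one₀ (norm_nonneg _) hb
  rw [abs_le] at *
  have r3 : δ * (‖a‖^2 + ‖b‖^2) ≤ δ * 2 := by gcongr; linarith
  have r4 : δ * ‖a + b‖^2 + δ * ‖a - b‖^2 = 2 * (δ * (‖a‖^2 + ‖b‖^2)) := by rw [q1, q2]; ring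
  constructor <;> linarith [h1.1, h1.2, h2.1, h2.2]

lemma tdr_exists (X : Finset E) (hX : 2 ≤ X.card) (η : ℝ) (h0 : 0 < η) (h1 : η ≤ 1) (m : ℕ)
    (hm : 96 * Real.log X.card / η^4 < m) :
    ∃ f : E → WithLp 2 (EuclideanSpace ℝ (Fin m) × ℝ), ∀ x ∈ X, ∀ p,
      |‖f p - f x‖^2 - ‖p - x‖^2| ≤ (4 * η^2 + 4 * η) * ‖p - x‖^2 := by
  classical
  let t : X × X → E := fun i => ‖(i.1 - i.2 : E)‖⁻¹ • (i.1 - i.2 : E)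
  have ht : ∀ i, ‖t i‖ ≤ 1 := by
    intro i
    simp only [t]
    rw [norm_smul, norm_inv, norm_norm]
    exact inv_mul_le_one
  have hswap : ∀ i, t i.swap = - t i := by
    intro i
    simp only [t, Prod.fst_swap, Prod.snd_swap]
    rw [norm_sub_rev, ← smul_neg, neg_sub]
  let S : Finset E := Finset.univ.image fun ij : (X × X) × (X × X) => t ij.1 + t ij.2
  have hS : S.card ≤ X.card^4 := by
    refine Finset.card_image_le.trans (le_of_eq ?_)
    simp only [Finset.card_univ, Fintype.card_prod, Fintype.card_coe]
    ring
  have hN : (2:ℝ) ≤ X.card := by exact_mod_cast hX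
  have hlog : 0 < Real.log X.card := Real.log_pos (by linarith)
  have hlog2 : Real.log 2 ≤ Real.log X.card := Real.log_le_log (by norm_num) hN
  have hm0 : 0 < m := by
    have : (0:ℝ) < m := lt_of_le_of_lt (by positivity) hm
    exact_mod_cast this
  obtain ⟨A, hA⟩ := tdr_jl S m hm0 (η^2) (by positivity) (pow_le_one₀ h0.le h1) (by
    have hS' : (S.card : ℝ) ≤ (X.card:ℝ)^4 := by exact_mod_cast hS
    calc 2 * (S.card:ℝ) * Real.exp (-((η^2)^2 * m / 16))
        ≤ 2 * (X.card:ℝ)^4 * Real.exp (-((η^2)^2 * m / 16)) := by gcongr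
      _ = Real.exp (Real.log 2 + 4 * Real.log X.card - (η^2)^2 * m / 16) := by
        rw [sub_eq_add_neg, Real.exp_add, Real.exp_add, Real.exp_log (by norm_num)]
        congr 2
        rw [show (4:ℝ) = ((4:ℕ):ℝ) by norm_num, Real.exp_nat_mul, Real.exp_log (by linarith)]
      _ < 1 := by
        rw [Real.exp_lt_one_iff]
        rw [div_lt_iff₀ (by positivity)] at hm
        have : (η^2)^2 = η^4 := by ring
        rw [this]
        linarith)
  have hadd : ∀ i j, t i + t j ∈ S := fun i j =>
    Finset.mem_image.2 ⟨(i, j), Finset.mem_univ _, rfl⟩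
  refine tdr_main X (Finset.card_pos.1 (by omega)) A η h0.le fun i j => ?_
  refine tdr_polar A (η^2) (by positivity) (t i) (t j) (ht i) (ht j) (hA _ (hadd i j)) (hA _ ?_)
  rw [sub_eq_add_neg, ← hswap]
  exact hadd _ _
end

/-- Terminal dimension reduction with distortion `1 + ε`. -/
theorem terminal_dimension_reduction :
    ∃ c > (0 : ℝ), ∀ d : ℕ, 1 ≤ d → ∀ (N : ℕ) (X : Finset (EuclideanSpace ℝ (Fin d))),
      X.card = N → 2 ≤ N → ∀ ε : ℝ, 0 < ε → ε < 1 / 2 →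
      ∃ d' : ℕ, (d' : ℝ) ≤ c * Real.logb 2 N / ε ^ 4 ∧
        ∃ f : EuclideanSpace ℝ (Fin d) → EuclideanSpace ℝ (Fin d'),
          ∀ x ∈ X, ∀ p : EuclideanSpace ℝ (Fin d),
            ‖p - x‖ ≤ ‖f p - f x‖ ∧ ‖f p - f x‖ ≤ (1 + ε) * ‖p - x‖ := by
  refine ⟨96 * 16^4 + 2, by norm_num, ?_⟩
  rintro d - N X rfl hN ε h0 h1
  obtain ⟨m, hm⟩ : ∃ m : ℕ, m = ⌊96 * Real.log X.card / (ε/16)^4⌋₊ + 1 := ⟨_, rfl⟩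
  have hNR : (2:ℝ) ≤ X.card := by exact_mod_cast hN
  have hlog : 0 < Real.log X.card := Real.log_pos (by linarith)
  obtain ⟨f, hf⟩ := tdr_exists X hN (ε/16) (by positivity) (by linarith) m (by
    rw [hm]; push_cast; exact Nat.lt_floor_add_one _)
  have hfr : Module.finrank ℝ (WithLp 2 (EuclideanSpace ℝ (Fin m) × ℝ)) = m + 1 := by
    rw [(WithLp.linearEquiv 2 ℝ (EuclideanSpace ℝ (Fin m) × ℝ)).finrank_eq]
    simp
  let T := ((stdOrthonormalBasis ℝ (WithLp 2 (EuclideanSpace ℝ (Fin m) × ℝ))).reindex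
    (finCongr hfr)).repr
  refine ⟨m + 1, ?_, fun p => (√(1 - ε/2))⁻¹ • T (f p), fun x hx p => ?_⟩
  · have hfl : ((⌊96 * Real.log X.card / (ε/16)^4⌋₊ : ℕ) : ℝ) ≤ 96 * Real.log X.card / (ε/16)^4 :=
      Nat.floor_le (by positivity)
    have hl1 : 1 ≤ Real.logb 2 X.card := by
      rw [Real.le_logb_iff_rpow_le (by norm_num) (by linarith)]; simpa using hNR
    have hl2 : Real.log X.card ≤ Real.logb 2 X.card := by
      rw [Real.logb, le_div_iff₀ (Real.log_pos (by norm_num))]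
      have : Real.log 2 ≤ 1 := by linarith [Real.log_two_lt_d9]
      nlinarith
    have h4 : ε^4 ≤ 1 := pow_le_one₀ h0.le (by linarith)
    have h5 : 96 * Real.log X.card / (ε/16)^4 = 96 * 16^4 * Real.log X.card / ε^4 := by
      field_simp
    rw [h5] at hfl
    rw [hm, h5]
    push_cast
    have h6 : 96 * 16^4 * Real.log X.card / ε^4 ≤ 96 * 16^4 * Real.logb 2 X.card / ε^4 := by gcongr
    have h7 : 2 ≤ 2 * Real.logb 2 X.card / ε^4 := by
      rw [le_div_iff₀ (by positivity)]; nlinarith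
    have h8 : (96 * 16^4 + 2) * Real.logb 2 X.card / ε^4
      = 96 * 16^4 * Real.logb 2 X.card / ε^4 + 2 * Real.logb 2 X.card / ε^4 := by ring
    rw [h8]
    linarith
  · have hb := hf x hx p
    have hpos : 0 < 1 - ε/2 := by linarith
    have hT : ‖(√(1 - ε/2))⁻¹ • T (f p) - (√(1 - ε/2))⁻¹ • T (f x)‖^2
        = ‖f p - f x‖^2 / (1 - ε/2) := by
      rw [← smul_sub, ← map_sub, norm_smul, LinearIsometryEquiv.norm_map, mul_pow, norm_inv,
        Real.norm_of_nonneg (Real.sqrt_nonneg _), inv_pow, Real.sq_sqrt hpos.le]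
      ring
    have hη : (4 * (ε/16)^2 + 4 * (ε/16)) * ‖p - x‖^2 ≤ ε/2 * ‖p - x‖^2 := by
      gcongr; nlinarith
    have hb' := abs_le.1 (hb.trans hη)
    constructor
    · refine abs_le_of_sq_le_sq' ?_ (norm_nonneg _) |>.2
      rw [hT, le_div_iff₀ hpos]
      linarith [hb'.1]
    · refine abs_le_of_sq_le_sq' ?_ (by positivity) |>.2
      rw [hT, div_le_iff₀ hpos, mul_pow]
      have k : 1 + ε/2 ≤ (1+ε)^2 * (1 - ε/2) := by nlinarith [mul_pos h0 h0]
      have := mul_le_mul_of_nonneg_right k (sq_nonneg ‖p - x‖)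
      linarith [hb'.2]
end
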